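/- arXiv:1301.5953 — 7 statements merged into one kernel-verified Lean document; each statement's English description precedes it below -/
import Mathlib

section
/- Let G be a finite interval graph and let k ≥ 1 be an integer. Then the scattering number of G is at most k if and only if G has a path cover of size at most k. (For complete graphs, where scat(G) = −∞, the scattering-number condition is interpreted as always satisfied; a complete graph indeed has a path cover of size 1.) -/
/-!
**Path cover ⇒ scattering bound.** Deleting `S` from a path leaves at most one more piece than
the number of vertices of `S` on that path (`card_colors_walk`). Summing over the paths of a cover
of size `n` gives `c(G - S) ≤ n + |S|` (`numCompDel_le_of_cover`).

**Scattering bound ⇒ path cover.** Cover the vertices greedily: start at a vertex with smallest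
right endpoint, always extend the current path to an unvisited neighbour with smallest right
endpoint, and if there is none, start a new path at an unvisited vertex with smallest right
endpoint. Along the run (`Greedy`), no unvisited interval lies entirely to the left of the current
one. So, when `u` has no unvisited neighbour below some right endpoint `x`, all unvisited vertices
ending by `x` lie strictly to the right of `u`. This allows a certificate of optimality to be
carried along: with `A` the visited set and `p` the number of paths so far, for every `w` that is
current or unvisited there is a set `S ⊆ A`, containing every visited vertex that ends after `w`,
such that the vertices outside `S` that end no later than `w` induce at least `p + |S|` components
(`Greedy.cert`). When everything is visited, the certificate at the current vertex is a set `S`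
with `c(G - S) - |S| ≥ p`, so `p ≤ k` as soon as `scat(G) ≤ k`.

Numbers of components are bounded below by colourings that are constant along edges (`Split`).
-/

open SimpleGraph

/-- The number of connected components of the graph `G - S` obtained from `G` by
deleting the vertices of `S`. -/
noncomputable def numCompDel {V : Type} (G : SimpleGraph V) (S : Finset V) : ℕ :=
  Nat.card ((G.induce ((↑S : Set V)ᶜ)).ConnectedComponent)

/-- The scattering number of `G` is at most `k`; for a complete graph `scat(G) = -∞`,
so the condition holds vacuously (a complete graph has no vertex cut). -/
def ScatAtMost {V : Type} (G : SimpleGraph V) (k : ℤ) : Prop :=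
  ∀ S : Finset V, 2 ≤ numCompDel G S → (numCompDel G S : ℤ) - (S.card : ℤ) ≤ k

/-- `G` is an interval graph: vertices can be assigned nonempty closed real intervals such
that two distinct vertices are adjacent iff their intervals intersect. -/
def IsIntervalGraph {V : Type} (G : SimpleGraph V) : Prop :=
  ∃ l r : V → ℝ, (∀ v, l v ≤ r v) ∧
    ∀ u v : V, u ≠ v →
      (G.Adj u v ↔ (Set.Icc (l u) (r u) ∩ Set.Icc (l v) (r v)).Nonempty)

/-- `G` has a path cover of size at most `k`: at most `k` pairwise vertex-disjoint paths
whose vertex sets together cover all vertices of `G`. -/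
def HasPathCover {V : Type} (G : SimpleGraph V) (k : ℕ) : Prop :=
  ∃ n : ℕ, n ≤ k ∧ ∃ (e : Fin n → V × V) (P : ∀ i, G.Walk (e i).1 (e i).2),
    (∀ i, (P i).IsPath) ∧
    (∀ i j, i ≠ j → ∀ v, v ∈ (P i).support → v ∉ (P j).support) ∧
    (∀ v, ∃ i, v ∈ (P i).support)

/-! ### Path covers bound the number of components -/

/-- Along a path the colour can change only by passing through `S`, so a path sees at most one
more colour outside `S` than it has vertices in `S`, and no more if it starts in `S`. -/
lemma card_colors_walk {V α : Type} [DecidableEq V] [DecidableEq α] {G : SimpleGraph V}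
    (S : Finset V) (f : V → α) (hf : ∀ u v, u ∉ S → v ∉ S → G.Adj u v → f u = f v)
    {u v : V} (p : G.Walk u v) (hp : p.IsPath) :
    ((p.support.toFinset \ S).image f).card ≤
      (p.support.toFinset ∩ S).card + (if u ∈ S then 0 else 1) := by
  induction p with
  | nil =>
    rename_i u
    by_cases h : u ∈ S
    · have : ({u} : Finset V) \ S = ∅ := by ext x; simp; rintro rfl; exact h
      simp [this]
    · have : ({u} : Finset V) \ S = {u} := by ext x; simp; rintro rfl; exact h
      simp [this, h]
  | @cons u w v huw p ih =>
    rw [Walk.cons_isPath_iff] at hp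
    have ih := ih hp.1
    have hu : u ∉ p.support.toFinset := by simpa using hp.2
    have hw : w ∈ p.support.toFinset := by simp
    rw [Walk.support_cons, List.toFinset_cons]
    by_cases h : u ∈ S
    · rw [Finset.insert_sdiff_of_mem _ h, Finset.insert_inter_of_mem h,
        Finset.card_insert_of_notMem (by simp [hp.2])]
      simp only [h, if_true]
      split_ifs at ih <;> omega
    · rw [Finset.insert_sdiff_of_notMem _ h, Finset.insert_inter_of_notMem h, Finset.image_insert]
      simp only [h, if_false]
      by_cases h' : w ∈ S
      · simp only [h', if_true] at ih
        have := Finset.card_insert_le (f u) ((p.support.toFinset \ S).image f)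
        omega
      · simp only [h', if_false] at ih
        rw [Finset.insert_eq_of_mem]
        · exact ih
        · rw [hf u w h h' huw]
          exact Finset.mem_image_of_mem _ (Finset.mem_sdiff.2 ⟨hw, h'⟩)

lemma numCompDel_le_of_cover {V : Type} [Fintype V] [DecidableEq V] (G : SimpleGraph V)
    (S : Finset V) {n : ℕ} (e : Fin n → V × V) (P : ∀ i, G.Walk (e i).1 (e i).2)
    (hP : ∀ i, (P i).IsPath)
    (hd : ∀ i j, i ≠ j → ∀ v, v ∈ (P i).support → v ∉ (P j).support)
    (hc : ∀ v, ∃ i, v ∈ (P i).support) : numCompDel G S ≤ n + S.card := by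
  classical
  let H := G.induce ((↑S : Set V)ᶜ)
  -- the colour of a vertex outside `S` is its component, `none` being used on `S`
  let f : V → Option H.ConnectedComponent := fun v =>
    if h : v ∈ ((↑S : Set V)ᶜ) then some (H.connectedComponentMk ⟨v, h⟩) else none
  have hf : ∀ u v, u ∉ S → v ∉ S → G.Adj u v → f u = f v := by
    intro u v hu hv huv
    have hu' : u ∈ ((↑S : Set V)ᶜ) := by simpa using hu
    have hv' : v ∈ ((↑S : Set V)ᶜ) := by simpa using hv
    simp only [f, hu', hv', dif_pos, Option.some.injEq]
    have : H.Adj ⟨u, hu'⟩ ⟨v, hv'⟩ := huv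
    exact ConnectedComponent.sound this.reachable
  let T : Fin n → Finset (Option H.ConnectedComponent) := fun i =>
    ((P i).support.toFinset \ S).image f
  have hT : ∀ i, (T i).card ≤ ((P i).support.toFinset ∩ S).card + 1 := by
    intro i
    refine (card_colors_walk S f hf (P i) (hP i)).trans ?_
    split_ifs <;> omega
  have : Fintype H.ConnectedComponent := Fintype.ofFinite _
  have h1 : (Finset.univ.image (some : H.ConnectedComponent → _)) ⊆ Finset.univ.biUnion T := by
    intro c hcm
    obtain ⟨C, -, rfl⟩ := Finset.mem_image.1 hcm
    induction C using ConnectedComponent.ind with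
    | h v =>
      obtain ⟨v, hv⟩ := v
      obtain ⟨i, hi⟩ := hc v
      refine Finset.mem_biUnion.2 ⟨i, Finset.mem_univ _, Finset.mem_image.2 ⟨v, ?_, ?_⟩⟩
      · have : v ∉ S := by simpa using hv
        simp [hi, this]
      · simp only [f, hv, dif_pos]
  have h2 := Finset.card_le_card h1
  rw [Finset.card_image_of_injective _ (Option.some_injective _), Finset.card_univ] at h2
  have h3 : ∑ i, ((P i).support.toFinset ∩ S).card ≤ S.card := by
    rw [← Finset.card_biUnion]
    · refine Finset.card_le_card ?_
      intro x hx
      obtain ⟨i, -, hi⟩ := Finset.mem_biUnion.1 hx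
      exact (Finset.mem_inter.1 hi).2
    · intro i _ j _ hij
      refine Finset.disjoint_left.2 ?_
      intro v hv hv'
      simp only [Finset.mem_inter, List.mem_toFinset] at hv hv'
      exact hd i j hij v hv.1 hv'.1
  have h4 : ∑ i, (T i).card ≤ ∑ i, (((P i).support.toFinset ∩ S).card + 1) :=
    Finset.sum_le_sum fun i _ => hT i
  rw [Finset.sum_add_distrib] at h4
  simp only [Finset.sum_const, Finset.card_univ, Fintype.card_fin, smul_eq_mul, mul_one] at h4
  have h5 : (Finset.univ.biUnion T).card ≤ ∑ i, (T i).card := Finset.card_biUnion_le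
  have h6 : numCompDel G S = Fintype.card H.ConnectedComponent := Nat.card_eq_fintype_card
  omega

/-! ### Certificates for many components -/

/-- The subgraph of `G` induced on `D` has at least `N` components, witnessed by a colouring of `D`
that is constant along edges and uses all the colours below `N`. -/
def Split {V : Type} (G : SimpleGraph V) (D : V → Prop) (N : ℕ) : Prop :=
  ∃ f : V → ℕ, (∀ u v, D u → D v → G.Adj u v → f u = f v) ∧ ∀ c < N, ∃ v, D v ∧ f v = c

lemma Split.congr {V : Type} {G : SimpleGraph V} {D E : V → Prop} {N : ℕ} (h : Split G D N)
    (hDE : ∀ v, D v ↔ E v) : Split G E N := by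
  obtain rfl : D = E := funext fun v => propext (hDE v)
  exact h

/-- Adding a nonempty set without edges to the old one adds a component. -/
lemma Split.add {V : Type} {G : SimpleGraph V} {D B E : V → Prop} {N : ℕ}
    (h : Split G D N) (hB : ∃ v, B v) (hDB : ∀ u v, D u → B v → ¬ G.Adj u v)
    (hdisj : ∀ v, D v → ¬ B v) (hE : ∀ v, E v ↔ D v ∨ B v) : Split G E (N + 1) := by
  classical
  obtain ⟨f, hf, hs⟩ := h
  refine ⟨fun v => if B v then N else f v, ?_, ?_⟩
  · intro u v hu hv huv
    rcases (hE u).1 hu with hu | hu <;> rcases (hE v).1 hv with hv | hv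
    · simp [hdisj _ hu, hdisj _ hv, hf u v hu hv huv]
    · exact absurd huv (hDB _ _ hu hv)
    · exact absurd huv.symm (hDB _ _ hv hu)
    · simp [hu, hv]
  · intro c hc
    rcases Nat.lt_succ_iff_lt_or_eq.1 hc with hc | rfl
    · obtain ⟨v, hv, rfl⟩ := hs c hc
      exact ⟨v, (hE v).2 (Or.inl hv), by simp [hdisj _ hv]⟩
    · obtain ⟨v, hv⟩ := hB
      exact ⟨v, (hE v).2 (Or.inr hv), by simp [hv]⟩

lemma Split.le_numCompDel {V : Type} [Fintype V] {G : SimpleGraph V} {S : Finset V} {N : ℕ}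
    (h : Split G (fun v => v ∉ S) N) : N ≤ numCompDel G S := by
  obtain ⟨f, hf, hs⟩ := h
  let H := G.induce ((↑S : Set V)ᶜ)
  have hr : ∀ a b : ((↑S : Set V)ᶜ : Set V), H.Reachable a b → f a = f b := by
    rintro a b ⟨p⟩
    induction p with
    | nil => rfl
    | @cons a c b hac p ih =>
      refine (hf _ _ ?_ ?_ hac).trans ih
      · exact fun h => a.2 (Finset.mem_coe.2 h)
      · exact fun h => c.2 (Finset.mem_coe.2 h)
  choose g hg hgf using fun c : Fin N => hs c c.2
  let F : Fin N → H.ConnectedComponent := fun c =>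
    H.connectedComponentMk ⟨g c, by simpa using hg c⟩
  have hF : Function.Injective F := by
    intro c d hcd
    have := hr _ _ (ConnectedComponent.exact hcd)
    simp only [hgf] at this
    exact Fin.ext this
  have hle := Nat.card_le_card_of_injective F hF
  rwa [Nat.card_fin] at hle

/-! ### The greedy run -/

/-- A state of the greedy procedure for the intervals `[l v, r v]`: `A` is the set of visited
vertices, partitioned into the paths `u :: q` (the current one, listed from its latest vertex `u`
backwards) and the members of `L` (the finished ones). The number of paths is `L.length + 1`. -/
structure Greedy {V : Type} [DecidableEq V] (G : SimpleGraph V) (l r : V → ℝ)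
    (A : Finset V) (u : V) (q : List V) (L : List (List V)) : Prop where
  /-- The lists are nonempty. -/
  ne_nil : ∀ s ∈ (u :: q) :: L, s ≠ []
  /-- Each list is a walk of `G`. -/
  chain : ∀ s ∈ (u :: q) :: L, s.IsChain G.Adj
  /-- No vertex is repeated, within a list or between lists. -/
  nodup : ((u :: q) :: L).flatten.Nodup
  /-- The lists cover exactly the visited vertices. -/
  mem : ∀ v, v ∈ A ↔ v ∈ ((u :: q) :: L).flatten
  /-- No unvisited interval lies entirely to the left of the current one. -/
  left : ∀ w, w ∉ A → l u ≤ r w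
  /-- The certificate of optimality, at each current or unvisited vertex. -/
  cert : ∀ w, (w = u ∨ w ∉ A) → ∃ S ⊆ A, (∀ v ∈ A, r w < r v → v ∈ S) ∧
    Split G (fun v => r v ≤ r w ∧ v ∉ S) (L.length + 1 + S.card)

section
variable {V : Type} [DecidableEq V] {G : SimpleGraph V} {l r : V → ℝ}

lemma Greedy.start (hlr : ∀ v, l v ≤ r v) {u : V} (hu : ∀ w, r u ≤ r w) :
    Greedy G l r {u} u [] [] where
  ne_nil := by simp
  chain := by simp
  nodup := by simp
  mem := by simp
  left w _ := (hlr u).trans (hu w)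
  cert w _ := by
    refine ⟨∅, by simp, ?_, fun _ => 0, by simp, ?_⟩
    · intro v hv hwv
      rw [Finset.mem_singleton.1 hv] at hwv
      exact absurd (hu w) (not_le.2 hwv)
    · intro c hc
      exact ⟨w, by simp, by simp at hc; exact hc.symm⟩

/-- The step common to both moves: if all unvisited vertices ending by `r w` lie to the right of
`u`, then they add a component to the certificate at `u`. The component count does not change when an
unvisited vertex ending after `w` is put into `S`. -/
lemma Greedy.extend_cert (hadj : ∀ u v, u ≠ v → (G.Adj u v ↔ l u ≤ r v ∧ l v ≤ r u))
    (hlr : ∀ v, l v ≤ r v) {A : Finset V} {u : V} {q : List V}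
    {L : List (List V)} (h : Greedy G l r A u q L) {w : V} (hw : w ∉ A)
    (hright : ∀ v, v ∉ A → r v ≤ r w → r u < l v) :
    ∃ S ⊆ A, (∀ v ∈ A, r u < r v → v ∈ S) ∧ r u < r w ∧
      Split G (fun v => r v ≤ r w ∧ v ∉ S) (L.length + 1 + S.card + 1) ∧
      ∀ u', u' ∉ A → r w < r u' →
      Split G (fun v => r v ≤ r w ∧ v ∉ insert u' S) (L.length + 1 + S.card + 1) := by
  obtain ⟨S, hSA, hS, hsp⟩ := h.cert u (Or.inl rfl)
  have huw : r u < r w := (hright w hw le_rfl).trans_le (hlr w)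
  have hmain : Split G (fun v => r v ≤ r w ∧ v ∉ S) (L.length + 1 + S.card + 1) := by
    refine hsp.add (B := fun v => v ∉ A ∧ r v ≤ r w) ⟨w, hw, le_rfl⟩ ?_ ?_ ?_
    · rintro a b ⟨ha, -⟩ ⟨hb, hb'⟩ hab
      have h1 := (hadj a b hab.ne).1 hab
      have h2 := hright b hb hb'
      linarith [h1.2]
    · rintro v ⟨hv, -⟩ ⟨hv', hv''⟩
      have h2 := hright v hv' hv''
      linarith [hlr v]
    · intro v
      constructor
      · rintro ⟨h1, h2⟩
        by_cases hv : v ∈ A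
        · refine Or.inl ⟨?_, h2⟩
          by_contra hlt
          exact h2 (hS v hv (not_le.1 hlt))
        · exact Or.inr ⟨hv, h1⟩
      · rintro (⟨h1, h2⟩ | ⟨h1, h2⟩)
        · exact ⟨h1.trans huw.le, h2⟩
        · exact ⟨h2, fun hv => h1 (hSA hv)⟩
  refine ⟨S, hSA, hS, huw, hmain, ?_⟩
  intro u' hu' hwu'
  refine hmain.congr ?_
  intro v
  simp only [Finset.mem_insert, not_or]
  constructor
  · rintro ⟨h1, h2⟩
    refine ⟨h1, ?_, h2⟩
    rintro rfl
    linarith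
  · rintro ⟨h1, -, h2⟩
    exact ⟨h1, h2⟩

/-- Extending the current path to an unvisited neighbour with smallest right endpoint. -/
lemma Greedy.extend (hadj : ∀ u v, u ≠ v → (G.Adj u v ↔ l u ≤ r v ∧ l v ≤ r u))
    (hlr : ∀ v, l v ≤ r v) {A : Finset V} {u : V} {q : List V}
    {L : List (List V)} (h : Greedy G l r A u q L) {u' : V} (hu' : u' ∉ A) (huu' : G.Adj u u')
    (hmin : ∀ w, w ∉ A → G.Adj u w → r u' ≤ r w) :
    Greedy G l r (insert u' A) u' (u :: q) L := by
  have huA : u ∈ A := (h.mem u).2 (by simp)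
  have hne : ∀ w, w ∉ A → u ≠ w := by rintro w hw rfl; exact hw huA
  -- an unvisited vertex ending before the new one is not adjacent to `u`, so it is to its right
  have hright : ∀ w, w ∉ A → r w < r u' → r u < l w := by
    intro w hw hwu'
    by_contra hcon
    exact absurd (hmin w hw ((hadj u w (hne w hw)).2 ⟨h.left w hw, not_lt.1 hcon⟩))
      (not_le.2 hwu')
  refine ⟨?_, ?_, ?_, ?_, ?_, ?_⟩
  · have := h.ne_nil
    simp only [List.mem_cons, forall_eq_or_imp] at this ⊢
    exact ⟨by simp, this.2⟩
  · have := h.chain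
    simp only [List.mem_cons, forall_eq_or_imp] at this ⊢
    exact ⟨List.isChain_cons_cons.2 ⟨huu'.symm, this.1⟩, this.2⟩
  · have h1 := h.nodup
    have h2 : u' ∉ ((u :: q) :: L).flatten := fun h3 => hu' ((h.mem u').2 h3)
    have : ((u' :: u :: q) :: L).flatten = u' :: ((u :: q) :: L).flatten := by simp
    rw [this]
    exact List.nodup_cons.2 ⟨h2, h1⟩
  · intro v
    have : ((u' :: u :: q) :: L).flatten = u' :: ((u :: q) :: L).flatten := by simp
    rw [this, Finset.mem_insert, List.mem_cons, h.mem v]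
  · intro w hw
    simp only [Finset.mem_insert, not_or] at hw
    by_contra hcon
    have h1 := hright w hw.2 ((not_le.1 hcon).trans_le (hlr u'))
    have h2 := (hadj u u' huu'.ne).1 huu'
    linarith [hlr w, h2.2]
  · intro w hw
    have hwA : w ∉ A := by
      rcases hw with rfl | hw
      · exact hu'
      · exact fun h' => hw (Finset.mem_insert_of_mem h')
    by_cases hle : r u' ≤ r w
    · obtain ⟨S, hSA, hS, hsp⟩ := h.cert w (Or.inr hwA)
      refine ⟨S, hSA.trans (Finset.subset_insert _ _), ?_, hsp⟩
      intro v hv hwv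
      rcases Finset.mem_insert.1 hv with rfl | hv
      · exact absurd hle (not_le.2 hwv)
      · exact hS v hv hwv
    · have hlt := not_le.1 hle
      obtain ⟨S, hSA, hS, huw, -, hsp⟩ := h.extend_cert hadj hlr hwA
        (fun v hv hvw => hright v hv (hvw.trans_lt hlt))
      refine ⟨insert u' S, Finset.insert_subset_insert _ hSA, ?_, ?_⟩
      · intro v hv hwv
        rcases Finset.mem_insert.1 hv with rfl | hv
        · exact Finset.mem_insert_self _ _
        · exact Finset.mem_insert_of_mem (hS v hv (huw.trans hwv))
      · rw [Finset.card_insert_of_notMem (fun h' => hu' (hSA h'))]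
        have hsplit := hsp u' hu' hlt
        exact hsplit

/-- Starting a new path when the current one is stuck. -/
lemma Greedy.restart (hadj : ∀ u v, u ≠ v → (G.Adj u v ↔ l u ≤ r v ∧ l v ≤ r u))
    (hlr : ∀ v, l v ≤ r v) {A : Finset V} {u : V} {q : List V}
    {L : List (List V)} (h : Greedy G l r A u q L) {u' : V} (hu' : u' ∉ A)
    (hstuck : ∀ w, w ∉ A → ¬ G.Adj u w) (hmin : ∀ w, w ∉ A → r u' ≤ r w) :
    Greedy G l r (insert u' A) u' [] ((u :: q) :: L) := by
  have huA : u ∈ A := (h.mem u).2 (by simp)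
  have hne : ∀ w, w ∉ A → u ≠ w := by rintro w hw rfl; exact hw huA
  have hright : ∀ w, w ∉ A → r u < l w := by
    intro w hw
    by_contra hcon
    exact hstuck w hw ((hadj u w (hne w hw)).2 ⟨h.left w hw, not_lt.1 hcon⟩)
  refine ⟨?_, ?_, ?_, ?_, ?_, ?_⟩
  · intro s hs
    rcases List.mem_cons.1 hs with rfl | hs
    · simp
    · exact h.ne_nil s hs
  · intro s hs
    rcases List.mem_cons.1 hs with rfl | hs
    · simp
    · exact h.chain s hs
  · rw [List.flatten_cons, List.singleton_append]
    exact List.nodup_cons.2 ⟨fun h3 => hu' ((h.mem u').2 h3), h.nodup⟩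
  · intro v
    rw [List.flatten_cons, List.singleton_append, Finset.mem_insert, List.mem_cons, h.mem v]
  · intro w hw
    exact (hlr u').trans (hmin w fun h' => hw (Finset.mem_insert_of_mem h'))
  · intro w hw
    have hwA : w ∉ A := by
      rcases hw with rfl | hw
      · exact hu'
      · exact fun h' => hw (Finset.mem_insert_of_mem h')
    obtain ⟨S, hSA, hS, huw, hsp, -⟩ := h.extend_cert hadj hlr hwA (fun v hv _ => hright v hv)
    refine ⟨S, hSA.trans (Finset.subset_insert _ _), ?_, ?_⟩
    · intro v hv hwv
      rcases Finset.mem_insert.1 hv with rfl | hv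
      · exact absurd (hmin w hwA) (not_le.2 hwv)
      · exact hS v hv (huw.trans hwv)
    · rw [show ((u :: q) :: L).length + 1 + S.card = L.length + 1 + S.card + 1 by
        rw [List.length_cons]; omega]
      exact hsp

lemma Greedy.step [Fintype V]
    (hadj : ∀ u v, u ≠ v → (G.Adj u v ↔ l u ≤ r v ∧ l v ≤ r u))
    (hlr : ∀ v, l v ≤ r v) {A : Finset V} {u : V} {q : List V}
    {L : List (List V)} (h : Greedy G l r A u q L) (hA : A ≠ Finset.univ) :
    ∃ u' q' L', u' ∉ A ∧ Greedy G l r (insert u' A) u' q' L' := by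
  classical
  by_cases hex : ∃ w, w ∉ A ∧ G.Adj u w
  · obtain ⟨u', hu', hmin⟩ := Finset.exists_min_image
      (Finset.univ.filter fun w => w ∉ A ∧ G.Adj u w) r
      (by obtain ⟨w, hw⟩ := hex; exact ⟨w, by simpa using hw⟩)
    simp only [Finset.mem_filter, Finset.mem_univ, true_and] at hu' hmin
    exact ⟨u', _, _, hu'.1, h.extend hadj hlr hu'.1 hu'.2 fun w h1 h2 => hmin w ⟨h1, h2⟩⟩
  · push Not at hex
    have hne : (Aᶜ).Nonempty := by
      rw [Finset.nonempty_iff_ne_empty]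
      simpa using hA
    obtain ⟨u', hu', hmin⟩ := Finset.exists_min_image Aᶜ r hne
    simp only [Finset.mem_compl] at hu' hmin
    exact ⟨u', _, _, hu', h.restart hadj hlr hu' hex hmin⟩

lemma Greedy.exists_univ [Fintype V]
    (hadj : ∀ u v, u ≠ v → (G.Adj u v ↔ l u ≤ r v ∧ l v ≤ r u))
    (hlr : ∀ v, l v ≤ r v) (n : ℕ) : ∀ {A : Finset V} {u : V} {q : List V}
    {L : List (List V)}, Greedy G l r A u q L → Aᶜ.card = n →
    ∃ u q L, Greedy G l r Finset.univ u q L := by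
  induction n with
  | zero =>
    intro A u q L h hn
    have : A = Finset.univ := by simpa using hn
    exact ⟨u, q, L, this ▸ h⟩
  | succ n ih =>
    intro A u q L h hn
    obtain ⟨u', q', L', hu', h'⟩ := h.step hadj hlr (by rintro rfl; simp at hn)
    refine ih h' ?_
    rw [Finset.compl_insert, Finset.card_erase_of_mem (by simpa using hu'), hn]
    rfl

end

/-! ### From lists to path covers -/

lemma hasPathCover_of_lists {V : Type} {G : SimpleGraph V} {k : ℕ} (M : List (List V))
    (hne : ∀ s ∈ M, s ≠ []) (hc : ∀ s ∈ M, s.IsChain G.Adj) (hn : M.flatten.Nodup)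
    (hm : ∀ v, v ∈ M.flatten) (hk : M.length ≤ k) : HasPathCover G k := by
  rw [List.nodup_flatten] at hn
  have hw : ∀ i : Fin M.length, ∃ (e : V × V) (p : G.Walk e.1 e.2), p.support = M.get i :=
    fun i => ⟨(_, _), Walk.ofSupport (M.get i) (hne _ (M.get_mem i)) (hc _ (M.get_mem i)),
      Walk.support_ofSupport _ _⟩
  choose e P hP using hw
  refine ⟨M.length, hk, e, P, ?_, ?_, ?_⟩
  · intro i
    rw [Walk.isPath_def, hP]
    exact hn.1 _ (M.get_mem i)
  · have hlt := List.pairwise_iff_get.1 hn.2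
    intro i j hij v hi hj
    rw [hP] at hi hj
    rcases lt_or_gt_of_ne hij with h | h
    · exact hlt i j h hi hj
    · exact hlt j i h hj hi
  · intro v
    obtain ⟨s, hs, hv⟩ := List.mem_flatten.1 (hm v)
    obtain ⟨i, rfl⟩ := List.get_of_mem hs
    exact ⟨i, by rw [hP]; exact hv⟩

/-- For a finite interval graph `G` and an integer `k ≥ 1`, the scattering number of `G` is
at most `k` iff `G` has a path cover of size at most `k`. -/
theorem scatAtMost_iff_hasPathCover {V : Type} [Fintype V] [DecidableEq V]
    (G : SimpleGraph V) (hG : IsIntervalGraph G) (k : ℕ) (hk : 1 ≤ k) :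
    ScatAtMost G (k : ℤ) ↔ HasPathCover G k := by
  constructor
  · intro hscat
    obtain ⟨l, r, hlr, hadj'⟩ := hG
    have hadj : ∀ u v, u ≠ v → (G.Adj u v ↔ l u ≤ r v ∧ l v ≤ r u) := by
      intro u v huv
      rw [hadj' u v huv, Set.Icc_inter_Icc, Set.nonempty_Icc]
      simp only [sup_le_iff, le_inf_iff]
      have := hlr u
      have := hlr v
      tauto
    rcases isEmpty_or_nonempty V with hV | hV
    · exact hasPathCover_of_lists [] (by simp) (by simp) (by simp) (fun v => hV.elim v) (by simp)
    · obtain ⟨u₀, -, hmin⟩ := Finset.exists_min_image Finset.univ r Finset.univ_nonempty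
      obtain ⟨u, q, L, h⟩ := Greedy.exists_univ hadj hlr _
        (Greedy.start (G := G) hlr fun w => hmin w (Finset.mem_univ _)) rfl
      refine hasPathCover_of_lists _ h.ne_nil h.chain h.nodup
        (fun v => (h.mem v).1 (Finset.mem_univ _)) ?_
      rw [List.length_cons]
      by_contra hcon
      obtain ⟨S, -, hS, hsp⟩ := h.cert u (Or.inl rfl)
      -- every vertex is visited, so the certificate at `u` concerns all of `G - S`
      have hle := (hsp.congr (E := fun v => v ∉ S) fun v =>
        ⟨fun h' => h'.2, fun h' => ⟨not_lt.1 fun h'' => h' (hS v (Finset.mem_univ _) h''), h'⟩⟩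
        ).le_numCompDel
      have := hscat S (by omega)
      omega
  · rintro ⟨n, hn, e, P, hP, hd, hc⟩ S -
    have := numCompDel_le_of_cover G S e P hP hd hc
    omega
end

section
/- Let G be a finite interval graph. Then the scattering number of G is at most 0 if and only if G has a Hamilton cycle. (For complete graphs, where scat(G) = −∞, the scattering-number condition is interpreted as always satisfied; assume G has at least 3 vertices.) -/
/-!
A Hamilton cycle leaves each component of `G - S` through an edge into `S`, and distinct components
give distinct vertices of `S`; this gives `c(G - S) ≤ |S|`.

For the converse, number the vertices `0, …, n - 1` by right endpoint. For `i < j`, vertices `i` and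
`j` are adjacent iff `left j ≤ i` for a suitable function `left`; say that `j` crosses `i` in this
case. For an independent set `T`, deleting all vertices crossing `T` separates the elements of `T`
from each other and from any vertex lying to the right of `T`. So scattering number at most `0`
implies that, if such a further vertex exists, more than `|T|` vertices cross `T` (`SpanTough`).

A Hamilton cycle is built greedily (`SweepState.advance`). Start with the path `u, 0, v`, where
`u < v` are the two smallest neighbours of `0`, and sweep `x = 1, 2, …`, keeping a path with ends
`a < b`, both at least `x`, which covers everything below `x`. A vertex `x` interior to the path is
skipped. A free `x` is attached to the smaller end `a`, to which it is adjacent. If `x` is now an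
end, it is extended by its smallest free neighbour `w`, and `x` is recorded as `π w`. Once nothing
is free, the two ends are adjacent and the path closes to a Hamilton cycle.

Suppose that `x = p` has no free neighbour to its right although free vertices remain. Starting
with `T = {p}`, look at the vertices crossing `T`, all of which are on the path, and repeatedly add
to `T` the largest `π s ∉ T` over such crossing vertices `s`, as long as at least two of them have
`π s ∉ T`. The greedy choices keep `T` independent, and in the end all but one of the crossing
vertices inject via `π` into `T \ {p}`. So at most `|T|` vertices cross `T`, contradicting toughness
(`exists_barrier`).
-/

open SimpleGraph

/-! ### Barriers extracted from a failed greedy step -/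

/-- The vertices `j < n` whose interval crosses the right end of some `t ∈ T`. -/
def spanning (n : ℕ) (left : ℕ → ℕ) (T : Finset ℕ) : Finset ℕ :=
  (Finset.range n).filter fun j => ∃ t ∈ T, t < j ∧ left j ≤ t

lemma mem_spanning {n : ℕ} {left : ℕ → ℕ} {T : Finset ℕ} {j : ℕ} :
    j ∈ spanning n left T ↔ j < n ∧ ∃ t ∈ T, t < j ∧ left j ≤ t := by
  simp [spanning]

/-- A set `T` of vertices collected by tracing a greedy step that failed at `p` backwards.
Here `U` is the set of vertices already chosen as extensions and `π s` is the vertex from which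
`s ∈ U` was chosen. The set `T` consists of `p` and of vertices from which an extension was chosen;
it is independent; every vertex crossing `T` is in `U`; and each such vertex was either chosen from
an element of `T`, or is pending, i.e. was chosen from a vertex to the left of all of `T`. -/
structure Barrier (n : ℕ) (left : ℕ → ℕ) (U : Finset ℕ) (π : ℕ → ℕ) (p : ℕ) (T : Finset ℕ) :
    Prop where
  mem : p ∈ T
  le : ∀ t ∈ T, t ≤ p
  able : ∀ t ∈ T, t = p ∨ ∃ s ∈ U, π s = t
  indep : ∀ t ∈ T, ∀ t' ∈ T, t' < t → t' < left t
  used : spanning n left T ⊆ U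
  pending : ∀ s ∈ spanning n left T, π s ∈ T ∨ ∀ t ∈ T, π s < t

/-- If the greedy process fails at `p` (`hfail`: every vertex crossing `p` is already in `U`), there
is an independent set `T ∋ p` crossed by at most `|T|` vertices.

The hypothesis `hgreedy` says that `s` was the smallest free vertex available at `π s`, and `hinj`
that `π` is injective apart from the two vertices chosen from the start vertex `0`, one of which is
`r`. The hypothesis `hmax` reflects the rule that the smaller of the two path ends is extended: an
end `t` surviving the step at `π s` is the largest of the vertices chosen before.

A barrier `T` of maximal size has at most one pending vertex: with two pending vertices, the
largest `π s` over pending `s` could be added to `T`. Hence `π` maps all but one of the vertices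
crossing `T` injectively into `T \ {p}`. -/
lemma exists_barrier (n : ℕ) (left : ℕ → ℕ) (U : Finset ℕ) (π : ℕ → ℕ) (r p : ℕ)
    (hp : 0 < p)
    (hπ : ∀ s ∈ U, left s ≤ π s ∧ π s < s ∧ π s < p ∧ s < n)
    (hgreedy : ∀ s ∈ U, ∀ j, left j ≤ π s → π s < j → j < s → j ∈ U ∧ π j ≤ π s)
    (hr : π r = 0)
    (hinj : ∀ s ∈ U, ∀ s' ∈ U, s ≠ r → s' ≠ r → π s = π s' → s = s')
    (hmax : ∀ t ∈ U, (t = p ∨ ∃ s ∈ U, π s = t) → ∀ s ∈ U, π t < π s → π s < t →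
      ∀ s₁ ∈ U, π s₁ < π s → s₁ ≤ t)
    (hfail : ∀ j < n, p < j → left j ≤ p → j ∈ U) :
    ∃ T : Finset ℕ, p ∈ T ∧ (∀ t ∈ T, t ≤ p) ∧ (∀ t ∈ T, ∀ t' ∈ T, t' < t → t' < left t) ∧
      (spanning n left T).card ≤ T.card := by
  classical
  let F := (Finset.range (p + 1)).powerset.filter (Barrier n left U π p)
  have hF : ({p} : Finset ℕ) ∈ F := by
    simp only [F, Finset.mem_filter, Finset.mem_powerset]
    refine ⟨by simp, by simp, by simp, by simp, by simp, ?_, ?_⟩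
    · intro j hj
      obtain ⟨hjn, t, ht, h1, h2⟩ := mem_spanning.1 hj
      rw [Finset.mem_singleton] at ht
      subst ht
      exact hfail j hjn h1 h2
    · intro j hj
      obtain ⟨hjn, t, ht, h1, h2⟩ := mem_spanning.1 hj
      rw [Finset.mem_singleton] at ht
      subst ht
      have := hπ j (hfail j hjn h1 h2)
      simp; omega
  obtain ⟨T, hT, hTmax⟩ := Finset.exists_max_image F Finset.card ⟨_, hF⟩
  have hTB : Barrier n left U π p T := (Finset.mem_filter.1 hT).2
  refine ⟨T, hTB.mem, hTB.le, hTB.indep, ?_⟩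
  -- The pending vertices.
  set P := (spanning n left T).filter (fun s => π s ∉ T) with hP
  have hPlt : ∀ s ∈ P, ∀ t ∈ T, π s < t := by
    intro s hs
    rw [hP, Finset.mem_filter] at hs
    exact (hTB.pending s hs.1).resolve_left hs.2
  have hPcard : P.card ≤ 1 := by
    by_contra hcon
    obtain ⟨s, hsP, hs⟩ := Finset.exists_max_image P π (Finset.card_pos.1 (by omega))
    obtain ⟨s₁, hs₁P, hs₁⟩ := Finset.exists_mem_ne (by omega : 1 < P.card) s
    have hsS := (Finset.mem_filter.1 hsP).1
    have hs₁S := (Finset.mem_filter.1 hs₁P).1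
    have hsU := hTB.used hsS
    have hs₁U := hTB.used hs₁S
    have hlt := hPlt s hsP
    have hle := hs s₁ hs₁P
    obtain ⟨m, hm, hmin⟩ := Finset.exists_min_image T id ⟨p, hTB.mem⟩
    simp only [id] at hmin
    have hms : m < s := by
      obtain ⟨_, t, ht, h1, _⟩ := mem_spanning.1 hsS
      exact (hmin t ht).trans_lt h1
    have hms₁ : m < s₁ := by
      obtain ⟨_, t, ht, h1, _⟩ := mem_spanning.1 hs₁S
      exact (hmin t ht).trans_lt h1
    have hum := hlt m hm
    -- If `t ∈ T` crossed `π s`, then `t = min T` and `t` was an end surviving the step at `π s`,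
    -- so `hmax` would give `s₁ ≤ t`. Equal values of `π` occur only at `0`, and at most twice.
    have hsep : ∀ t ∈ T, π s < left t := by
      intro t ht
      by_contra hc
      have htm : t = m := by
        by_contra hne
        have := hTB.indep t ht m hm (by have := hmin t ht; omega)
        omega
      subst htm
      obtain ⟨htU, hle'⟩ := hgreedy s hsU t (by omega) hum hms
      have h3 := hinj t htU s hsU
      have h4 := hinj s₁ hs₁U s hsU
      have h5 := hinj s₁ hs₁U t htU
      have h6 := hmax t htU (hTB.able t ht) s hsU
      have h7 := fun h h' => h6 h h' s₁ hs₁U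
      by_cases e1 : t = r <;> by_cases e2 : s = r <;> by_cases e3 : s₁ = r <;> subst_vars <;>
        grind
    have hnew : Barrier n left U π p (insert (π s) T) := by
      have hcase : ∀ j ∈ spanning n left (insert (π s) T), j ∈ spanning n left T ∨
          (j ∈ U ∧ π j ≤ π s) := by
        intro j hj
        obtain ⟨hjn, t, ht, h1, h2⟩ := mem_spanning.1 hj
        rcases Finset.mem_insert.1 ht with rfl | ht
        · by_cases hjm : m < j
          · exact .inl (mem_spanning.2 ⟨hjn, m, hm, hjm, by omega⟩)
          · have : j ≠ m := by
              rintro rfl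
              have := hsep j hm
              omega
            exact .inr (hgreedy s hsU j h2 h1 (by omega))
        · exact .inl (mem_spanning.2 ⟨hjn, t, ht, h1, h2⟩)
      refine ⟨by simp [hTB.mem], ?_, ?_, ?_, ?_, ?_⟩
      · intro t ht
        rcases Finset.mem_insert.1 ht with rfl | ht
        · exact (hlt p hTB.mem).le
        · exact hTB.le t ht
      · intro t ht
        rcases Finset.mem_insert.1 ht with rfl | ht
        · exact .inr ⟨s, hsU, rfl⟩
        · exact hTB.able t ht
      · intro t ht t' ht' htt
        rcases Finset.mem_insert.1 ht with rfl | ht <;>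
          rcases Finset.mem_insert.1 ht' with rfl | ht'
        · omega
        · have := hlt t' ht'; omega
        · exact hsep t ht
        · exact hTB.indep t ht t' ht' htt
      · intro j hj
        rcases hcase j hj with h | h
        · exact hTB.used h
        · exact h.1
      · intro j hj
        have hle : π j ∈ T ∨ π j ≤ π s := by
          rcases hcase j hj with h | h
          · by_cases hjT : π j ∈ T
            · exact .inl hjT
            · exact .inr (hs j (Finset.mem_filter.2 ⟨h, hjT⟩))
          · exact .inr h.2
        rcases hle with h | h
        · exact .inl (Finset.mem_insert_of_mem h)
        · rcases h.eq_or_lt with h | h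
          · exact .inl (by simp [h])
          · refine .inr fun t ht => ?_
            rcases Finset.mem_insert.1 ht with rfl | ht
            · exact h
            · exact h.trans (hlt t ht)
    have hmem : insert (π s) T ∈ F := by
      refine Finset.mem_filter.2 ⟨Finset.mem_powerset.2 fun t ht => ?_, hnew⟩
      exact Finset.mem_range.2 (Nat.lt_succ_of_le (hnew.le t ht))
    have := hTmax _ hmem
    rw [Finset.card_insert_of_notMem (Finset.mem_filter.1 hsP).2] at this
    omega
  -- If there is a pending vertex, take it as `z`: then `0 ∉ T`, so `π` has no collision over `T`.
  -- Otherwise `z = r` removes the only collision.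
  obtain ⟨z, hzT, hz⟩ : ∃ z, (∀ s ∈ spanning n left T, s ≠ z → π s ∈ T) ∧
      ∀ s ∈ spanning n left T, ∀ s' ∈ spanning n left T, s ≠ z → s' ≠ z → π s = π s' → s = s' := by
    rcases P.eq_empty_or_nonempty with hPe | ⟨z, hzP⟩
    · refine ⟨r, fun s hs _ => ?_, fun s hs s' hs' => hinj s (hTB.used hs) s' (hTB.used hs')⟩
      by_contra hc
      have : s ∈ P := Finset.mem_filter.2 ⟨hs, hc⟩
      simp [hPe] at this
    · have hzT : ∀ s ∈ spanning n left T, s ≠ z → π s ∈ T := by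
        intro s hs hsz
        by_contra hc
        exact hsz (Finset.card_le_one.1 hPcard s (Finset.mem_filter.2 ⟨hs, hc⟩) z hzP)
      refine ⟨z, hzT, fun s hs s' hs' h1 h2 he => ?_⟩
      have hne : π s ≠ 0 := by
        have := hPlt z hzP _ (hzT s hs h1)
        omega
      exact hinj s (hTB.used hs) s' (hTB.used hs') (by rintro rfl; exact hne hr)
        (by rintro rfl; exact hne (he.trans hr)) he
  have hcard : ((spanning n left T).erase z).card ≤ (T.erase p).card := by
    refine Finset.card_le_card_of_injOn π ?_ ?_
    · intro s hs
      have hs := Finset.mem_erase.1 (Finset.mem_coe.1 hs)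
      have := hπ s (hTB.used hs.2)
      exact Finset.mem_coe.2 (Finset.mem_erase.2 ⟨by omega, hzT s hs.2 hs.1⟩)
    · intro s hs s' hs' he
      have hs := Finset.mem_erase.1 (Finset.mem_coe.1 hs)
      have hs' := Finset.mem_erase.1 (Finset.mem_coe.1 hs')
      exact hz s hs.2 s' hs'.2 hs.1 hs'.1 he
  have h1 := Finset.card_erase_add_one hTB.mem
  have h2 := Finset.pred_card_le_card_erase (s := spanning n left T) (a := z)
  omega

/-! ### The greedy sweep with two path ends -/

/-- Adjacency of the interval graph on `ℕ` in which vertices are numbered by right endpoint and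
`left j` is the smallest number of a right endpoint not to the left of interval `j`: for `i < j`,
the vertices `i` and `j` are adjacent iff `left j ≤ i`. -/
def lrAdj (left : ℕ → ℕ) (i j : ℕ) : Prop :=
  (i < j ∧ left j ≤ i) ∨ (j < i ∧ left i ≤ j)

lemma lrAdj_comm {left : ℕ → ℕ} {i j : ℕ} : lrAdj left i j ↔ lrAdj left j i := by
  unfold lrAdj; tauto

lemma isChain_lrAdj_reverse {left : ℕ → ℕ} {L : List ℕ} (h : L.IsChain (lrAdj left)) :
    L.reverse.IsChain (lrAdj left) := by
  rw [List.isChain_reverse]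
  exact h.imp fun _ _ => lrAdj_comm.1

/-- The state of the greedy sweep when vertex `x` is about to be treated. The list `a :: (M ++ [b])`
is a path with ends `a < b`, both `≥ x`, through all vertices `< x` and the vertices of `U`. The set
`U` collects the vertices chosen as extensions, and `π s` is the vertex from which `s` was chosen,
always as the smallest free neighbour (`greedy`). Only `0` has two vertices chosen from it, and
`r` is one of them (`inj`). The larger end `b` is the largest element of `U` (`largest`). The
field `max` records this for past steps: a vertex `t` that is still an end or from which an
extension was chosen, and which was an end during the step at `π s`, is at least as large as all
vertices chosen before that step. -/
structure SweepState (n : ℕ) (left : ℕ → ℕ) (r x a b : ℕ) (M : List ℕ) (U : Finset ℕ)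
    (π : ℕ → ℕ) : Prop where
  x_pos : 0 < x
  x_le : x ≤ a
  a_lt : a < b
  a_mem : a ∈ U
  b_mem : b ∈ U
  chain : (a :: (M ++ [b])).IsChain (lrAdj left)
  nodup : (a :: (M ++ [b])).Nodup
  mem_path : ∀ j, j ∈ a :: (M ++ [b]) ↔ j < x ∨ j ∈ U
  pred : ∀ s ∈ U, left s ≤ π s ∧ π s < s ∧ π s < x ∧ s < n
  greedy : ∀ s ∈ U, ∀ j, left j ≤ π s → π s < j → j < s → j ∈ U ∧ π j ≤ π s
  r_mem : r ∈ U
  pred_r : π r = 0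
  inj : ∀ s ∈ U, ∀ s' ∈ U, s ≠ r → s' ≠ r → π s = π s' → s = s'
  largest : ∀ s ∈ U, s ≤ b
  max : ∀ t ∈ U, (t = a ∨ t = b ∨ ∃ s ∈ U, π s = t) → ∀ s ∈ U, π t < π s → π s < t →
      ∀ s₁ ∈ U, π s₁ < π s → s₁ ≤ t

/-- A Hamilton cycle of `lrAdj left` on `{0, …, n - 1}`, given as the support `b :: (M ++ [b])` of a
closed walk (for `n ≥ 3`). -/
def HasCyclicList (n : ℕ) (left : ℕ → ℕ) : Prop :=
  ∃ (b : ℕ) (M : List ℕ), (M ++ [b]).Nodup ∧ (∀ j, j ∈ M ++ [b] ↔ j < n) ∧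
    (b :: (M ++ [b])).IsChain (lrAdj left)

/-- The toughness condition in terms of `spanning`: a nonempty independent set `T` having a vertex
`y` to its right, not adjacent to it and not crossing it, is crossed by more than `|T|`
vertices. -/
def SpanTough (n : ℕ) (left : ℕ → ℕ) : Prop :=
  ∀ T : Finset ℕ, T.Nonempty → (∀ t ∈ T, ∀ t' ∈ T, t' < t → t' < left t) →
    ∀ y < n, (∀ t ∈ T, t < y ∧ t < left y) → T.card < (spanning n left T).card

/-- One step of the sweep. A vertex `x` already inside the path is skipped. Otherwise `x` is the
smaller end `a` or is free; a free `x` is first attached to `a`. Then the new end `x` is extended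
by its smallest free neighbour. If it has none, either all vertices are on the path, which then
closes up, or `exists_barrier` contradicts toughness. -/
lemma SweepState.advance {n : ℕ} {left : ℕ → ℕ} {r x a b : ℕ} {M : List ℕ} {U : Finset ℕ}
    {π : ℕ → ℕ} (htough : SpanTough n left) (st : SweepState n left r x a b M U π) :
    HasCyclicList n left ∨ ∃ a' b' M' U' π', SweepState n left r (x + 1) a' b' M' U' π' := by
  classical
  have hxa := st.x_le
  have hab := st.a_lt
  by_cases hskip : x ∈ U ∧ x ≠ a
  · refine .inr ⟨a, b, M, U, π, { st with
      x_pos := by omega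
      x_le := by omega
      mem_path := ?_
      pred := ?_ }⟩
    · intro j
      rw [st.mem_path]
      constructor
      · rintro (h | h)
        · exact .inl (by omega)
        · exact .inr h
      · rintro (h | h)
        · by_cases hj : j = x
          · exact .inr (hj ▸ hskip.1)
          · exact .inl (by omega)
        · exact .inr h
    · intro s hs
      have := st.pred s hs
      omega
  -- After the possible attachment of `x` to `a`, the path runs from `x` to `b`.
  obtain ⟨K, hKchain, hKnodup, hKmem⟩ : ∃ K : List ℕ, (x :: (K ++ [b])).IsChain (lrAdj left) ∧
      (x :: (K ++ [b])).Nodup ∧ ∀ j, j ∈ x :: (K ++ [b]) ↔ j < x + 1 ∨ j ∈ U := by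
    by_cases hx : x = a
    · subst hx
      refine ⟨M, st.chain, st.nodup, fun j => ?_⟩
      rw [st.mem_path]
      have := st.a_mem
      grind
    · have hxU : x ∉ U := fun h => hskip ⟨h, hx⟩
      have hxL : x ∉ a :: (M ++ [b]) := by
        rw [st.mem_path]
        simp [hxU]
      refine ⟨a :: M, ?_, ?_, fun j => ?_⟩
      · refine List.isChain_cons_cons.2 ⟨.inl ⟨by omega, ?_⟩, st.chain⟩
        have := st.pred a st.a_mem
        omega
      · exact List.nodup_cons.2 ⟨hxL, st.nodup⟩
      · change j ∈ x :: (a :: (M ++ [b])) ↔ _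
        rw [List.mem_cons, st.mem_path]
        grind
  by_cases hW : ∃ w, w < n ∧ x < w ∧ left w ≤ x ∧ w ∉ U
  · right
    have hw := Nat.find_spec hW
    have hwmin := fun j => Nat.find_min hW (m := j)
    set w := Nat.find hW
    obtain ⟨hwn, hxw, hlw, hwU⟩ := hw
    have hwL : w ∉ x :: (K ++ [b]) := by
      rw [hKmem]
      simp only [hwU, or_false]
      omega
    have hchain : (w :: x :: (K ++ [b])).IsChain (lrAdj left) :=
      List.isChain_cons_cons.2 ⟨.inr ⟨hxw, hlw⟩, hKchain⟩
    have hnodup : (w :: x :: (K ++ [b])).Nodup := List.nodup_cons.2 ⟨hwL, hKnodup⟩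
    have hmem : ∀ j, j ∈ w :: x :: (K ++ [b]) ↔ j < x + 1 ∨ j ∈ insert w U := by
      intro j
      rw [List.mem_cons, hKmem, Finset.mem_insert]
      tauto
    have hwb : w ≠ b := fun h => hwU (h ▸ st.b_mem)
    let π' := Function.update π w x
    have hπw : π' w = x := by simp [π']
    have hπ' : ∀ s ∈ U, π' s = π s := by
      intro s hs
      have : s ≠ w := fun h => hwU (h ▸ hs)
      simp [π', this]
    have hpred : ∀ s ∈ insert w U, left s ≤ π' s ∧ π' s < s ∧ π' s < x + 1 ∧ s < n := by
      intro s hs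
      rcases Finset.mem_insert.1 hs with rfl | hs
      · rw [hπw]; omega
      · rw [hπ' s hs]
        have := st.pred s hs
        omega
    have hgreedy : ∀ s ∈ insert w U, ∀ j, left j ≤ π' s → π' s < j → j < s →
        j ∈ insert w U ∧ π' j ≤ π' s := by
      intro s hs j h1 h2 h3
      rcases Finset.mem_insert.1 hs with hsw | hs
      · rw [hsw, hπw] at h1 h2 ⊢
        rw [hsw] at h3
        have hjU : j ∈ U := by
          by_contra hc
          exact hwmin j h3 ⟨by omega, h2, h1, hc⟩
        have := st.pred j hjU
        rw [hπ' j hjU]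
        exact ⟨Finset.mem_insert_of_mem hjU, by omega⟩
      · rw [hπ' s hs] at *
        obtain ⟨hjU, hj⟩ := st.greedy s hs j h1 h2 h3
        rw [hπ' j hjU]
        exact ⟨Finset.mem_insert_of_mem hjU, hj⟩
    have hpr : π' r = 0 := by rw [hπ' r st.r_mem, st.pred_r]
    have hinj : ∀ s ∈ insert w U, ∀ s' ∈ insert w U, s ≠ r → s' ≠ r → π' s = π' s' → s = s' := by
      intro s hs s' hs' h1 h2 h3
      rcases Finset.mem_insert.1 hs with hsw | hs <;> rcases Finset.mem_insert.1 hs' with hsw' | hs'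
      · rw [hsw, hsw']
      · rw [hsw, hπw, hπ' s' hs'] at h3
        have := st.pred s' hs'
        omega
      · rw [hsw', hπw, hπ' s hs] at h3
        have := st.pred s hs
        omega
      · rw [hπ' s hs, hπ' s' hs'] at h3
        exact st.inj s hs s' hs' h1 h2 h3
    have hmax : ∀ t ∈ insert w U, (t = w ∨ t = b ∨ ∃ s ∈ insert w U, π' s = t) →
        ∀ s ∈ insert w U, π' t < π' s → π' s < t → ∀ s₁ ∈ insert w U, π' s₁ < π' s → s₁ ≤ t := by
      intro t ht htT s hs h1 h2 s₁ hs₁ h3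
      have hs₁U : s₁ ∈ U := by
        rcases Finset.mem_insert.1 hs₁ with h | h
        · have := hpred s hs
          rw [h, hπw] at h3
          omega
        · exact h
      have htU : t ∈ U := by
        rcases Finset.mem_insert.1 ht with h | h
        · have := hpred s hs
          rw [h, hπw] at h1
          omega
        · exact h
      rcases Finset.mem_insert.1 hs with hsw | hsU
      · rw [hsw, hπw] at h2
        rcases htT with h | h | ⟨s', hs', h⟩
        · exact absurd (h ▸ htU) hwU
        · rw [h]
          exact st.largest s₁ hs₁U
        · have := hpred s' hs'
          omega
      · rw [hπ' s hsU] at *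
        rw [hπ' t htU] at h1
        rw [hπ' s₁ hs₁U] at h3
        refine st.max t htU ?_ s hsU h1 h2 s₁ hs₁U h3
        rcases htT with h | h | ⟨s', hs', h⟩
        · exact absurd (h ▸ htU) hwU
        · exact .inr (.inl h)
        · rcases Finset.mem_insert.1 hs' with hsw' | hs'
          · have hxt : t = x := by rw [← h, hsw', hπw]
            have : x = a := by
              by_contra hc
              exact hskip ⟨hxt ▸ htU, hc⟩
            exact .inl (hxt.trans this)
          · exact .inr (.inr ⟨s', hs', by rw [← h, hπ' s' hs']⟩)
    rcases lt_or_gt_of_ne hwb with hlt | hgt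
    · refine ⟨w, b, x :: K, insert w U, π', ⟨by omega, by omega, hlt, by simp, by simp [st.b_mem],
        hchain, hnodup, hmem, hpred, hgreedy, by simp [st.r_mem], hpr, hinj, ?_, hmax⟩⟩
      intro s hs
      rcases Finset.mem_insert.1 hs with h | h
      · omega
      · exact st.largest s h
    · have hrev : b :: ((x :: K).reverse ++ [w]) = (w :: x :: (K ++ [b])).reverse := by simp
      refine ⟨b, w, (x :: K).reverse, insert w U, π', ⟨by omega, by omega, hgt, by simp [st.b_mem],
        by simp, ?_, ?_, ?_, hpred, hgreedy, by simp [st.r_mem], hpr, hinj, ?_, ?_⟩⟩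
      · rw [hrev]
        exact isChain_lrAdj_reverse hchain
      · rw [hrev]
        exact List.nodup_reverse.2 hnodup
      · intro j
        rw [hrev, List.mem_reverse, hmem]
      · intro s hs
        rcases Finset.mem_insert.1 hs with h | h
        · omega
        · have := st.largest s h
          omega
      · intro t ht htT
        exact hmax t ht (by tauto)
  · left
    push Not at hW
    by_cases hall : ∀ j < n, j ∈ x :: (K ++ [b])
    · have hb := st.pred b st.b_mem
      refine ⟨b, x :: K, hKnodup, fun j => ⟨fun hj => ?_, hall j⟩, ?_⟩
      · rcases (hKmem j).1 hj with h | h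
        · omega
        · exact (st.pred j h).2.2.2
      · exact List.isChain_cons_cons.2 ⟨.inr ⟨by omega, by omega⟩, hKchain⟩
    · push Not at hall
      obtain ⟨y, hyn, hy⟩ := hall
      rw [hKmem] at hy
      push Not at hy
      have hmax : ∀ t ∈ U, (t = x ∨ ∃ s ∈ U, π s = t) → ∀ s ∈ U, π t < π s → π s < t →
          ∀ s₁ ∈ U, π s₁ < π s → s₁ ≤ t := by
        intro t ht htT
        refine st.max t ht ?_
        rcases htT with h | h
        · left
          by_contra hc
          exact hskip ⟨h ▸ ht, by omega⟩
        · exact .inr (.inr h)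
      obtain ⟨T, hxT, hTle, hind, hcard⟩ := exists_barrier n left U π r x st.x_pos st.pred st.greedy
        st.pred_r st.inj hmax hW
      have hy' : ∀ t ∈ T, t < y ∧ t < left y := by
        intro t ht
        have h1 := hTle t ht
        refine ⟨by omega, ?_⟩
        by_contra hc
        exact hy.2 (hW y hyn (by omega) (by omega))
      have := htough T ⟨x, hxT⟩ hind y hyn hy'
      omega

lemma SweepState.hasCyclicList {n : ℕ} {left : ℕ → ℕ} (htough : SpanTough n left) :
    ∀ (k : ℕ) {r x a b : ℕ} {M : List ℕ} {U : Finset ℕ} {π : ℕ → ℕ}, n ≤ x + k →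
      SweepState n left r x a b M U π → HasCyclicList n left := by
  intro k
  induction k with
  | zero =>
    intro r x a b M U π hk st
    have := st.pred a st.a_mem
    have := st.x_le
    omega
  | succ k ih =>
    intro r x a b M U π hk st
    rcases st.advance htough with h | ⟨a', b', M', U', π', st'⟩
    · exact h
    · exact ih (by omega) st'

/-- The sweep starts with the path `u, 0, v`, where `u < v` are the two smallest neighbours of
`0`; they exist by toughness at `T = {0}`. -/
lemma hasCyclicList_of_spanTough {n : ℕ} {left : ℕ → ℕ} (hn : 3 ≤ n)
    (htough : SpanTough n left) : HasCyclicList n left := by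
  classical
  have hspan : ∀ j, j ∈ spanning n left {0} ↔ j < n ∧ 0 < j ∧ left j ≤ 0 := by
    intro j
    simp [mem_spanning]
  have hsep : (∃ y, 0 < y ∧ y < n ∧ y ∉ spanning n left {0}) →
      1 < (spanning n left {0}).card := by
    rintro ⟨y, hy0, hyn, hy⟩
    rw [hspan] at hy
    have := htough {0} (by simp) (by simp) y hyn (by simp; omega)
    simpa using this
  have hcard : 1 < (spanning n left {0}).card := by
    by_cases h1 : 1 ∈ spanning n left {0}
    · by_cases h2 : 2 ∈ spanning n left {0}
      · exact Finset.one_lt_card.2 ⟨1, h1, 2, h2, by omega⟩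
      · exact hsep ⟨2, by omega, by omega, h2⟩
    · exact hsep ⟨1, by omega, by omega, h1⟩
  obtain ⟨u, hu, humin⟩ := Finset.exists_min_image (spanning n left {0}) id
    (Finset.card_pos.1 (by omega))
  have hcard' : 0 < ((spanning n left {0}).erase u).card := by
    rw [Finset.card_erase_of_mem hu]; omega
  obtain ⟨v, hv, hvmin⟩ := Finset.exists_min_image ((spanning n left {0}).erase u) id
    (Finset.card_pos.1 hcard')
  simp only [id] at humin hvmin
  obtain ⟨hvu, hvS⟩ := Finset.mem_erase.1 hv
  have huv : u < v := lt_of_le_of_ne (humin v hvS) hvu.symm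
  obtain ⟨hun, hu0, hul⟩ := (hspan u).1 hu
  obtain ⟨hvn, hv0, hvl⟩ := (hspan v).1 hvS
  refine SweepState.hasCyclicList htough n (r := v) (x := 1) (a := u) (b := v) (M := [0])
    (U := {u, v}) (π := fun _ => 0) (by omega) ⟨by omega, by omega, huv, by simp, by simp,
    ?_, ?_, ?_, ?_, ?_, by simp, rfl, ?_, ?_, ?_⟩
  · simp [lrAdj, hu0, hul, hv0, hvl]
  · simp; omega
  · intro j
    simp; omega
  · intro s hs
    simp at hs
    rcases hs with rfl | rfl <;> omega
  · intro s hs j h1 h2 h3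
    have hjn : j < n := by
      simp at hs
      rcases hs with rfl | rfl <;> omega
    have hj := (hspan j).2 ⟨hjn, h2, h1⟩
    refine ⟨?_, le_rfl⟩
    by_contra hc
    simp at hc hs
    have := humin j hj
    have := hvmin j (Finset.mem_erase.2 ⟨hc.1, hj⟩)
    omega
  · intro s hs s' hs' h1 h2 _
    simp at hs hs'
    omega
  · intro s hs
    simp at hs
    omega
  · intro t _ _ s _ h
    simp at h

/-! ### A Hamilton cycle forces scattering number at most zero -/

/-- Consecutive vertices of a closed walk are adjacent, with positions read cyclically. -/
lemma adj_getVert_mod {V : Type} {G : SimpleGraph V} {v : V} (c : G.Walk v v) (hc : 0 < c.length)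
    (i : ℕ) : G.Adj (c.getVert (i % c.length)) (c.getVert ((i + 1) % c.length)) := by
  have hlt := Nat.mod_lt i hc
  have hadj := c.adj_getVert_succ hlt
  by_cases h : i % c.length + 1 = c.length
  · have : (i + 1) % c.length = 0 := by
      rw [← Nat.mod_add_mod, h, Nat.mod_self]
    rw [this]
    rw [h] at hadj
    simpa using hadj
  · have : (i + 1) % c.length = i % c.length + 1 := by
      rw [← Nat.mod_add_mod, Nat.mod_eq_of_lt (by omega)]
    rwa [this]

/-- Each component of `G - S` is left by the cycle through an edge into `S`; the entered vertices
of `S` are distinct for distinct components, so there are at most `|S|` components. -/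
lemma scatAtMost_of_hamiltonianCycle {V : Type} [Fintype V] [DecidableEq V]
    {G : SimpleGraph V} {v : V} (c : G.Walk v v) (hc : c.IsHamiltonianCycle) :
    ScatAtMost G 0 := by
  classical
  intro S hS
  have hlen : 0 < c.length := by have := hc.isCycle.three_le_length; omega
  set m := c.length with hm
  let f : ℕ → V := fun i => c.getVert (i % m)
  have hadj : ∀ i, G.Adj (f i) (f (i + 1)) := adj_getVert_mod c hlen
  have hsurj : ∀ (w : V) (i : ℕ), ∃ j, i ≤ j ∧ f j = w := by
    intro w i
    obtain ⟨k, hk, hkl⟩ := SimpleGraph.Walk.mem_support_iff_exists_getVert.1 (hc.mem_support w)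
    refine ⟨k + m * i, ?_, ?_⟩
    · exact le_add_left (Nat.le_mul_of_pos_left i hlen)
    · simp only [f, Nat.add_mul_mod_self_left]
      rcases hkl.eq_or_lt with h | h
      · rw [← hm] at h
        rw [h, Nat.mod_self, ← hk, h]
        simp [hm]
      · rw [Nat.mod_eq_of_lt h, hk]
  have hinj : ∀ i j, f i = f j → i % m = j % m := by
    intro i j h
    have hi := Nat.mod_lt i hlen
    have hj := Nat.mod_lt j hlen
    exact hc.isCycle.getVert_injOn' (by simp only [Set.mem_ofPred_eq]; omega)
      (by simp only [Set.mem_ofPred_eq]; omega) h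
  set H := G.induce ((↑S : Set V)ᶜ)
  -- Otherwise the cycle, once inside `C`, stays there forever, so `C` is the only component.
  have hexit : ∀ C : H.ConnectedComponent, ∃ i, f (i + 1) ∈ S ∧
      ∃ h : f i ∈ ((↑S : Set V)ᶜ), H.connectedComponentMk ⟨f i, h⟩ = C := by
    intro C
    by_contra hcon
    push Not at hcon
    obtain ⟨⟨w, hw⟩, hwC⟩ := C.exists_rep
    obtain ⟨i, -, hi⟩ := hsurj w 0
    have hall : ∀ k, ∃ h : f (i + k) ∈ ((↑S : Set V)ᶜ),
        H.connectedComponentMk ⟨f (i + k), h⟩ = C := by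
      intro k
      induction k with
      | zero =>
        have h : f (i + 0) ∈ ((↑S : Set V)ᶜ) := by rw [add_zero, hi]; exact hw
        refine ⟨h, ?_⟩
        rw [← hwC]
        congr 1
        exact Subtype.ext hi
      | succ k ih =>
        obtain ⟨h, hC⟩ := ih
        have h' : f (i + (k + 1)) ∈ ((↑S : Set V)ᶜ) := fun hmem => hcon (i + k) hmem h hC
        refine ⟨h', ?_⟩
        rw [← hC]
        refine (SimpleGraph.ConnectedComponent.connectedComponentMk_eq_of_adj ?_).symm
        exact hadj (i + k)
    have hsub : ∀ D : H.ConnectedComponent, D = C := by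
      intro D
      obtain ⟨⟨z, hz⟩, hzD⟩ := D.exists_rep
      obtain ⟨j, hij, hj⟩ := hsurj z i
      obtain ⟨k, rfl⟩ := Nat.exists_eq_add_of_le hij
      obtain ⟨h, hC⟩ := hall k
      rw [← hC, ← hzD]
      congr 1
      exact Subtype.ext hj.symm
    have : Subsingleton H.ConnectedComponent := ⟨fun D D' => (hsub D).trans (hsub D').symm⟩
    have h1 : Nat.card H.ConnectedComponent ≤ 1 := Finite.card_le_one_iff_subsingleton.2 this
    have h2 : 2 ≤ Nat.card H.ConnectedComponent := hS
    omega
  choose g hgS hg using hexit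
  have hle : Nat.card H.ConnectedComponent ≤ Nat.card S := by
    refine Nat.card_le_card_of_injective (fun C => (⟨f (g C + 1), hgS C⟩ : S)) ?_
    intro C D hCD
    have hmod : (g C + 1) % m = (g D + 1) % m := hinj _ _ (congrArg Subtype.val hCD)
    have hmod' : g C % m = g D % m := Nat.ModEq.add_right_cancel' 1 hmod
    obtain ⟨h1, h1'⟩ := hg C
    obtain ⟨h2, h2'⟩ := hg D
    rw [← h1', ← h2']
    congr 1
    exact Subtype.ext (by simp only [f, hmod'])
  rw [Nat.card_eq_fintype_card (α := S), Fintype.card_coe] at hle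
  have : numCompDel G S ≤ S.card := hle
  omega

/-! ### Interval graphs as graphs `lrAdj left` -/

/-- Numbering the vertices by right endpoint, with `left k` the number of intervals lying entirely
to the left of interval `k`, turns an interval graph into the graph `lrAdj left`. -/
lemma IsIntervalGraph.exists_order {V : Type} [Fintype V] {G : SimpleGraph V}
    (hG : IsIntervalGraph G) : ∃ (e : Fin (Fintype.card V) ≃ V) (left : ℕ → ℕ),
      ∀ i j, G.Adj (e i) (e j) ↔ lrAdj left i j := by
  classical
  obtain ⟨l, r, hlr, hadj⟩ := hG
  let e₀ := (Fintype.equivFin V).symm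
  let e := (Tuple.sort (r ∘ e₀)).trans e₀
  have hmono : Monotone (r ∘ e) := Tuple.monotone_sort (r ∘ e₀)
  let left : ℕ → ℕ := fun k =>
    if h : k < Fintype.card V then
      (Finset.univ.filter fun i : Fin (Fintype.card V) => r (e i) < l (e ⟨k, h⟩)).card
    else 0
  have hleft : ∀ i j : Fin (Fintype.card V), left j ≤ i ↔ l (e j) ≤ r (e i) := by
    intro i j
    have hl : left j = (Finset.univ.filter fun i' => r (e i') < l (e j)).card := by
      simp [left]
    rw [hl]
    constructor
    · intro h
      by_contra hc
      push Not at hc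
      have hsub : Finset.Iic i ⊆ Finset.univ.filter fun i' => r (e i') < l (e j) := by
        intro k hk
        simp only [Finset.mem_filter, Finset.mem_univ, true_and]
        exact (hmono (Finset.mem_Iic.1 hk)).trans_lt hc
      have := Finset.card_le_card hsub
      rw [Fin.card_Iic] at this
      omega
    · intro h
      have hsub : (Finset.univ.filter fun i' => r (e i') < l (e j)) ⊆ Finset.Iio i := by
        intro k hk
        simp only [Finset.mem_filter, Finset.mem_univ, true_and] at hk
        rw [Finset.mem_Iio]
        by_contra hc
        exact absurd (hmono (not_lt.1 hc)) (not_le.2 (hk.trans_le h))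
      have := Finset.card_le_card hsub
      rwa [Fin.card_Iio] at this
  have hlt : ∀ i j : Fin (Fintype.card V), i < j → (G.Adj (e i) (e j) ↔ left j ≤ i) := by
    intro i j hij
    rw [hadj _ _ (fun h => hij.ne (e.injective h)), hleft, Set.Icc_inter_Icc, Set.nonempty_Icc]
    have h1 := hmono hij.le
    have h2 := hlr (e i)
    have h3 := hlr (e j)
    simp only [Function.comp] at h1
    simp only [sup_le_iff, le_inf_iff]
    constructor
    · exact fun h => h.1.2
    · exact fun h => ⟨⟨h2, h⟩, h2.trans h1, h3⟩
  refine ⟨e, left, fun i j => ?_⟩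
  unfold lrAdj
  rcases lt_trichotomy i j with h | h | h
  · rw [hlt i j h]
    have : (i : ℕ) < j := h
    constructor
    · exact fun h => .inl ⟨this, h⟩
    · rintro (h | h)
      · exact h.2
      · omega
  · subst h
    simp
  · rw [G.adj_comm, hlt j i h]
    have : (j : ℕ) < i := h
    constructor
    · exact fun h => .inr ⟨this, h⟩
    · rintro (h | h)
      · omega
      · exact h.2

/-- Deleting `spanning n left T` puts the vertices of `T` and the vertex `y` into pairwise
different components, since no remaining edge joins a vertex `≤ t` to one `> t` for `t ∈ T`. -/
lemma spanTough_of_scatAtMost {V : Type} [Fintype V] {G : SimpleGraph V}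
    {n : ℕ} {e : Fin n ≃ V} {left : ℕ → ℕ}
    (he : ∀ i j, G.Adj (e i) (e j) ↔ lrAdj left i j) (hscat : ScatAtMost G 0) :
    SpanTough n left := by
  classical
  intro T hT hind y hyn hy
  let S : Finset V := (Finset.univ.filter fun i : Fin n => (i : ℕ) ∈ spanning n left T).map
    e.toEmbedding
  have hmemS : ∀ i : Fin n, e i ∈ S ↔ (i : ℕ) ∈ spanning n left T := by
    intro i
    simp [S]
  have hScard : S.card ≤ (spanning n left T).card := by
    rw [Finset.card_map]
    refine Finset.card_le_card_of_injOn (fun i => (i : ℕ)) ?_ (Fin.val_injective.injOn)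
    intro i hi
    simpa using hi
  set H := G.induce ((↑S : Set V)ᶜ)
  have hlow : ∀ t ∈ T, ∀ u w : ((↑S : Set V)ᶜ : Set V), H.Reachable u w →
      (e.symm u : ℕ) ≤ t → (e.symm w : ℕ) ≤ t := by
    intro t ht u w ⟨p⟩
    induction p with
    | nil => exact id
    | @cons u v w h p ih =>
      intro hu
      refine ih ?_
      have hG : G.Adj u v := h
      have huv : G.Adj (e (e.symm u)) (e (e.symm v)) := by simpa using hG
      rw [he] at huv
      by_contra hc
      have hvS : e (e.symm v) ∈ S := by
        rw [hmemS, mem_spanning]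
        refine ⟨Fin.is_lt _, t, ht, by omega, ?_⟩
        rcases huv with h | h <;> omega
      rw [Equiv.apply_symm_apply] at hvS
      exact v.2 hvS
  have hT' : ∀ t ∈ insert y T, t < n ∧ t ∉ spanning n left T := by
    intro t ht
    rw [mem_spanning]
    rcases Finset.mem_insert.1 ht with rfl | ht
    · refine ⟨hyn, ?_⟩
      rintro ⟨_, t', ht', _, h⟩
      have := hy t' ht'
      omega
    · refine ⟨(hy t ht).1.trans hyn, ?_⟩
      rintro ⟨_, t', ht', h, h'⟩
      have := hind t ht t' ht' h
      omega
  let q : ↥(insert y T) → H.ConnectedComponent := fun t =>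
    H.connectedComponentMk ⟨e ⟨t, (hT' t t.2).1⟩, by
      have := (hT' t t.2).2
      intro h
      exact this ((hmemS _).1 h)⟩
  have hqlt : ∀ t t' : ↥(insert y T), (t : ℕ) < t' → q t ≠ q t' := by
    intro t t' hlt heq
    have htT : (t : ℕ) ∈ T := by
      rcases Finset.mem_insert.1 t.2 with h | h
      · rcases Finset.mem_insert.1 t'.2 with h' | h'
        · omega
        · have := hy _ h'
          omega
      · exact h
    have hle := hlow t htT _ _ (SimpleGraph.ConnectedComponent.exact heq) (by simp)
    simp only [Equiv.symm_apply_apply] at hle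
    exact absurd hlt (not_lt.2 hle)
  have hq : Function.Injective q := by
    intro t t' h
    rcases lt_trichotomy (t : ℕ) t' with hlt | heq | hlt
    · exact absurd h (hqlt t t' hlt)
    · exact Subtype.ext heq
    · exact absurd h.symm (hqlt t' t hlt)
  have hcard : (insert y T).card ≤ numCompDel G S := by
    have := Nat.card_le_card_of_injective q hq
    rwa [Nat.card_eq_fintype_card, Fintype.card_coe] at this
  have hyT : y ∉ T := fun h => (hy y h).1.ne rfl
  rw [Finset.card_insert_of_notMem hyT] at hcard
  have hTpos := hT.card_pos
  have := hscat S (by omega)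
  omega

lemma hamiltonian_of_hasCyclicList {V : Type} [Fintype V] [DecidableEq V] {G : SimpleGraph V}
    (hcard : 3 ≤ Fintype.card V) {e : Fin (Fintype.card V) ≃ V} {left : ℕ → ℕ}
    (he : ∀ i j, G.Adj (e i) (e j) ↔ lrAdj left i j)
    (hL : HasCyclicList (Fintype.card V) left) :
    ∃ (v : V) (c : G.Walk v v), c.IsHamiltonianCycle := by
  obtain ⟨b, M, hnodup, hmem, hchain⟩ := hL
  have : NeZero (Fintype.card V) := ⟨by omega⟩
  let g : ℕ → V := fun i => e (Fin.ofNat _ i)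
  have hval : ∀ i < Fintype.card V, ((Fin.ofNat (Fintype.card V) i : Fin _) : ℕ) = i :=
    fun i hi => Nat.mod_eq_of_lt hi
  have hginj : ∀ i < Fintype.card V, ∀ j < Fintype.card V, g i = g j → i = j := by
    intro i hi j hj h
    have := congrArg Fin.val (e.injective h)
    rwa [hval i hi, hval j hj] at this
  have hlt : ∀ j ∈ b :: (M ++ [b]), j < Fintype.card V := by
    intro j hj
    rw [← hmem]
    simp at hj ⊢
    tauto
  have hchainV : ((b :: (M ++ [b])).map g).IsChain G.Adj := by
    rw [List.isChain_map]
    refine hchain.imp_of_mem_imp fun i j hi hj h => ?_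
    rw [he, hval i (hlt i hi), hval j (hlt j hj)]
    exact h
  have hnodupV : ((M ++ [b]).map g).Nodup :=
    List.Nodup.map_on (fun i hi j hj h => hginj i ((hmem i).1 hi) j ((hmem j).1 hj) h) hnodup
  have hmemV : ∀ w, w ∈ (M ++ [b]).map g := by
    intro w
    refine List.mem_map.2 ⟨e.symm w, (hmem _).2 (Fin.is_lt _), ?_⟩
    simp [g]
  have hlen : ((M ++ [b]).map g).length = Fintype.card V := by
    rw [← List.toFinset_card_of_nodup hnodupV, Finset.card_eq_iff_eq_univ]
    ext w
    simpa only [List.mem_toFinset, Finset.mem_univ, iff_true] using hmemV w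
  have hne : (b :: (M ++ [b])).map g ≠ [] := by simp
  let c₀ := SimpleGraph.Walk.ofSupport _ hne hchainV
  let c : G.Walk (g b) (g b) := c₀.copy (by simp) (by simp)
  have hsupp : c.support = g b :: (M ++ [b]).map g := by
    simp only [c, c₀, SimpleGraph.Walk.support_copy, SimpleGraph.Walk.support_ofSupport]
    rfl
  have hclen : c.length = Fintype.card V := by
    have := c.length_support
    rw [hsupp, List.length_cons, hlen] at this
    omega
  have hnil : ¬ c.Nil := by
    rw [SimpleGraph.Walk.not_nil_iff_lt_length]; omega
  refine ⟨g b, c, SimpleGraph.Walk.isHamiltonianCycle_iff_isCycle_and_length_eq.2 ⟨?_, hclen⟩⟩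
  rw [SimpleGraph.Walk.isCycle_iff_isPath_tail_and_le_length]
  refine ⟨?_, by omega⟩
  rw [SimpleGraph.Walk.isPath_def, SimpleGraph.Walk.support_tail_of_not_nil _ hnil, hsupp]
  exact hnodupV

/-- For a finite interval graph `G` with at least 3 vertices, the scattering number of `G`
is at most `0` iff `G` has a Hamilton cycle. -/
theorem scatAtMost_zero_iff_hamiltonian {V : Type} [Fintype V] [DecidableEq V]
    (G : SimpleGraph V) (hG : IsIntervalGraph G) (hcard : 3 ≤ Fintype.card V) :
    ScatAtMost G 0 ↔ ∃ (v : V) (c : G.Walk v v), c.IsHamiltonianCycle := by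
  constructor
  · intro hscat
    obtain ⟨e, left, he⟩ := hG.exists_order
    exact hamiltonian_of_hasCyclicList hcard he
      (hasCyclicList_of_spanTough hcard (spanTough_of_scatAtMost he hscat))
  · rintro ⟨v, c, hc⟩
    exact scatAtMost_of_hamiltonianCycle c hc
end

section
/- Let G be a finite interval graph and let k ≥ 0 be an integer. Then G is k-Hamilton-connected if and only if the scattering number of G is at most −(k+1). (For complete graphs, where scat(G) = −∞, the scattering-number condition is interpreted as always satisfied; assume G has at least k+3 vertices.) -/
/-!
If `G` is `k`-Hamilton-connected and `S` is a cut, a Hamilton path of `G - T` with `T ⊆ S`,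
`|T| ≤ k`, leaves a component of `G - S` only by stepping into `S \ T`; choosing its ends in
`S` whenever possible bounds the number of components of `G - S`
(`HP.ncard_components_le`, `scatAtMost_of_kHamiltonConnected`).

Conversely, sort the vertices by right endpoints. Then the components of `G[W]` are counted by the
vertices of `W` without a later neighbour in `W` (`cnt`). Let `m` be the first vertex of a vertex
set `U`. Its closed neighbourhood, the front, is a clique in which later vertices dominate earlier
ones. Hamilton paths are built by a sweep which deletes vertices of the front one at a time while
preserving the scattering condition on the remaining graph, with one extra unit demanded of the
cuts containing all path ends in the front (`Cond`). There are two moves: if `m` is a path end, the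
path steps from `m` to the earliest front vertex that is not an end (`Cond.replace_first`); if it
is not, the path steps from the earliest front end to `m` (`Cond.replace_by_first`).

* `exists_HP_of_front`: if `x` or `t` is in the front, the sweep yields a Hamilton path of `G[U]`
  from `x` to `t`.
* `linked_of_front`: with one more unit of slack, the sweep with four ends yields two disjoint
  paths covering `U` and linking `{a, b}` to `{c, d}`. When the front is exhausted by the ends, one
  path is closed by an edge and the other is supplied by `exists_HP_of_front`.
* `exists_HP`: for ends `s`, `t` outside the front, the two earliest neighbours of `m` are linked
  to `s` and `t` in `G[U] - m`, and `m` joins the two paths.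

The set `U` is the complement of the at most `k` deleted vertices, and the condition on `U` follows
from `scat(G) ≤ -(k+1)`.
-/

open SimpleGraph

/-- A graph is Hamilton-connected if any two distinct vertices are joined by a
Hamilton path. -/
def HamiltonConnected {W : Type} [DecidableEq W] (H : SimpleGraph W) : Prop :=
  ∀ s t : W, s ≠ t → ∃ p : H.Walk s t, p.IsHamiltonian

/-- `G` is `k`-Hamilton-connected: `G - S` is Hamilton-connected for every vertex set `S`
with `|S| ≤ k`. -/
def KHamiltonConnected {V : Type} [DecidableEq V] (G : SimpleGraph V) (k : ℕ) : Prop :=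
  ∀ S : Finset V, S.card ≤ k → HamiltonConnected (G.induce ((↑S : Set V)ᶜ))

namespace IntervalHam

variable {V α : Type} [DecidableEq V] [LinearOrder α]

/-! ### Hamilton paths of induced subgraphs -/

/-- `HP G U x t`: the subgraph of `G` induced by `U` has a Hamilton path from `x` to `t`. -/
inductive HP (G : SimpleGraph V) : Finset V → V → V → Prop
  | single (v : V) : HP G {v} v v
  | cons {U : Finset V} {u x t : V} (hu : u ∉ U) (ha : G.Adj u x) (h : HP G U x t) :
      HP G (insert u U) u t

theorem HP.append {G : SimpleGraph V} {U₁ U₂ : Finset V} {a b c d : V} (h₁ : HP G U₁ a b)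
    (h₂ : HP G U₂ c d) (hadj : G.Adj b c) (hd : Disjoint U₁ U₂) : HP G (U₁ ∪ U₂) a d := by
  induction h₁ with
  | single v =>
    rw [← Finset.insert_eq]
    exact HP.cons (by simpa using hd) hadj h₂
  | @cons U u x t hu ha h ih =>
    rw [Finset.disjoint_insert_left] at hd
    rw [Finset.insert_union]
    exact HP.cons (by simp [hu, hd.1]) ha (ih hadj hd.2)

theorem HP.symm {G : SimpleGraph V} {U : Finset V} {a b : V} (h : HP G U a b) : HP G U b a := by
  induction h with
  | single v => exact HP.single v
  | @cons U u x t hu ha h ih =>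
    have := ih.append (HP.single u) ha.symm (by simpa using hu)
    rwa [Finset.union_comm, ← Finset.insert_eq] at this

theorem HP.erase_cons {G : SimpleGraph V} {U : Finset V} {u x t : V} (hu : u ∈ U)
    (ha : G.Adj u x) (h : HP G (U.erase u) x t) : HP G U u t := by
  have := HP.cons (by simp) ha h
  rwa [Finset.insert_erase hu] at this

theorem HP.exists_isHamiltonian {G : SimpleGraph V} {X : Set V} {U : Finset V} {s t : V}
    (h : HP G U s t) (hU : ∀ v, v ∈ U ↔ v ∈ X) (hs : s ∈ X) (ht : t ∈ X) :
    ∃ p : (G.induce X).Walk ⟨s, hs⟩ ⟨t, ht⟩, p.IsHamiltonian := by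
  have key : ∀ {U : Finset V} {s t : V}, HP G U s t → (∀ v ∈ U, v ∈ X) →
      ∀ (hs : s ∈ X) (ht : t ∈ X), ∃ p : (G.induce X).Walk ⟨s, hs⟩ ⟨t, ht⟩,
        p.support.Nodup ∧ ∀ v : X, v ∈ p.support ↔ v.1 ∈ U := by
    intro U s t h
    induction h with
    | single v =>
      intro _ hs ht
      exact ⟨Walk.nil, by simp, by simp [Subtype.ext_iff]⟩
    | @cons U u x t hu ha h ih =>
      intro hX hs ht
      have hx : x ∈ U := by cases h <;> simp
      obtain ⟨p, hp, hp'⟩ := ih (fun v hv => hX v (Finset.mem_insert_of_mem hv))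
        (hX x (Finset.mem_insert_of_mem hx)) ht
      have ha' : (G.induce X).Adj ⟨u, hs⟩ ⟨x, hX x (Finset.mem_insert_of_mem hx)⟩ := ha
      refine ⟨Walk.cons ha' p, ?_, ?_⟩
      · rw [Walk.support_cons, List.nodup_cons]
        exact ⟨fun hm => hu ((hp' _).1 hm), hp⟩
      · intro v
        rw [Walk.support_cons, List.mem_cons, hp', Finset.mem_insert, Subtype.ext_iff]
  obtain ⟨p, hp, hp'⟩ := key h (fun v hv => (hU v).1 hv) hs ht
  refine ⟨p, fun v => ?_⟩
  convert List.count_eq_one_of_mem hp ((hp' v).2 ((hU v).2 v.2))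

theorem exists_HP_of_isHamiltonian {G : SimpleGraph V} {X : Set V} {s t : X}
    (p : (G.induce X).Walk s t) (hp : p.IsHamiltonian) :
    ∃ U : Finset V, (∀ v, v ∈ U ↔ v ∈ X) ∧ HP G U s t := by
  have key : ∀ {s t : X} (p : (G.induce X).Walk s t), p.support.Nodup →
      HP G (p.support.map Subtype.val).toFinset s t := by
    intro s t p
    induction p with
    | nil => intro _; simpa using HP.single _
    | @cons u x t ha p ih =>
      intro hn
      rw [Walk.support_cons, List.nodup_cons] at hn
      rw [Walk.support_cons, List.map_cons, List.toFinset_cons]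
      refine HP.cons ?_ ha (ih hn.2)
      simpa using hn.1
  refine ⟨_, fun v => ?_, key p hp.isPath.support_nodup⟩
  simp only [List.mem_toFinset, List.mem_map]
  constructor
  · rintro ⟨a, -, rfl⟩; exact a.2
  · intro hv; exact ⟨⟨v, hv⟩, hp.mem_support _, rfl⟩

/-! ### Hamilton-connectedness bounds the number of components -/

/-- Walking along a Hamilton path of `U`, a component of `G - S` is left only by stepping into
`S`; hence the components of `G - S` met by the path number at most the vertices of `S` on the
path other than its start, plus one if the path does not end in `S`. -/
theorem HP.ncard_components_le {G : SimpleGraph V} {U S : Finset V} {s t : V} (h : HP G U s t) :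
    ({c : (G.induce ((↑S : Set V)ᶜ)).ConnectedComponent |
        ∃ v, ∃ hv : v ∈ ((↑S : Set V)ᶜ), v ∈ U ∧
          (G.induce ((↑S : Set V)ᶜ)).connectedComponentMk ⟨v, hv⟩ = c}).Finite ∧
    ({c : (G.induce ((↑S : Set V)ᶜ)).ConnectedComponent |
        ∃ v, ∃ hv : v ∈ ((↑S : Set V)ᶜ), v ∈ U ∧
          (G.induce ((↑S : Set V)ᶜ)).connectedComponentMk ⟨v, hv⟩ = c}).ncard
      ≤ ((S ∩ U).erase s).card + (if t ∈ S then 0 else 1) := by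
  induction h with
  | single v =>
    by_cases hv : v ∈ S
    · have : {c : (G.induce ((↑S : Set V)ᶜ)).ConnectedComponent |
        ∃ w, ∃ hv : w ∈ ((↑S : Set V)ᶜ), w ∈ ({v} : Finset V) ∧
          (G.induce ((↑S : Set V)ᶜ)).connectedComponentMk ⟨w, hv⟩ = c} = ∅ := by
        ext c
        simp only [Set.mem_ofPred_eq, Set.mem_empty_iff_false, iff_false]
        rintro ⟨w, hw, hw', -⟩
        rw [Finset.mem_singleton] at hw'
        exact hw (by simpa [hw'] using hv)
      rw [this]; simp
    · have : {c : (G.induce ((↑S : Set V)ᶜ)).ConnectedComponent |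
        ∃ w, ∃ hv : w ∈ ((↑S : Set V)ᶜ), w ∈ ({v} : Finset V) ∧
          (G.induce ((↑S : Set V)ᶜ)).connectedComponentMk ⟨w, hv⟩ = c} =
          {(G.induce ((↑S : Set V)ᶜ)).connectedComponentMk ⟨v, by simpa using hv⟩} := by
        ext c
        simp only [Set.mem_ofPred_eq, Set.mem_singleton_iff, Finset.mem_singleton]
        constructor
        · rintro ⟨w, hw, rfl, rfl⟩; rfl
        · rintro rfl; exact ⟨v, by simpa using hv, rfl, rfl⟩
      rw [this]; simp [hv]
  | @cons U u x t hu ha h ih =>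
    obtain ⟨ihf, ihc⟩ := ih
    have hx : x ∈ U := by cases h <;> simp
    set C : Set (G.induce ((↑S : Set V)ᶜ)).ConnectedComponent := {c |
        ∃ w, ∃ hv : w ∈ ((↑S : Set V)ᶜ), w ∈ U ∧
          (G.induce ((↑S : Set V)ᶜ)).connectedComponentMk ⟨w, hv⟩ = c} with hC
    set C' : Set (G.induce ((↑S : Set V)ᶜ)).ConnectedComponent := {c |
        ∃ w, ∃ hv : w ∈ ((↑S : Set V)ᶜ), w ∈ insert u U ∧
          (G.induce ((↑S : Set V)ᶜ)).connectedComponentMk ⟨w, hv⟩ = c} with hC'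
    have hle : ((S ∩ U).erase x).card ≤ ((S ∩ insert u U).erase u).card := by
      apply Finset.card_le_card
      intro w; simp only [Finset.mem_erase, Finset.mem_inter, Finset.mem_insert]
      rintro ⟨-, h1, h2⟩
      exact ⟨fun e => hu (e ▸ h2), h1, Or.inr h2⟩
    by_cases hsub : C' ⊆ C
    · exact ⟨ihf.subset hsub, (Set.ncard_le_ncard hsub ihf).trans (by omega)⟩
    · have huS : u ∉ S := by
        intro huS
        apply hsub
        rintro c ⟨w, hw, hwU, rfl⟩
        rcases Finset.mem_insert.1 hwU with rfl | hwU
        · exact absurd huS (by simpa using hw)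
        · exact ⟨w, hw, hwU, rfl⟩
      have hxS : x ∈ S := by
        by_contra hxS
        apply hsub
        rintro c ⟨w, hw, hwU, rfl⟩
        rcases Finset.mem_insert.1 hwU with rfl | hwU
        · refine ⟨x, by simpa using hxS, hx, ?_⟩
          apply ConnectedComponent.sound
          apply Adj.reachable
          exact ha.symm
        · exact ⟨w, hw, hwU, rfl⟩
      have hsub' : C' ⊆ insert
          ((G.induce ((↑S : Set V)ᶜ)).connectedComponentMk ⟨u, by simpa using huS⟩) C := by
        rintro c ⟨w, hw, hwU, rfl⟩
        rcases Finset.mem_insert.1 hwU with rfl | hwU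
        · exact Set.mem_insert _ _
        · exact Set.mem_insert_of_mem _ ⟨w, hw, hwU, rfl⟩
      refine ⟨(ihf.insert _).subset hsub', ?_⟩
      have h1 := Set.ncard_le_ncard hsub' (ihf.insert _)
      have h2 := Set.ncard_insert_le
        ((G.induce ((↑S : Set V)ᶜ)).connectedComponentMk ⟨u, by simpa using huS⟩) C
      have h3 : ((S ∩ U).erase x).card + 1 ≤ ((S ∩ insert u U).erase u).card := by
        rw [Finset.card_erase_add_one (by simp [hxS, hx])]
        apply Finset.card_le_card
        intro w; simp only [Finset.mem_erase, Finset.mem_inter, Finset.mem_insert]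
        rintro ⟨h1, h2⟩
        exact ⟨fun e => hu (e ▸ h2), h1, Or.inr h2⟩
      omega

/-- Counting components of `G - S` along a Hamilton path of `G - S'` from `s` to `t`. -/
theorem numCompDel_le_of_hamiltonConnected [Fintype V] {G : SimpleGraph V} {S S' : Finset V}
    (hS : S' ⊆ S) (hH : HamiltonConnected (G.induce ((↑S' : Set V)ᶜ))) {s t : V}
    (hs : s ∉ S') (ht : t ∉ S') (hst : s ≠ t) :
    numCompDel G S ≤ ((S \ S').erase s).card + (if t ∈ S then 0 else 1) := by
  obtain ⟨p, hp⟩ := hH ⟨s, by simpa using hs⟩ ⟨t, by simpa using ht⟩ (by simpa using hst)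
  obtain ⟨U, hU, hP⟩ := exists_HP_of_isHamiltonian p (by convert hp)
  have h := (hP.ncard_components_le (S := S)).2
  have hall : {c : (G.induce ((↑S : Set V)ᶜ)).ConnectedComponent |
        ∃ v, ∃ hv : v ∈ ((↑S : Set V)ᶜ), v ∈ U ∧
          (G.induce ((↑S : Set V)ᶜ)).connectedComponentMk ⟨v, hv⟩ = c} = Set.univ := by
    ext c
    simp only [Set.mem_univ, iff_true]
    induction c using ConnectedComponent.ind with
    | h v => exact ⟨v.1, v.2, (hU _).2 (fun hv => v.2 (hS hv)), rfl⟩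
  rw [hall, Set.ncard_univ] at h
  have hSU : S ∩ U = S \ S' := by
    ext v; simp [hU]
  rw [hSU] at h
  exact h

/-- The bound of `numCompDel_le_of_hamiltonConnected` is sharpest when as many ends as possible lie
in `S`, so `k` vertices of `S` (or all but one, or all) are deleted beforehand and the ends of the
path are taken among the remaining vertices of `S`. -/
theorem scatAtMost_of_kHamiltonConnected [Fintype V] {G : SimpleGraph V} {k : ℕ}
    (hcard : k + 3 ≤ Fintype.card V) (hH : KHamiltonConnected G k) :
    ScatAtMost G (-(k + 1 : ℤ)) := by
  intro S h2
  have hne : (Sᶜ).Nonempty := by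
    by_contra hne
    rw [Finset.not_nonempty_iff_eq_empty, Finset.compl_eq_empty_iff] at hne
    subst hne
    have : numCompDel G Finset.univ = 0 := by
      unfold numCompDel
      have : IsEmpty ((G.induce ((↑(Finset.univ : Finset V) : Set V)ᶜ)).ConnectedComponent) := by
        refine ⟨fun c => ?_⟩
        induction c using ConnectedComponent.ind with
        | h v => exact v.2 (by simp)
      simp
    omega
  rcases lt_trichotomy S.card (k + 1) with hlt | heq | hgt
  · have h1 : 1 < (Sᶜ).card := by rw [Finset.card_compl]; omega
    obtain ⟨s, hs, t, ht, hst⟩ := Finset.one_lt_card.1 h1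
    rw [Finset.mem_compl] at hs ht
    have := numCompDel_le_of_hamiltonConnected (Finset.Subset.refl S) (hH S (by omega)) hs ht hst
    simp [ht] at this
    omega
  · have hpos : S.Nonempty := by rw [← Finset.card_pos]; omega
    obtain ⟨s, hs⟩ := hpos
    obtain ⟨t, ht⟩ := hne
    rw [Finset.mem_compl] at ht
    have := numCompDel_le_of_hamiltonConnected (Finset.erase_subset s S)
      (hH (S.erase s) (by rw [Finset.card_erase_of_mem hs]; omega))
      (Finset.notMem_erase s S) (fun h => ht (Finset.mem_of_mem_erase h))
      (fun e => ht (e ▸ hs) : s ≠ t)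
    have h0 : (S \ S.erase s).erase s = ∅ := by ext v; simp; tauto
    rw [h0] at this
    simp [ht] at this
    omega
  · obtain ⟨S', hS', hc⟩ := Finset.exists_subset_card_eq (show k ≤ S.card by omega)
    have hcs : (S \ S').card = S.card - k := by rw [Finset.card_sdiff_of_subset hS', hc]
    obtain ⟨s, hs, t, ht, hst⟩ := Finset.one_lt_card.1 (show 1 < (S \ S').card by omega)
    have h1 := numCompDel_le_of_hamiltonConnected hS' (hH S' hc.le)
      (Finset.mem_sdiff.1 hs).2 (Finset.mem_sdiff.1 ht).2 hst
    rw [Finset.card_erase_of_mem hs, hcs, if_pos (Finset.mem_sdiff.1 ht).1] at h1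
    omega

/-! ### Counting components by their last vertices -/

/-- `f` orders the vertices by right endpoints: the neighbours of `w` that precede `w` form a
final segment of the predecessors of `w`. -/
def Ordered (G : SimpleGraph V) (f : V → α) : Prop :=
  Function.Injective f ∧ ∀ u v w, f u < f v → f v < f w → G.Adj u w → G.Adj v w

open Classical in
/-- The number of vertices of `W` without a later neighbour in `W`. For an order as in `Ordered`
these are the last vertices of the components of `G[W]`, so this counts the components. -/
noncomputable def cnt {V : Type} (G : SimpleGraph V) (f : V → α)
    (W : Finset V) : ℕ :=
  (W.filter fun u => ∀ w ∈ W, f u < f w → ¬ G.Adj u w).card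

/-- Adding a vertex dominated by a later vertex of `W` does not change the number of components. -/
theorem cnt_insert_dom {G : SimpleGraph V} {f : V → α} {W : Finset V} {u z : V} (hz : z ∈ W)
    (hlt : f u < f z) (hadj : G.Adj u z) (hdom : ∀ w ∈ W, G.Adj u w → w = z ∨ G.Adj z w) :
    cnt G f (insert u W) = cnt G f W := by
  unfold cnt
  congr 1
  ext v
  simp only [Finset.mem_filter, Finset.mem_insert]
  constructor
  · rintro ⟨rfl | hv, h⟩
    · exact absurd hadj (h z (Or.inr hz) hlt)
    · exact ⟨hv, fun w hw => h w (Or.inr hw)⟩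
  · rintro ⟨hv, h⟩
    refine ⟨Or.inr hv, ?_⟩
    rintro w (rfl | hw) hvw ha
    · rcases hdom v hv ha.symm with rfl | h'
      · exact lt_asymm hvw hlt
      · exact h z hz (hvw.trans hlt) h'.symm
    · exact h w hw hvw ha

theorem cnt_insert_iso {G : SimpleGraph V} {f : V → α} {W : Finset V} {u : V} (hu : u ∉ W)
    (hiso : ∀ w ∈ W, ¬ G.Adj u w) : cnt G f (insert u W) = cnt G f W + 1 := by
  classical
  unfold cnt
  rw [← Finset.card_insert_of_notMem (s := W.filter _) (a := u) (by simp [hu])]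
  congr 1
  ext v
  simp only [Finset.mem_filter, Finset.mem_insert]
  constructor
  · rintro ⟨rfl | hv, h⟩
    · exact Or.inl rfl
    · exact Or.inr ⟨hv, fun w hw => h w (Or.inr hw)⟩
  · rintro (rfl | ⟨hv, h⟩)
    · refine ⟨Or.inl rfl, ?_⟩
      rintro w (rfl | hw) hvw
      · exact absurd hvw (lt_irrefl _)
      · exact hiso w hw
    · refine ⟨Or.inr hv, ?_⟩
      rintro w (rfl | hw) hvw
      · exact fun ha => hiso v hv ha.symm
      · exact h w hw hvw

theorem one_le_cnt {V : Type} {G : SimpleGraph V} {f : V → α} {W : Finset V} (hW : W.Nonempty) :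
    1 ≤ cnt G f W := by
  obtain ⟨u, hu, hmax⟩ := Finset.exists_max_image W f hW
  unfold cnt
  rw [Nat.one_le_iff_ne_zero, Finset.card_ne_zero]
  refine ⟨u, ?_⟩
  simp only [Finset.mem_filter]
  exact ⟨hu, fun w hw h => absurd h (not_lt.2 (hmax w hw))⟩

/-- Vertices without a later neighbour lie in distinct components of `G - S`, because each is the
last vertex of its component. -/
theorem cnt_compl_le_numCompDel [Fintype V] {G : SimpleGraph V} {f : V → α} (hf : Ordered G f)
    (S : Finset V) : cnt G f Sᶜ ≤ numCompDel G S := by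
  classical
  unfold cnt numCompDel
  rw [Nat.card_eq_fintype_card]
  have hmem : ∀ v, v ∈ Sᶜ → v ∈ ((↑S : Set V)ᶜ) := fun v hv => by simpa using hv
  -- Leaving `{w | w ≤ u}` along an edge would produce a later neighbour of `u`.
  have key : ∀ u v : ((↑S : Set V)ᶜ : Set V), (∀ w ∈ Sᶜ, f u < f w → ¬ G.Adj u w) →
      (G.induce ((↑S : Set V)ᶜ)).Reachable u v → f v ≤ f u := by
    rintro u v hu ⟨p⟩
    have : ∀ {a b : ((↑S : Set V)ᶜ : Set V)}, (G.induce ((↑S : Set V)ᶜ)).Walk a b →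
        f a ≤ f u → f b ≤ f u := by
      intro a b p
      induction p with
      | nil => exact id
      | @cons a c b h p ih =>
        intro ha
        apply ih
        by_contra hc
        rw [not_le] at hc
        have hac : G.Adj a c := h
        have hcS : (c : V) ∈ Sᶜ := Finset.mem_compl.2 fun h => c.2 (Finset.mem_coe.2 h)
        apply hu c hcS hc
        rcases ha.lt_or_eq with hlt | heq
        · exact hf.2 _ _ _ hlt hc hac
        · rwa [← hf.1 heq]
    exact this p le_rfl
  rw [← Fintype.card_coe]
  refine Fintype.card_le_of_injective
    (fun v => (G.induce ((↑S : Set V)ᶜ)).connectedComponentMk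
      ⟨v.1, hmem v.1 (by have := v.2; simp only [Finset.mem_filter] at this; exact this.1)⟩) ?_
  rintro ⟨u, hu⟩ ⟨v, hv⟩ huv
  have hr := ConnectedComponent.exact huv
  simp only [Finset.mem_filter] at hu hv
  have h1 := key _ _ hu.2 hr
  have h2 := key _ _ hv.2 hr.symm
  exact Subtype.ext (hf.1 (le_antisymm h2 h1))

/-! ### The scattering condition along the sweep -/

/-- `m` is the first vertex of `U`. -/
def IsFirst (f : V → α) (U : Finset V) (m : V) : Prop := m ∈ U ∧ ∀ v ∈ U, f m ≤ f v

/-- `v` lies in the closed neighbourhood of `m`. For the first vertex `m` of `U`, the vertices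
`v ∈ U` with `Front G m v` form a clique, whose members have nested closed neighbourhoods in
`U`. -/
def Front (G : SimpleGraph V) (m v : V) : Prop := v = m ∨ G.Adj m v

/-- The scattering condition on `G[U]` with slack `σ`, strengthened by one for the sets `S`
containing all of `H`. -/
def Cond (G : SimpleGraph V) (f : V → α) (σ : ℕ) (U : Finset V) (H : Set V) : Prop :=
  ∀ S ⊆ U, 2 ≤ cnt G f (U \ S) →
    cnt G f (U \ S) + σ ≤ S.card ∧ (H ⊆ ↑S → cnt G f (U \ S) + σ + 1 ≤ S.card)

theorem Cond.mono {G : SimpleGraph V} {f : V → α} {σ : ℕ} {U : Finset V} {H H' : Set V}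
    (h : Cond G f σ U H) (hH : H ⊆ H') : Cond G f σ U H' :=
  fun S hS h2 => ⟨(h S hS h2).1, fun h' => (h S hS h2).2 (hH.trans h')⟩

theorem exists_isFirst (f : V → α) {U : Finset V} (hU : U.Nonempty) : ∃ m, IsFirst f U m :=
  Finset.exists_min_image U f hU

section

variable {G : SimpleGraph V} {f : V → α} {σ : ℕ} {U : Finset V} {H : Set V} {m : V}

theorem IsFirst.lt (hf : Ordered G f) (hm : IsFirst f U m) {v : V} (hv : v ∈ U) (hne : v ≠ m) :
    f m < f v :=
  lt_of_le_of_ne (hm.2 v hv) fun e => hne (hf.1 e).symm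

theorem Front.next (hf : Ordered G f) (hm : IsFirst f U m) {W : Finset V} (hW : W ⊆ U)
    (hmW : m ∉ W) {m' v : V} (hm' : IsFirst f W m') (hv : v ∈ W) (h : Front G m v) :
    Front G m' v := by
  by_cases hv' : v = m'
  · exact Or.inl hv'
  rcases h with rfl | h
  · exact absurd hv hmW
  · exact Or.inr (hf.2 _ _ _ (hm.lt hf (hW hm'.1) fun e => hmW (e ▸ hm'.1))
      (hm'.lt hf hv hv') h)

/-- An earlier vertex of the front is adjacent to, and dominated by, a later one. -/
theorem Front.dom (hf : Ordered G f) (hm : IsFirst f U m) {u z : V} (hu : u ∈ U)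
    (fu : Front G m u) (fz : Front G m z) (hlt : f u < f z) :
    G.Adj u z ∧ ∀ w ∈ U, G.Adj u w → w = z ∨ G.Adj z w := by
  have hzm : z ≠ m := by rintro rfl; exact absurd hlt (not_lt.2 (hm.2 u hu))
  have haz : G.Adj m z := fz.resolve_left hzm
  have hbetween : ∀ w ∈ U, f w < f z → G.Adj w z := by
    intro w hw hwz
    by_cases hwm : w = m
    · rwa [hwm]
    · exact hf.2 _ _ _ (hm.lt hf hw hwm) hwz haz
  refine ⟨hbetween u hu hlt, fun w hw hadj => ?_⟩
  rcases lt_trichotomy (f w) (f z) with h | h | h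
  · exact Or.inr (hbetween w hw h).symm
  · exact Or.inl (hf.1 h)
  · exact Or.inr (hf.2 _ _ _ hlt h hadj)

theorem cnt_insert_front (hf : Ordered G f) (hm : IsFirst f U m) {W : Finset V} (hW : W ⊆ U)
    {u z : V} (hu : u ∈ U) (hz : z ∈ W) (fu : Front G m u) (fz : Front G m z)
    (hlt : f u < f z) : cnt G f (insert u W) = cnt G f W := by
  obtain ⟨h1, h2⟩ := Front.dom hf hm hu fu fz hlt
  exact cnt_insert_dom hz hlt h1 fun w hw => h2 w (hW hw)

theorem cnt_le_insert_first (hf : Ordered G f) (hm : IsFirst f U m) {W : Finset V} (hW : W ⊆ U)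
    (hmW : m ∉ W) : cnt G f W ≤ cnt G f (insert m W) := by
  by_cases h : ∃ z ∈ W, G.Adj m z
  · obtain ⟨z, hz, ha⟩ := h
    exact (cnt_insert_front hf hm hW hm.1 hz (Or.inl rfl) (Or.inr ha)
      (hm.lt hf (hW hz) (fun e => hmW (e ▸ hz)))).ge
  · push Not at h
    rw [cnt_insert_iso hmW h]
    omega

/-- If the first vertex `m` is not in `H`, the earliest vertex `h` of `H` can be deleted and
replaced by `m` in `H`. -/
theorem Cond.replace_by_first (hf : Ordered G f) (hm : IsFirst f U m)
    (hHU : ∀ v ∈ H, v ∈ U ∧ Front G m v) (hmH : m ∉ H) {h : V} (hh : h ∈ H)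
    (hmin : ∀ v ∈ H, f h ≤ f v) (hc : Cond G f σ U H) :
    Cond G f σ (U.erase h) (insert m (H \ {h})) := by
  intro S hS h2
  have hmh : m ≠ h := fun e => hmH (e ▸ hh)
  have hhS : h ∉ S := fun hx => by simpa using hS hx
  have hSU : S ⊆ U := hS.trans (Finset.erase_subset _ _)
  have hhU := (hHU h hh).1
  set W := U.erase h \ S with hW
  have hWU : W ⊆ U := Finset.sdiff_subset.trans (Finset.erase_subset _ _)
  by_cases hsub : H \ {h} ⊆ ↑S
  · have e1 : U \ insert h S = W := by ext v; simp [hW]; tauto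
    have h1 := hc (insert h S) (Finset.insert_subset hhU hSU) (by rwa [e1])
    rw [e1, Finset.card_insert_of_notMem hhS] at h1
    refine ⟨?_, fun hH' => ?_⟩
    · have := h1.2 (by
        intro v hv
        by_cases hvh : v = h
        · simp [hvh]
        · exact Finset.mem_coe.2 (Finset.mem_insert_of_mem (hsub ⟨hv, hvh⟩)))
      omega
    · have hmS : m ∈ S := hH' (Set.mem_insert _ _)
      have hmW : m ∉ W := by simp [hW, hmS]
      have e2 : U \ insert h (S.erase m) = insert m W := by
        ext v
        by_cases hv : v = m
        · subst hv; simp [hm.1, hmh]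
        · simp [hW, hv]; tauto
      have hle := cnt_le_insert_first hf hm hWU hmW
      have h3 := (hc (insert h (S.erase m)) (Finset.insert_subset hhU
        ((Finset.erase_subset _ _).trans hSU)) (by rw [e2]; omega)).2 (by
          intro v hv
          by_cases hvh : v = h
          · simp [hvh]
          · have hvm : v ≠ m := fun e => hmH (e ▸ hv)
            have : v ∈ S := hsub ⟨hv, hvh⟩
            simp [hvm, this])
      rw [e2, Finset.card_insert_of_notMem (by simp [hhS]),
        Finset.card_erase_add_one hmS] at h3
      omega
  · obtain ⟨y, ⟨hyH, hyh⟩, hyS⟩ := Set.not_subset.1 hsub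
    have hyh' : y ≠ h := hyh
    have hyS' : y ∉ S := hyS
    have hyW : y ∈ W := by simp [hW, hyh', hyS', (hHU y hyH).1]
    have hlt : f h < f y := lt_of_le_of_ne (hmin y hyH) fun e => hyh' (hf.1 e).symm
    have e1 : U \ S = insert h W := by
      ext v
      by_cases hv : v = h
      · subst hv; simp [hhU, hhS]
      · simp [hW, hv]
    have e3 := cnt_insert_front hf hm hWU hhU hyW (hHU h hh).2 (hHU y hyH).2 hlt
    refine ⟨?_, fun hH' => absurd (hH' (Set.mem_insert_of_mem _ ⟨hyH, hyh⟩)) hyS⟩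
    have h1 := (hc S hSU (by rw [e1, e3]; exact h2)).1
    rwa [e1, e3] at h1

/-- If the first vertex `m` is in `H`, it can be deleted and replaced in `H` by the earliest
vertex `j` of the front outside `H`. -/
theorem Cond.replace_first (hf : Ordered G f) (hm : IsFirst f U m)
    (hmH : m ∈ H) {j : V} (hj : j ∈ U) (fj : Front G m j)
    (hjH : j ∉ H) (hmin : ∀ z ∈ U, Front G m z → z ∉ H → f j ≤ f z) (hc : Cond G f σ U H) :
    Cond G f σ (U.erase m) (insert j (H \ {m})) := by
  intro S hS h2
  have hmj : m ≠ j := fun e => hjH (e ▸ hmH)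
  have hmS : m ∉ S := fun hx => by simpa using hS hx
  have hSU : S ⊆ U := hS.trans (Finset.erase_subset _ _)
  set W := U.erase m \ S with hW
  have hWU : W ⊆ U := Finset.sdiff_subset.trans (Finset.erase_subset _ _)
  have hmW : m ∉ W := by simp [hW]
  have hle := cnt_le_insert_first hf hm hWU hmW
  have e1 : U \ S = insert m W := by
    ext v
    by_cases hv : v = m
    · subst hv; simp [hm.1, hmS]
    · simp [hW, hv]
  have h1 := (hc S hSU (by rw [e1]; omega)).1
  rw [e1] at h1
  refine ⟨by omega, fun hH' => ?_⟩
  have hjS : j ∈ S := hH' (Set.mem_insert _ _)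
  by_cases hz : ∃ z ∈ W, G.Adj m z
  · obtain ⟨z, hzW, ha⟩ := hz
    have hzS : z ∉ S := (Finset.mem_sdiff.1 hzW).2
    have hzm : z ≠ m := fun e => hmW (e ▸ hzW)
    have hzH : z ∉ H := fun hzH => hzS (hH' (Set.mem_insert_of_mem _ ⟨hzH, hzm⟩))
    have hlt : f j < f z := lt_of_le_of_ne (hmin z (hWU hzW) (Or.inr ha) hzH)
      fun e => hzS (hf.1 e ▸ hjS)
    have e3 := cnt_insert_front hf hm hWU hj hzW fj (Or.inr ha) hlt
    have e2 : U \ insert m (S.erase j) = insert j W := by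
      ext v
      by_cases hv : v = j
      · subst hv; simp [hj, hmj.symm]
      · simp [hW, hv]; tauto
    have h3 := (hc (insert m (S.erase j)) (Finset.insert_subset hm.1
      ((Finset.erase_subset _ _).trans hSU)) (by rw [e2, e3]; exact h2)).2 (by
        intro v hv
        by_cases hvm : v = m
        · simp [hvm]
        · have hvj : v ≠ j := fun e => hjH (e ▸ hv)
          have : v ∈ S := hH' (Set.mem_insert_of_mem _ ⟨hv, hvm⟩)
          simp [hvj, this])
    rw [e2, e3, Finset.card_insert_of_notMem (by simp [hmS]),
      Finset.card_erase_add_one hjS] at h3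
    exact h3
  · push Not at hz
    rw [cnt_insert_iso hmW hz] at h1
    omega

/-- Unless the front is everything, the neighbours of the first vertex form a cut. -/
theorem Cond.two_add_le (hm : IsFirst f U m) (hc : Cond G f σ U H)
    {v : V} (hv : v ∈ U) (hvf : ¬ Front G m v) {N : Finset V} (hNU : N ⊆ U)
    (hN : ∀ w ∈ U, G.Adj m w → w ∈ N) (hmN : m ∉ N) (hvN : v ∉ N) : 2 + σ ≤ N.card := by
  have hvm : v ≠ m := fun e => hvf (Or.inl e)
  have e : U \ N = insert m (U.erase m \ N) := by
    ext w
    by_cases hw : w = m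
    · subst hw; simp [hm.1, hmN]
    · simp [hw]
  have h1 : cnt G f (U \ N) = cnt G f (U.erase m \ N) + 1 := by
    rw [e]
    refine cnt_insert_iso (by simp) fun w hw ha => ?_
    simp only [Finset.mem_sdiff, Finset.mem_erase] at hw
    exact hw.2 (hN w hw.1.2 ha)
  have h2 : 1 ≤ cnt G f (U.erase m \ N) := one_le_cnt ⟨v, by simp [hv, hvm, hvN]⟩
  have := (hc N hNU (by omega)).1
  omega

end


/-! ### One path -/

/-- If an end `x` or `t` is in the front, the strengthened scattering condition gives a Hamilton
path of `G[U]` from `x` to `t`. -/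
theorem exists_HP_of_front {G : SimpleGraph V} {f : V → α} (hf : Ordered G f) (U : Finset V) :
    ∀ x t m : V, x ∈ U → t ∈ U → x ≠ t → IsFirst f U m → (Front G m x ∨ Front G m t) →
      Cond G f 0 U {v | (v = x ∨ v = t) ∧ Front G m v} → HP G U x t := by
  induction U using Finset.strongInduction with
  | H U ih =>
  intro x t m hx ht hxt hm hfr hc
  have key : ∀ x t : V, x ∈ U → t ∈ U → x ≠ t → Front G m x → (Front G m t → f x ≤ f t) →
      Cond G f 0 U {v | (v = x ∨ v = t) ∧ Front G m v} → HP G U x t := by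
    clear hx ht hxt hfr hc x t
    intro x t hx ht hxt hfx hmin hc
    by_cases hxm : x = m
    · subst hxm
      by_cases hex : (U.filter fun v => G.Adj x v ∧ v ≠ t).Nonempty
      · -- Step from the first vertex to the earliest admissible neighbour.
        classical
        obtain ⟨j, hj, hjmin⟩ := Finset.exists_min_image _ f hex
        simp only [Finset.mem_filter] at hj hjmin
        have hjx : j ≠ x := hj.2.1.ne'
        have hc' := hc.replace_first (H := {v | (v = x ∨ v = t) ∧ Front G x v}) hf hm
          (j := j) ⟨Or.inl rfl, Or.inl rfl⟩ hj.1
          (Or.inr hj.2.1) (fun h => h.1.elim hjx hj.2.2) (by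
            intro z hz hzf hzH
            have hzx : z ≠ x := fun e => hzH ⟨Or.inl e, hzf⟩
            have hzt : z ≠ t := fun e => hzH ⟨Or.inr e, hzf⟩
            exact hjmin z ⟨hz, hzf.resolve_left hzx, hzt⟩)
        have hjE : j ∈ U.erase x := Finset.mem_erase.2 ⟨hjx, hj.1⟩
        have htE : t ∈ U.erase x := Finset.mem_erase.2 ⟨hxt.symm, ht⟩
        obtain ⟨m', hm'⟩ := exists_isFirst f ⟨j, hjE⟩
        have hnext : ∀ v ∈ U.erase x, Front G x v → Front G m' v := fun v hv h =>
          Front.next hf hm (Finset.erase_subset _ _) (by simp) hm' hv h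
        have hj' := hnext j hjE (Or.inr hj.2.1)
        refine HP.erase_cons hx hj.2.1 (ih _ (Finset.erase_ssubset hx) j t m' hjE htE hj.2.2 hm'
          (Or.inl hj') (hc'.mono ?_))
        rintro v (rfl | ⟨⟨rfl | rfl, hv⟩, hvx⟩)
        · exact ⟨Or.inl rfl, hj'⟩
        · exact absurd rfl hvx
        · exact ⟨Or.inr rfl, hnext _ htE hv⟩
      · -- Only `t` can be adjacent to the first vertex, so `U = {x, t}`.
        have hno : ∀ v ∈ U, G.Adj x v → v = t := by
          intro v hv ha
          by_contra hvt
          exact hex ⟨v, by simp [hv, ha, hvt]⟩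
        have hall : ∀ v ∈ U, Front G x v := by
          intro v hv
          by_contra hvf
          by_cases hvt : v = t
          · have := hc.two_add_le hm hv hvf (N := ∅) (by simp)
              (fun w hw ha => absurd (Or.inr (hno w hw ha ▸ ha)) (hvt ▸ hvf)) (by simp) (by simp)
            simp at this
          · have := hc.two_add_le hm hv hvf (N := {t}) (by simpa using ht)
              (fun w hw ha => by simpa using hno w hw ha) (by simpa using hxt) (by simpa using hvt)
            simp at this
        have hxt' : G.Adj x t := (hall t ht).resolve_left hxt.symm
        have hU : U.erase x = {t} := by
          ext v
          simp only [Finset.mem_erase, Finset.mem_singleton]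
          constructor
          · rintro ⟨hvx, hv⟩; exact hno v hv ((hall v hv).resolve_left hvx)
          · rintro rfl; exact ⟨hxt.symm, ht⟩
        exact HP.erase_cons hx hxt' (hU ▸ HP.single t)
    · -- Step back from the earlier end to the first vertex.
      have htm : t ≠ m := by
        rintro rfl
        exact absurd (hmin (Or.inl rfl)) (not_le.2 (hm.lt hf hx hxm))
      have hc' := hc.replace_by_first (H := {v | (v = x ∨ v = t) ∧ Front G m v}) hf hm
        (h := x) (by rintro v ⟨rfl | rfl, h⟩ <;> tauto)
        (fun h => h.1.elim (fun e => hxm e.symm) (fun e => htm e.symm)) ⟨Or.inl rfl, hfx⟩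
        (by rintro v ⟨rfl | rfl, h⟩ <;> tauto)
      have hmE : m ∈ U.erase x := Finset.mem_erase.2 ⟨fun e => hxm e.symm, hm.1⟩
      refine HP.erase_cons hx (hfx.resolve_left hxm).symm
        (ih _ (Finset.erase_ssubset hx) m t m hmE (Finset.mem_erase.2 ⟨hxt.symm, ht⟩)
          htm.symm ⟨hmE, fun v hv => hm.2 v (Finset.mem_of_mem_erase hv)⟩ (Or.inl (Or.inl rfl))
          (hc'.mono ?_))
      rintro v (rfl | ⟨⟨rfl | rfl, hv⟩, hvx⟩)
      · exact ⟨Or.inl rfl, Or.inl rfl⟩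
      · exact absurd rfl hvx
      · exact ⟨Or.inr rfl, hv⟩
  have hc2 : Cond G f 0 U {v | (v = t ∨ v = x) ∧ Front G m v} :=
    hc.mono fun v hv => ⟨hv.1.symm, hv.2⟩
  by_cases h1 : Front G m x
  · by_cases h2 : Front G m t
    · rcases le_total (f x) (f t) with h | h
      · exact key x t hx ht hxt h1 (fun _ => h) hc
      · exact (key t x ht hx hxt.symm h2 (fun _ => h) hc2).symm
    · exact key x t hx ht hxt h1 (fun h => absurd h h2) hc
  · exact (key t x ht hx hxt.symm (hfr.resolve_left h1) (fun h => absurd h h1) hc2).symm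

/-! ### Two paths -/

/-- The vertices of `U` are covered by two disjoint paths of `G[U]`, each of which joins one of
`a`, `b` to one of `c`, `d`. -/
def Linked (G : SimpleGraph V) (U : Finset V) (a b c d : V) : Prop :=
  ∃ U₁ U₂ : Finset V, Disjoint U₁ U₂ ∧ U₁ ∪ U₂ = U ∧
    ((HP G U₁ a c ∧ HP G U₂ b d) ∨ (HP G U₁ a d ∧ HP G U₂ b c))

section

variable {G : SimpleGraph V} {U : Finset V} {a b c d : V}

theorem Linked.swap_right (h : Linked G U a b c d) : Linked G U a b d c := by
  obtain ⟨U₁, U₂, h1, h2, h3⟩ := h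
  exact ⟨U₁, U₂, h1, h2, h3.symm⟩

theorem Linked.swap_left (h : Linked G U a b c d) : Linked G U b a c d := by
  obtain ⟨U₁, U₂, h1, h2, h3⟩ := h
  refine ⟨U₂, U₁, h1.symm, by rw [Finset.union_comm, h2], ?_⟩
  tauto

theorem Linked.symm (h : Linked G U a b c d) : Linked G U c d a b := by
  obtain ⟨U₁, U₂, h1, h2, h3 | h3⟩ := h
  · exact ⟨U₁, U₂, h1, h2, Or.inl ⟨h3.1.symm, h3.2.symm⟩⟩
  · exact ⟨U₂, U₁, h1.symm, by rw [Finset.union_comm, h2], Or.inr ⟨h3.2.symm, h3.1.symm⟩⟩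

theorem Linked.erase_cons {w : V} (ha : a ∈ U) (hadj : G.Adj a w)
    (h : Linked G (U.erase a) w b c d) : Linked G U a b c d := by
  obtain ⟨U₁, U₂, h1, h2, h3⟩ := h
  have ha1 : a ∉ U₁ := fun h => by simpa [← h2, h] using Finset.notMem_erase a U
  have ha2 : a ∉ U₂ := fun h => by simpa [← h2, h] using Finset.notMem_erase a U
  refine ⟨insert a U₁, U₂, Finset.disjoint_insert_left.2 ⟨ha2, h1⟩,
    by rw [Finset.insert_union, h2, Finset.insert_erase ha], ?_⟩
  exact h3.imp (fun h => ⟨HP.cons ha1 hadj h.1, h.2⟩) (fun h => ⟨HP.cons ha1 hadj h.1, h.2⟩)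

end

/-- When the front consists of four terminals `m`, `b`, `c`, `d`, the edge from `m` to `c` is one
path, and the slack left over provides the other. -/
theorem linked_of_front_subset {G : SimpleGraph V} {f : V → α} (hf : Ordered G f) {U : Finset V}
    {m b c d : V} {H : Set V} (hm : IsFirst f U m) (hb : b ∈ U) (hcU : c ∈ U) (hd : d ∈ U)
    (hbc : b ≠ c) (hbd : b ≠ d) (hcd : c ≠ d) (hmb : G.Adj m b) (hmc : G.Adj m c)
    (hmd : G.Adj m d) (hno : ∀ v ∈ U, G.Adj m v → v = b ∨ v = c ∨ v = d)
    (hc : Cond G f 1 U H) : Linked G U m b c d := by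
  set W₀ := (U.erase m).erase c with hW₀
  have hW₀U : W₀ ⊆ U := (Finset.erase_subset _ _).trans (Finset.erase_subset _ _)
  have hmW₀ : m ∉ W₀ := by simp [hW₀]
  have hbW : b ∈ W₀ := by simp [hW₀, hbc, hb, hmb.ne']
  have hdW : d ∈ W₀ := by simp [hW₀, hcd.symm, hd, hmd.ne']
  obtain ⟨m', hm'⟩ := exists_isFirst f ⟨b, hbW⟩
  have hb' := Front.next hf hm hW₀U hmW₀ hm' hbW (Or.inr hmb)
  have hd' := Front.next hf hm hW₀U hmW₀ hm' hdW (Or.inr hmd)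
  have hHP : HP G W₀ b d := by
    refine exists_HP_of_front hf W₀ b d m' hbW hdW hbd hm' (Or.inl hb') ?_
    intro S hS h2
    have hcS : c ∉ S := fun h => by simpa [hW₀] using hS h
    have hmS : m ∉ S := fun h => hmW₀ (hS h)
    have e : U \ insert c S = insert m (W₀ \ S) := by
      ext v
      by_cases hv : v = m
      · subst hv; simp [hm.1, hmc.ne, hmS]
      · simp [hW₀, hv]; tauto
    have hmW : m ∉ W₀ \ S := fun h => hmW₀ (Finset.sdiff_subset h)
    have hle := cnt_le_insert_first hf hm (Finset.sdiff_subset.trans hW₀U) hmW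
    have h1 := (hc (insert c S) (Finset.insert_subset hcU (hS.trans hW₀U))
      (by rw [e]; omega)).1
    rw [e, Finset.card_insert_of_notMem hcS] at h1
    refine ⟨by omega, fun hH => ?_⟩
    have hbS : b ∈ S := hH ⟨Or.inl rfl, hb'⟩
    have hdS : d ∈ S := hH ⟨Or.inr rfl, hd'⟩
    rw [cnt_insert_iso hmW] at h1
    · omega
    · intro w hw ha
      have hwS := (Finset.mem_sdiff.1 hw).2
      have hwW := (Finset.mem_sdiff.1 hw).1
      rcases hno w (hW₀U hwW) ha with rfl | rfl | rfl
      · exact hwS hbS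
      · simp [hW₀] at hwW
      · exact hwS hdS
  refine ⟨insert m {c}, W₀, ?_, ?_, Or.inl ⟨?_, hHP⟩⟩
  · simp [Finset.disjoint_insert_left, hW₀]
  · ext v
    simp only [Finset.mem_union, Finset.mem_insert, Finset.mem_singleton, hW₀, Finset.mem_erase]
    constructor
    · rintro ((rfl | rfl) | h)
      · exact hm.1
      · exact hcU
      · exact h.2.2
    · tauto
  · exact HP.cons (by simpa using hmc.ne) hmc (HP.single c)

/-- The analogue of `exists_HP_of_front` for two paths: with slack `1` and one of the four
terminals in the front, `a` and `b` can be linked to `c` and `d` by paths covering `U`. -/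
theorem linked_of_front {G : SimpleGraph V} {f : V → α} (hf : Ordered G f) (U : Finset V) :
    ∀ a b c d m : V, a ∈ U → b ∈ U → c ∈ U → d ∈ U →
      a ≠ b → a ≠ c → a ≠ d → b ≠ c → b ≠ d → c ≠ d → IsFirst f U m →
      (Front G m a ∨ Front G m b ∨ Front G m c ∨ Front G m d) →
      Cond G f 1 U {v | (v = a ∨ v = b ∨ v = c ∨ v = d) ∧ Front G m v} →
      Linked G U a b c d := by
  induction U using Finset.strongInduction with
  | H U ih =>
  intro a b c d m ha hb hcU hd hab hac had hbc hbd hcd hm hfr hc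
  have key : ∀ a b c d : V, a ∈ U → b ∈ U → c ∈ U → d ∈ U →
      a ≠ b → a ≠ c → a ≠ d → b ≠ c → b ≠ d → c ≠ d → Front G m a →
      (∀ v, v = b ∨ v = c ∨ v = d → Front G m v → f a ≤ f v) →
      Cond G f 1 U {v | (v = a ∨ v = b ∨ v = c ∨ v = d) ∧ Front G m v} →
      Linked G U a b c d := by
    clear ha hb hcU hd hab hac had hbc hbd hcd hfr hc a b c d
    intro a b c d ha hb hcU hd hab hac had hbc hbd hcd hfa hmin hc
    have hbE : b ∈ U.erase a := Finset.mem_erase.2 ⟨hab.symm, hb⟩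
    have hcE : c ∈ U.erase a := Finset.mem_erase.2 ⟨hac.symm, hcU⟩
    have hdE : d ∈ U.erase a := Finset.mem_erase.2 ⟨had.symm, hd⟩
    by_cases ham : a = m
    · subst ham
      by_cases hex : (U.filter fun v => G.Adj a v ∧ v ≠ b ∧ v ≠ c ∧ v ≠ d).Nonempty
      · -- Extend the path at `a` by the earliest neighbour that is not a terminal.
        classical
        obtain ⟨j, hj, hjmin⟩ := Finset.exists_min_image _ f hex
        simp only [Finset.mem_filter] at hj hjmin
        obtain ⟨hjU, haj, hjb, hjc, hjd⟩ := hj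
        have hja : j ≠ a := haj.ne'
        have hc' := hc.replace_first
          (H := {v | (v = a ∨ v = b ∨ v = c ∨ v = d) ∧ Front G a v}) hf hm (j := j)
          ⟨Or.inl rfl, Or.inl rfl⟩ hjU (Or.inr haj) (fun h => by have := h.1; tauto) (by
            intro z hz hzf hzH
            have hzH' : ¬ (z = a ∨ z = b ∨ z = c ∨ z = d) := fun e => hzH ⟨e, hzf⟩
            push Not at hzH'
            exact hjmin z ⟨hz, hzf.resolve_left hzH'.1, hzH'.2⟩)
        have hjE : j ∈ U.erase a := Finset.mem_erase.2 ⟨hja, hjU⟩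
        obtain ⟨m', hm'⟩ := exists_isFirst f ⟨j, hjE⟩
        have hnext : ∀ v ∈ U.erase a, Front G a v → Front G m' v := fun v hv h =>
          Front.next hf hm (Finset.erase_subset _ _) (by simp) hm' hv h
        have hj' := hnext j hjE (Or.inr haj)
        refine Linked.erase_cons ha haj (ih _ (Finset.erase_ssubset ha) j b c d m' hjE hbE hcE hdE
          hjb hjc hjd hbc hbd hcd hm' (Or.inl hj') (hc'.mono ?_))
        rintro v (rfl | ⟨⟨hv, hvf⟩, hva⟩)
        · exact ⟨Or.inl rfl, hj'⟩
        · have hva' : v ≠ a := hva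
          have hvE : v ∈ U.erase a := by
            rcases hv with rfl | rfl | rfl | rfl
            · exact absurd rfl hva'
            all_goals assumption
          exact ⟨Or.inr (hv.resolve_left hva'), hnext v hvE hvf⟩
      · have hno : ∀ v ∈ U, G.Adj a v → v = b ∨ v = c ∨ v = d := by
          intro v hv hav
          by_contra hvt
          push Not at hvt
          exact hex ⟨v, by simp [hv, hav, hvt]⟩
        -- The neighbours of `a` are among `b`, `c`, `d`; a missing one would
        -- leave a cut of size two.
        have hall : ∀ v, v = b ∨ v = c ∨ v = d → G.Adj a v := by
          intro v hv
          have hvU : v ∈ U := by rcases hv with rfl | rfl | rfl <;> assumption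
          have hva : v ≠ a := by rcases hv with rfl | rfl | rfl <;> exact Ne.symm ‹_›
          by_contra hna
          have hsub : ({b, c, d} : Finset V) ⊆ U := by
            intro w; simp only [Finset.mem_insert, Finset.mem_singleton]
            rintro (rfl | rfl | rfl) <;> assumption
          have := hc.two_add_le hm hvU (fun h => h.elim hva hna)
            (N := ({b, c, d} : Finset V).erase v) ((Finset.erase_subset _ _).trans hsub)
            (fun w hw haw => Finset.mem_erase.2 ⟨fun e => hna (e ▸ haw), by
              simpa using hno w hw haw⟩) (by simp [hab, hac, had]) (by simp)
          rw [Finset.card_erase_of_mem (by simpa using hv)] at this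
          have h3 : ({b, c, d} : Finset V).card ≤ 3 := Finset.card_le_three
          omega
        exact linked_of_front_subset hf hm hb hcU hd hbc hbd hcd (hall b (by simp))
          (hall c (by simp)) (hall d (by simp)) hno hc
    · -- Extend the path at the earliest front terminal `a` by the first vertex.
      have hmne : ∀ v, v = b ∨ v = c ∨ v = d → m ≠ v := by
        rintro v hv rfl
        exact absurd (hmin m hv (Or.inl rfl)) (not_le.2 (hm.lt hf ha ham))
      have hc' := hc.replace_by_first
        (H := {v | (v = a ∨ v = b ∨ v = c ∨ v = d) ∧ Front G m v}) hf hm (h := a)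
        (by
          rintro v ⟨hv, h⟩
          refine ⟨?_, h⟩
          rcases hv with rfl | rfl | rfl | rfl <;> assumption)
        (fun h => h.1.elim (fun e => ham e.symm) fun e => hmne m e rfl) ⟨Or.inl rfl, hfa⟩
        (by
          rintro v ⟨rfl | hv, h⟩
          · exact le_rfl
          · exact hmin v hv h)
      have hmE : m ∈ U.erase a := Finset.mem_erase.2 ⟨fun e => ham e.symm, hm.1⟩
      refine Linked.erase_cons ha (hfa.resolve_left ham).symm
        (ih _ (Finset.erase_ssubset ha) m b c d m hmE hbE hcE hdE (hmne b (by simp))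
          (hmne c (by simp)) (hmne d (by simp)) hbc hbd hcd
          ⟨hmE, fun v hv => hm.2 v (Finset.mem_of_mem_erase hv)⟩ (Or.inl (Or.inl rfl))
          (hc'.mono ?_))
      rintro v (rfl | ⟨⟨hv, hvf⟩, hva⟩)
      · exact ⟨Or.inl rfl, Or.inl rfl⟩
      · exact ⟨Or.inr (hv.resolve_left hva), hvf⟩
  -- By symmetry the earliest terminal in the front may be called `a`.
  classical
  obtain ⟨y, hy, hymin⟩ := Finset.exists_min_image
    (({a, b, c, d} : Finset V).filter fun v => Front G m v) f (by
      rcases hfr with h | h | h | h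
      exacts [⟨a, by simp [h]⟩, ⟨b, by simp [h]⟩, ⟨c, by simp [h]⟩, ⟨d, by simp [h]⟩])
  simp only [Finset.mem_filter, Finset.mem_insert, Finset.mem_singleton] at hy hymin
  rcases hy with ⟨rfl | rfl | rfl | rfl, hyf⟩
  · exact key y b c d ha hb hcU hd hab hac had hbc hbd hcd hyf
      (fun v hv h => hymin v ⟨by tauto, h⟩) hc
  · exact (key y a c d hb ha hcU hd hab.symm hbc hbd hac had hcd hyf
      (fun v hv h => hymin v ⟨by tauto, h⟩)
      (hc.mono fun v hv => ⟨by have := hv.1; tauto, hv.2⟩)).swap_left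
  · exact (key y d a b hcU hd ha hb hcd hac.symm hbc.symm had.symm hbd.symm hab hyf
      (fun v hv h => hymin v ⟨by tauto, h⟩)
      (hc.mono fun v hv => ⟨by have := hv.1; tauto, hv.2⟩)).symm
  · exact (key y c a b hd hcU ha hb hcd.symm had.symm hbd.symm hac.symm hbc.symm hab hyf
      (fun v hv h => hymin v ⟨by tauto, h⟩)
      (hc.mono fun v hv => ⟨by have := hv.1; tauto, hv.2⟩)).swap_left.symm

/-! ### Hamilton-connectedness -/

/-- When no end is in the front, two neighbours `j₁`, `j₂` of the first vertex `m` can be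
linked to the two ends in `G[U] - m`, and `m` joins the two paths. -/
theorem exists_HP {G : SimpleGraph V} {f : V → α} (hf : Ordered G f) {U : Finset V} {s t : V}
    (hs : s ∈ U) (ht : t ∈ U) (hst : s ≠ t) (hc : Cond G f 0 U ∅) : HP G U s t := by
  classical
  obtain ⟨m, hm⟩ := exists_isFirst f ⟨s, hs⟩
  by_cases hfr : Front G m s ∨ Front G m t
  · exact exists_HP_of_front hf U s t m hs ht hst hm hfr (hc.mono (Set.empty_subset _))
  push Not at hfr
  obtain ⟨hsf, htf⟩ := hfr
  set N := U.filter fun v => G.Adj m v with hN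
  have hNc : 2 + 0 ≤ N.card := hc.two_add_le hm hs hsf (Finset.filter_subset _ _)
    (fun w hw ha => by simp [hN, hw, ha]) (by simp [hN]) (by
      simp only [hN, Finset.mem_filter, not_and]
      exact fun _ h => hsf (Or.inr h))
  obtain ⟨j₁, hj₁, hmin₁⟩ := Finset.exists_min_image N f (Finset.card_pos.1 (by omega))
  obtain ⟨j₂, hj₂, hmin₂⟩ := Finset.exists_min_image (N.erase j₁) f
    (Finset.card_pos.1 (by rw [Finset.card_erase_of_mem hj₁]; omega))
  simp only [hN, Finset.mem_erase, Finset.mem_filter] at hj₁ hj₂ hmin₁ hmin₂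
  obtain ⟨hj₁U, hmj₁⟩ := hj₁
  obtain ⟨hj₂₁, hj₂U, hmj₂⟩ := hj₂
  have hE : ∀ v ∈ U, v ≠ m → v ∈ U.erase m := fun v hv h => Finset.mem_erase.2 ⟨h, hv⟩
  have hj₁E := hE j₁ hj₁U hmj₁.ne'
  have hj₂E := hE j₂ hj₂U hmj₂.ne'
  have hc' : Cond G f 1 (U.erase m) {j₁, j₂} := by
    intro S hS h2
    have hmS : m ∉ S := fun hx => by simpa using hS hx
    have hSU : S ⊆ U := hS.trans (Finset.erase_subset _ _)
    set W := U.erase m \ S with hW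
    have hWU : W ⊆ U := Finset.sdiff_subset.trans (Finset.erase_subset _ _)
    have hmW : m ∉ W := by simp [hW]
    have hle := cnt_le_insert_first hf hm hWU hmW
    have e1 : U \ S = insert m W := by
      ext v
      by_cases hv : v = m
      · subst hv; simp [hm.1, hmS]
      · simp [hW, hv]
    have h1 := (hc S hSU (by rw [e1]; omega)).2 (Set.empty_subset _)
    rw [e1] at h1
    refine ⟨by omega, fun hH' => ?_⟩
    have hj₁S : j₁ ∈ S := hH' (by simp)
    have hj₂S : j₂ ∈ S := hH' (by simp)
    by_cases hz : ∃ z ∈ W, G.Adj m z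
    · -- A neighbour `z` outside `S` dominates `j₁` and `j₂`, which may return to the graph.
      obtain ⟨z, hzW, ha⟩ := hz
      have hzS : z ∉ S := (Finset.mem_sdiff.1 hzW).2
      have hz₁ : z ≠ j₁ := fun e => hzS (e ▸ hj₁S)
      have hz₂ : z ≠ j₂ := fun e => hzS (e ▸ hj₂S)
      have hlt₁ : f j₁ < f z := lt_of_le_of_ne (hmin₁ z ⟨hWU hzW, ha⟩)
        fun e => hz₁ (hf.1 e).symm
      have hlt₂ : f j₂ < f z := lt_of_le_of_ne (hmin₂ z ⟨hz₁, hWU hzW, ha⟩)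
        fun e => hz₂ (hf.1 e).symm
      have e3 := cnt_insert_front hf hm hWU hj₂U hzW (Or.inr hmj₂) (Or.inr ha) hlt₂
      have e4 := cnt_insert_front hf hm (Finset.insert_subset hj₂U hWU) hj₁U
        (Finset.mem_insert_of_mem hzW) (Or.inr hmj₁) (Or.inr ha) hlt₁
      have e2 : U \ insert m ((S.erase j₁).erase j₂) = insert j₁ (insert j₂ W) := by
        ext v
        by_cases hv : v = j₁
        · subst hv; simp [hj₁U, hmj₁.ne']
        by_cases hv : v = j₂
        · subst hv; simp [hj₂U, hmj₂.ne']
        simp [*]; tauto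
      have h3 := (hc (insert m ((S.erase j₁).erase j₂)) (Finset.insert_subset hm.1
        (((Finset.erase_subset _ _).trans (Finset.erase_subset _ _)).trans hSU))
        (by rw [e2, e4, e3]; exact h2)).2 (Set.empty_subset _)
      rw [e2, e4, e3, Finset.card_insert_of_notMem (by simp [hmS]),
        Finset.card_erase_add_one (by simp [hj₂S, hj₂₁])] at h3
      have := Finset.card_erase_add_one hj₁S
      omega
    · push Not at hz
      rw [cnt_insert_iso hmW hz] at h1
      omega
  obtain ⟨m', hm'⟩ := exists_isFirst f ⟨j₁, hj₁E⟩
  have hnext : ∀ v ∈ U.erase m, Front G m v → Front G m' v := fun v hv h =>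
    Front.next hf hm (Finset.erase_subset _ _) (by simp) hm' hv h
  have f₁ := hnext j₁ hj₁E (Or.inr hmj₁)
  have f₂ := hnext j₂ hj₂E (Or.inr hmj₂)
  have hL : Linked G (U.erase m) j₁ j₂ s t := by
    refine linked_of_front hf (U.erase m) j₁ j₂ s t m' hj₁E hj₂E
      (hE s hs fun e => hsf (Or.inl e)) (hE t ht fun e => htf (Or.inl e)) hj₂₁.symm
      ?_ ?_ ?_ ?_ hst hm' (Or.inl f₁) (hc'.mono ?_)
    · rintro rfl; exact hsf (Or.inr hmj₁)
    · rintro rfl; exact htf (Or.inr hmj₁)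
    · rintro rfl; exact hsf (Or.inr hmj₂)
    · rintro rfl; exact htf (Or.inr hmj₂)
    · rintro v (rfl | rfl)
      · exact ⟨Or.inl rfl, f₁⟩
      · exact ⟨Or.inr (Or.inl rfl), f₂⟩
  have glue : ∀ {U₁ U₂ : Finset V} {j j' : V}, Disjoint U₁ U₂ → U₁ ∪ U₂ = U.erase m →
      HP G U₁ j s → HP G U₂ j' t → G.Adj m j → G.Adj m j' → HP G U s t := by
    intro U₁ U₂ j j' hd hU h₁ h₂ a₁ a₂
    have hm₁ : m ∉ U₁ := fun h => by simpa [← hU, h] using Finset.notMem_erase m U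
    have hm₂ : m ∉ U₂ := fun h => by simpa [← hU, h] using Finset.notMem_erase m U
    have := h₁.symm.append (HP.cons hm₂ a₂ h₂) a₁.symm (Finset.disjoint_insert_right.2 ⟨hm₁, hd⟩)
    rwa [Finset.union_insert, hU, Finset.insert_erase hm.1] at this
  obtain ⟨U₁, U₂, hd, hU, ⟨h₁, h₂⟩ | ⟨h₁, h₂⟩⟩ := hL
  · exact glue hd hU h₁ h₂ hmj₁ hmj₂
  · exact glue hd.symm (by rw [Finset.union_comm, hU]) h₂ h₁ hmj₂ hmj₁

/-- Sorting an interval graph by right endpoints, with ties broken arbitrarily. -/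
theorem exists_ordered {V : Type} [Fintype V] {G : SimpleGraph V} (hG : IsIntervalGraph G) :
    ∃ f : V → ℝ ×ₗ Fin (Fintype.card V), Ordered G f := by
  obtain ⟨l, r, hlr, hadj⟩ := hG
  refine ⟨fun v => toLex (r v, Fintype.equivFin V v), ?_, ?_⟩
  · intro u v h
    have := congrArg (fun x => (ofLex x).2) h
    simpa using this
  · intro u v w huv hvw ha
    have hne : v ≠ w := by rintro rfl; exact lt_irrefl _ hvw
    have hr : ∀ x y : V, toLex (r x, Fintype.equivFin V x) < toLex (r y, Fintype.equivFin V y) →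
        r x ≤ r y := by
      intro x y h
      rcases Prod.Lex.toLex_lt_toLex.1 h with h | h
      · exact h.le
      · exact h.1.le
    obtain ⟨p, hp, hp'⟩ := (hadj u w ha.ne).1 ha
    refine (hadj v w hne).2 ⟨r v, ⟨hlr v, le_rfl⟩, ?_, hr _ _ hvw⟩
    exact hp'.1.trans (hp.2.trans (hr _ _ huv))

theorem kHamiltonConnected_of_scatAtMost [Fintype V] {G : SimpleGraph V} (hG : IsIntervalGraph G)
    {k : ℕ} (h : ScatAtMost G (-(k + 1 : ℤ))) : KHamiltonConnected G k := by
  obtain ⟨f, hf⟩ := exists_ordered hG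
  intro S₀ hS₀ s t hst
  have hmem : ∀ v, v ∈ S₀ᶜ ↔ v ∈ ((↑S₀ : Set V)ᶜ) := by simp
  have hc : Cond G f 0 S₀ᶜ ∅ := by
    intro S _ h2
    have e : S₀ᶜ \ S = (S₀ ∪ S)ᶜ := by ext v; simp
    rw [e] at h2 ⊢
    have hle := cnt_compl_le_numCompDel hf (S₀ ∪ S)
    have h1 := h (S₀ ∪ S) (by omega)
    have h3 := Finset.card_union_le S₀ S
    have : cnt G f (S₀ ∪ S)ᶜ + 0 + 1 ≤ S.card := by omega
    exact ⟨by omega, fun _ => this⟩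
  exact (exists_HP hf ((hmem s).2 s.2) ((hmem t).2 t.2) (fun e => hst (Subtype.ext e))
    hc).exists_isHamiltonian hmem s.2 t.2

end IntervalHam

/-- For a finite interval graph `G` with at least `k + 3` vertices (`k ≥ 0`), `G` is
`k`-Hamilton-connected iff the scattering number of `G` is at most `-(k+1)`. -/
theorem kHamiltonConnected_iff_scatAtMost {V : Type} [Fintype V] [DecidableEq V]
    (G : SimpleGraph V) (hG : IsIntervalGraph G) (k : ℕ)
    (hcard : k + 3 ≤ Fintype.card V) :
    KHamiltonConnected G k ↔ ScatAtMost G (-(k + 1 : ℤ)) :=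
  ⟨IntervalHam.scatAtMost_of_kHamiltonConnected hcard,
    IntervalHam.kHamiltonConnected_of_scatAtMost hG⟩
end

section
/- Let G be a finite interval graph with interval representation (I_v), and let u, w be distinct vertices with I_u = [a,a] and I_w = [b,b], where a ≤ ℓ(v) for every vertex v and b ≥ r(v) for every vertex v. Then for every integer p ≥ 1, G contains a spanning p-stave between u and w if and only if the scattering number of G is at most 2 − p (where for complete G, with scat(G) = −∞, the scattering-number condition is interpreted as always satisfied). -/
/-!
Adjacency of intervals means `l x ≤ r y ∧ l y ≤ r x`. Both directions work with *cuts*: a cut at `x`,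
placed just right of `x`, crosses the intervals with `l v ≤ x < r v`; deleting the intervals crossed
by a set of cuts separates the graph along the gaps between the cuts.

*From a stave to the scattering bound* (`scatAtMost_of_stave`). Given `S` with at least two
components, let `X` be the set of right endpoints below `b` that cross nothing outside `S`. Distinct
components of `G - S` lie in distinct gaps of `X`, every interval crossed by `X` is in `S`, and `X`
crosses neither `u` nor `w`, which lie in different gaps. A path with `h` crossed vertices visits at
most `h + 1` gaps, hence at most `h - 1` besides those of `u` and `w`. Summing over the `p` paths,
the number of components is at most `2 + |S| - p`.

*From the scattering bound to a stave* (`stave_of_scatAtMost`). The paths are built greedily from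
left to right: among the `p` current path ends the one with the smallest right endpoint is continued
by its unused neighbour with the smallest right endpoint. The invariant `CutCond` says that any
cuts `x₁ < ⋯ < xₘ < b` cross at least `p` plus (number of gaps between consecutive cuts containing
an unused interval) of the path ends and unused intervals, where path ends are regarded as extending
arbitrarily far to the left. Initially it is the scattering bound (`cutCond_of_scatAtMost`), each
greedy step preserves it (`CutCond.step`), and the single cut at the right endpoint of the chosen
path end shows that a continuation exists unless that end already reaches `b`, that is, `w`
(`exists_lists`).
-/

open SimpleGraph

/-- A spanning `p`-stave between `u` and `w`: `p` internally vertex-disjoint paths from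
`u` to `w` whose vertex sets together cover all vertices of the graph. -/
def HasSpanningStave {V : Type} (G : SimpleGraph V) (u w : V) (p : ℕ) : Prop :=
  ∃ P : Fin p → G.Walk u w,
    (∀ i, (P i).IsPath) ∧
    (∀ i j, i ≠ j → ∀ v, v ∈ (P i).support → v ∈ (P j).support → v = u ∨ v = w) ∧
    (∀ v, ∃ i, v ∈ (P i).support)

section StaveProof

/-! ### The greedy construction -/

variable {V : Type}

/-- The number of paths (indexed by `Fin p`, with current ends `t`) whose end interval reaches beyond
the cut at `x`. Left endpoints are ignored: an end counts as extending arbitrarily far left. -/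
noncomputable def tipCount {p : ℕ} (r : V → ℝ) (t : Fin p → V) (x : ℝ) : ℕ :=
  (Finset.univ.filter fun i => x < r (t i)).card

/-- The number of free intervals crossed by the cut at `x`. A cut at `x` sits infinitesimally to the
right of `x`, so it crosses `v` iff `l v ≤ x < r v`. -/
noncomputable def hitCount (l r : V → ℝ) (F : Finset V) (x : ℝ) : ℕ :=
  (F.filter fun v => l v ≤ x ∧ x < r v).card

open Classical in
/-- The contribution of the next cut `y` after a cut `x`: the number of free intervals crossed by `y`
that start after `x`, minus one if some free interval lies strictly between the two cuts. -/
noncomputable def cutWeight (l r : V → ℝ) (F : Finset V) (x y : ℝ) : ℤ :=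
  ((F.filter fun v => x < l v ∧ l v ≤ y ∧ y < r v).card : ℤ) -
    (if ∃ v ∈ F, x < l v ∧ r v ≤ y then 1 else 0)

/-- `CutChain l r b F x k`: there are cuts `x = x₁ < ⋯ < xₘ < b` whose successive weights sum to `k`. -/
inductive CutChain (l r : V → ℝ) (b : ℝ) (F : Finset V) : ℝ → ℤ → Prop
  | single {x : ℝ} : x < b → CutChain l r b F x 0
  | cons {x y : ℝ} {k : ℤ} : x < b → x < y → CutChain l r b F y k →
      CutChain l r b F x (cutWeight l r F x y + k)

theorem CutChain.lt {l r : V → ℝ} {b : ℝ} {F : Finset V} {x : ℝ} {k : ℤ}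
    (h : CutChain l r b F x k) : x < b := by
  cases h <;> assumption

theorem hitCount_add_new (l r : V → ℝ) (F : Finset V) (x y : ℝ) :
    hitCount l r F x + (F.filter fun v => x < l v ∧ l v ≤ y ∧ y < r v).card =
      (F.filter fun v => (l v ≤ x ∧ x < r v) ∨ (x < l v ∧ l v ≤ y ∧ y < r v)).card := by
  classical
  rw [hitCount, Finset.filter_or, Finset.card_union_of_disjoint]
  rw [Finset.disjoint_filter]
  intro v _ h1 h2
  linarith [h1.1, h2.1]

theorem cutWeight_erase [DecidableEq V] {l r : V → ℝ} {F : Finset V} {v : V} {x y : ℝ}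
    (h : l v ≤ x) : cutWeight l r (F.erase v) x y = cutWeight l r F x y := by
  unfold cutWeight
  have h1 : (F.erase v).filter (fun z => x < l z ∧ l z ≤ y ∧ y < r z) =
      F.filter (fun z => x < l z ∧ l z ≤ y ∧ y < r z) := by
    ext z
    simp only [Finset.mem_filter, Finset.mem_erase]
    constructor
    · rintro ⟨⟨_, h2⟩, h3⟩; exact ⟨h2, h3⟩
    · rintro ⟨h2, h3⟩
      refine ⟨⟨?_, h2⟩, h3⟩
      rintro rfl; linarith [h3.1]
  have h2 : (∃ z ∈ F.erase v, x < l z ∧ r z ≤ y) ↔ (∃ z ∈ F, x < l z ∧ r z ≤ y) := by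
    constructor
    · rintro ⟨z, hz, h3⟩; exact ⟨z, Finset.mem_of_mem_erase hz, h3⟩
    · rintro ⟨z, hz, h3⟩
      refine ⟨z, Finset.mem_erase.2 ⟨?_, hz⟩, h3⟩
      rintro rfl; linarith [h3.1]
  rw [h1]
  simp only [h2]

theorem CutChain.of_erase [DecidableEq V] {l r : V → ℝ} {b : ℝ} {F : Finset V} {v : V} {x : ℝ}
    {k : ℤ} (h : CutChain l r b (F.erase v) x k) (hv : l v ≤ x) : CutChain l r b F x k := by
  induction h with
  | single hx => exact .single hx
  | cons hx hxy _ ih =>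
    rw [cutWeight_erase hv]
    exact .cons hx hxy (ih (by linarith))

theorem tipCount_le {p : ℕ} (r : V → ℝ) (t : Fin p → V) (x : ℝ) : tipCount r t x ≤ p := by
  simpa [tipCount] using Finset.card_filter_le (Finset.univ : Finset (Fin p)) (fun i => x < r (t i))

theorem tipCount_lt {p : ℕ} {r : V → ℝ} {t : Fin p → V} {x : ℝ} (i : Fin p) (h : r (t i) ≤ x) :
    tipCount r t x + 1 ≤ p := by
  have : tipCount r t x < (Finset.univ : Finset (Fin p)).card := by
    apply Finset.card_lt_card
    rw [Finset.filter_ssubset]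
    exact ⟨i, Finset.mem_univ _, by simpa using h⟩
  simpa using this

theorem tipCount_eq {p : ℕ} {r : V → ℝ} {t : Fin p → V} {x : ℝ} (h : ∀ i, x < r (t i)) :
    tipCount r t x = p := by
  simp [tipCount, h]

theorem tipCount_ge {p : ℕ} {r : V → ℝ} {t : Fin p → V} {x : ℝ} (j : Fin p)
    (h : ∀ i, i ≠ j → x < r (t i)) : p ≤ tipCount r t x + 1 := by
  have : (Finset.univ.erase j : Finset (Fin p)).card ≤ tipCount r t x := by
    apply Finset.card_le_card
    intro i hi
    simpa using h i (by simpa using hi)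
  rw [Finset.card_erase_of_mem (Finset.mem_univ _)] at this
  simp at this
  omega

/-- The invariant of the greedy construction. Unwinding the weights, it says that for all cuts
`x₁ < ⋯ < xₘ < b`, the number of intervals (path ends and free ones) crossed by the cuts is at least
`p` plus the number of gaps between consecutive cuts that contain a free interval. -/
def CutCond {p : ℕ} (l r : V → ℝ) (b : ℝ) (t : Fin p → V) (F : Finset V) : Prop :=
  ∀ x k, CutChain l r b F x k → (p : ℤ) ≤ tipCount r t x + hitCount l r F x + k

/-- Replacing the end `t i` by the free interval `v` loses nothing at cuts to the right of `t i`. -/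
theorem count_step_right [DecidableEq V] {p : ℕ} {l r : V → ℝ} {t : Fin p → V} {F : Finset V}
    {i : Fin p} {v : V} {x : ℝ} (hx : r (t i) ≤ x) :
    tipCount r t x + hitCount l r F x ≤
      tipCount r (Function.update t i v) x + hitCount l r (F.erase v) x := by
  by_cases hxv : x < r v
  · have h1 : hitCount l r F x ≤ hitCount l r (F.erase v) x + 1 := by
      unfold hitCount
      rw [Finset.filter_erase]
      exact tsub_le_iff_right.1 Finset.pred_card_le_card_erase
    have h2 : tipCount r t x + 1 ≤ tipCount r (Function.update t i v) x := by
      unfold tipCount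
      rw [← Finset.card_insert_of_notMem (a := i) (by simpa using hx)]
      apply Finset.card_le_card
      intro j hj
      by_cases hji : j = i
      · subst hji; simpa using hxv
      · simpa [hji] using hj
    omega
  · have h1 : hitCount l r F x ≤ hitCount l r (F.erase v) x := by
      unfold hitCount
      rw [Finset.filter_erase, Finset.erase_eq_of_notMem]
      simp [hxv]
    have h2 : tipCount r t x ≤ tipCount r (Function.update t i v) x := by
      unfold tipCount
      apply Finset.card_le_card
      intro j hj
      by_cases hji : j = i
      · subst hji
        simp at hj; linarith
      · simpa [hji] using hj
    omega

/-- One greedy step preserves the invariant: the path whose end `t i` finishes first is continued by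
its free neighbour `v` that finishes first. -/
theorem CutCond.step [DecidableEq V] {p : ℕ} {l r : V → ℝ} {b α : ℝ} {t : Fin p → V}
    {F : Finset V} (hC : CutCond l r b t F) (hF : ∀ z ∈ F, α < l z ∧ l z ≤ r z)
    {i : Fin p} (hi : ∀ j, r (t i) ≤ r (t j)) {v : V} (hv : v ∈ F)
    (hvl : l v ≤ r (t i)) (hmin : ∀ z ∈ F, l z ≤ r (t i) → r v ≤ r z) :
    CutCond l r b (Function.update t i v) (F.erase v) := by
  -- To the right of `r (t i)` the weights do not see the step.
  have hright : ∀ x k, r (t i) ≤ x → CutChain l r b (F.erase v) x k →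
      (p : ℤ) ≤ tipCount r (Function.update t i v) x + hitCount l r (F.erase v) x + k := by
    intro x k hx hk
    have h1 := hC x k (hk.of_erase (hvl.trans hx))
    have h2 := count_step_right (p := p) (l := l) (t := t) (F := F) (v := v) hx
    zify at h2
    linarith
  -- If `v` ends before `x`, the old invariant has slack at `x`: prepend the cut `α`, which only
  -- crosses path ends, all of which already cross `x`, and `v` lies between `α` and `x`.
  have hleft : ∀ x k, x < r (t i) → r v ≤ x → CutChain l r b (F.erase v) x k →
      (p : ℤ) ≤ tipCount r (Function.update t i v) x + hitCount l r (F.erase v) x + k := by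
    intro x k hx hvx hk
    have hαx : α < x := by linarith [(hF v hv).1, (hF v hv).2]
    have h1 := hC α _ (.cons (hαx.trans hk.lt) hαx (hk.of_erase (by linarith [(hF v hv).2])))
    have h2 : hitCount l r F α = 0 := by
      unfold hitCount
      rw [Finset.card_eq_zero, Finset.filter_eq_empty_iff]
      intro z hz h
      linarith [(hF z hz).1, h.1]
    have h3 : tipCount r t α ≤ p := tipCount_le _ _ _
    have h4 : cutWeight l r F α x = (hitCount l r F x : ℤ) - 1 := by
      unfold cutWeight hitCount
      rw [if_pos ⟨v, hv, (hF v hv).1, hvx⟩]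
      congr 3
      apply Finset.filter_congr
      intro z hz
      simp [(hF z hz).1]
    have h5 : hitCount l r (F.erase v) x = hitCount l r F x := by
      unfold hitCount
      rw [Finset.filter_erase, Finset.erase_eq_of_notMem]
      simp [hvx]
    have h6 : p ≤ tipCount r (Function.update t i v) x + 1 := by
      apply tipCount_ge i
      intro j hj
      simpa [hj] using hx.trans_le (hi j)
    rw [h4, h2] at h1
    rw [h5]
    push_cast at h1
    omega
  intro x k hk
  induction hk with
  | @single x hx =>
    rcases le_or_gt (r (t i)) x with h | h
    · exact hright _ _ h (.single hx)
    rcases le_or_gt (r v) x with h' | h'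
    · exact hleft _ _ h h' (.single hx)
    rw [tipCount_eq]
    · omega
    · intro j
      by_cases hj : j = i
      · subst hj; simpa using h'
      · simpa [hj] using h.trans_le (hi j)
  | @cons x y k hx hxy hk ih =>
    rcases le_or_gt (r (t i)) x with h | h
    · exact hright _ _ h (.cons hx hxy hk)
    rcases le_or_gt (r v) x with h' | h'
    · exact hleft _ _ h h' (.cons hx hxy hk)
    have htx : tipCount r (Function.update t i v) x = p := by
      apply tipCount_eq
      intro j
      by_cases hj : j = i
      · subst hj; simpa using h'
      · simpa [hj] using h.trans_le (hi j)
    have hU := hitCount_add_new l r (F.erase v) x y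
    have hmono : hitCount l r (F.erase v) y ≤ ((F.erase v).filter fun v =>
        (l v ≤ x ∧ x < r v) ∨ (x < l v ∧ l v ≤ y ∧ y < r v)).card := by
      apply Finset.card_le_card
      intro z hz
      simp only [Finset.mem_filter] at hz ⊢
      refine ⟨hz.1, ?_⟩
      rcases le_or_gt (l z) x with h1 | h1
      · exact Or.inl ⟨h1, hxy.trans hz.2.2⟩
      · exact Or.inr ⟨h1, hz.2⟩
    have hty : tipCount r (Function.update t i v) y ≤ p := tipCount_le _ _ _
    rw [htx]
    rcases le_or_gt (r v) y with hvy | hvy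
    -- Here `v` crosses `x` but not `y`, which pays for a free interval between `x` and `y`.
    · have : tipCount r (Function.update t i v) y + 1 ≤ p := tipCount_lt i (by simpa using hvy)
      unfold cutWeight
      split_ifs <;> omega
    · by_cases hreg : ∃ z ∈ F.erase v, x < l z ∧ r z ≤ y
      -- Minimality of `r v` puts every free interval between `x` and `y` beyond `r (t i)`, so the
      -- cut `x` may be moved right to `r (t i)` without increasing the count.
      · obtain ⟨z, hz, hxz, hzy⟩ := hreg
        have hzF := Finset.mem_of_mem_erase hz
        have hz1 : r (t i) < l z := by
          by_contra hcon
          linarith [hmin z hzF (not_lt.1 hcon)]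
        have hqy : r (t i) < y := by linarith [(hF z hzF).2]
        have hq := hright (r (t i)) _ le_rfl (.cons (hqy.trans hk.lt) hqy hk)
        have hU' := hitCount_add_new l r (F.erase v) (r (t i)) y
        have hle : ((F.erase v).filter fun v =>
            (l v ≤ r (t i) ∧ r (t i) < r v) ∨ (r (t i) < l v ∧ l v ≤ y ∧ y < r v)).card ≤
            ((F.erase v).filter fun v =>
            (l v ≤ x ∧ x < r v) ∨ (x < l v ∧ l v ≤ y ∧ y < r v)).card := by
          apply Finset.card_le_card
          intro c hc
          simp only [Finset.mem_filter] at hc ⊢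
          refine ⟨hc.1, ?_⟩
          rcases hc.2 with h1 | h1
          · have := hmin c (Finset.mem_of_mem_erase hc.1) h1.1
            rcases le_or_gt (l c) x with h2 | h2
            · exact Or.inl ⟨h2, by linarith⟩
            · exact Or.inr ⟨h2, by linarith, by linarith⟩
          · exact Or.inr ⟨h.trans h1.1, h1.2⟩
        have htq : tipCount r (Function.update t i v) (r (t i)) ≤ p := tipCount_le _ _ _
        unfold cutWeight at hq ⊢
        rw [if_pos ⟨z, hz, hz1, hzy⟩] at hq
        rw [if_pos ⟨z, hz, hxz, hzy⟩]
        omega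
      · unfold cutWeight
        rw [if_neg hreg]
        omega

/-- Under the invariant, the paths with current ends `t` can be continued to `w` through disjoint
lists that together exhaust the free intervals. The hypothesis `l (t i) ≤ r z` records that the
left endpoint of a current end never obstructs adjacency to a free interval. -/
theorem exists_lists [DecidableEq V] {p : ℕ} (hp : 1 ≤ p) (G : SimpleGraph V) (l r : V → ℝ)
    (b α : ℝ) (w : V) (hadj : ∀ x y, x ≠ y → l x ≤ r y → l y ≤ r x → G.Adj x y)
    (hwl : l w = b) (hwr : r w = b) (n : ℕ) : ∀ (t : Fin p → V) (F : Finset V), F.card = n →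
    CutCond l r b t F → (∀ z ∈ F, α < l z ∧ l z ≤ r z ∧ r z ≤ b) → w ∉ F →
    (∀ i, t i ∉ F ∧ t i ≠ w ∧ l (t i) ≤ b) → (∀ i, ∀ z ∈ F, l (t i) ≤ r z) →
    ∃ L : Fin p → List V, (∀ i, (t i :: (L i ++ [w])).IsChain G.Adj) ∧ (∀ i, (L i).Nodup) ∧
      (∀ i j, i ≠ j → ∀ z, z ∈ L i → z ∉ L j) ∧ (∀ z, z ∈ F ↔ ∃ i, z ∈ L i) := by
  induction n with
  | zero =>
    intro t F hF hC _ hw ht _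
    obtain rfl := Finset.card_eq_zero.1 hF
    refine ⟨fun _ => [], ?_, by simp, by simp, by simp⟩
    intro i
    have : b ≤ r (t i) := by
      by_contra hcon
      have h1 := hC (r (t i)) 0 (.single (not_le.1 hcon))
      have h2 : tipCount r t (r (t i)) + 1 ≤ p := tipCount_lt i le_rfl
      simp [hitCount] at h1
      omega
    simp only [List.nil_append, List.isChain_cons_cons, List.isChain_singleton, and_true]
    exact hadj _ _ (ht i).2.1 (by rw [hwr]; exact (ht i).2.2) (by rw [hwl]; exact this)
  | succ n ih =>
    intro t F hcard hC hF hw ht hlt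
    have : Nonempty (Fin p) := ⟨⟨0, hp⟩⟩
    obtain ⟨i, hi⟩ := Finite.exists_min fun j => r (t j)
    have hne : (F.filter fun z => l z ≤ r (t i)).Nonempty := by
      by_contra hcon
      rw [Finset.not_nonempty_iff_eq_empty, Finset.filter_eq_empty_iff] at hcon
      rcases lt_or_ge (r (t i)) b with hb | hb
      · have h1 := hC (r (t i)) 0 (.single hb)
        have h2 : tipCount r t (r (t i)) + 1 ≤ p := tipCount_lt i le_rfl
        have h3 : hitCount l r F (r (t i)) = 0 := by
          unfold hitCount
          rw [Finset.card_eq_zero, Finset.filter_eq_empty_iff]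
          exact fun z hz h => hcon hz h.1
        omega
      · obtain ⟨z, hz⟩ := Finset.card_pos.1 (by omega : 0 < F.card)
        have := hF z hz
        exact hcon hz (by linarith)
    obtain ⟨v, hv, hmin⟩ := Finset.exists_min_image _ r hne
    simp only [Finset.mem_filter] at hv hmin
    have hmin' : ∀ z ∈ F, l z ≤ r (t i) → r v ≤ r z := fun z h1 h2 => hmin z ⟨h1, h2⟩
    have hvF := hF v hv.1
    obtain ⟨L, hL1, hL2, hL3, hL4⟩ := ih (Function.update t i v) (F.erase v)
      (by rw [Finset.card_erase_of_mem hv.1, hcard]; rfl)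
      (hC.step (fun z hz => ⟨(hF z hz).1, (hF z hz).2.1⟩) hi hv.1 hv.2 hmin')
      (fun z hz => hF z (Finset.mem_of_mem_erase hz))
      (fun h => hw (Finset.mem_of_mem_erase h))
      (by
        intro j
        by_cases hj : j = i
        · subst hj
          simp only [Function.update_self]
          exact ⟨Finset.notMem_erase _ _, fun h => hw (h ▸ hv.1), by linarith⟩
        · simp only [Function.update_of_ne hj]
          exact ⟨fun h => (ht j).1 (Finset.mem_of_mem_erase h), (ht j).2⟩)
      (by
        intro j z hz
        have hz' := Finset.mem_of_mem_erase hz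
        by_cases hj : j = i
        · subst hj
          simp only [Function.update_self]
          -- Either `z` was a candidate for the step, so ends after `v`, or it starts after `t j` ends.
          rcases le_or_gt (l z) (r (t j)) with h | h
          · linarith [hmin' z hz' h]
          · linarith [hF z hz']
        · simp only [Function.update_of_ne hj]
          exact hlt j z hz')
    have hvL : ∀ j, v ∉ L j := fun j h => Finset.notMem_erase v F ((hL4 v).2 ⟨j, h⟩)
    refine ⟨Function.update L i (v :: L i), ?_, ?_, ?_, ?_⟩
    · intro j
      have := hL1 j
      by_cases hj : j = i
      · subst hj
        simp only [Function.update_self, List.cons_append, List.isChain_cons_cons] at this ⊢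
        refine ⟨hadj _ _ ?_ (hlt j v hv.1) hv.2, this⟩
        intro h
        exact (ht j).1 (h ▸ hv.1)
      · simpa only [Function.update_of_ne hj] using this
    · intro j
      by_cases hj : j = i
      · subst hj; simpa using ⟨hvL j, hL2 j⟩
      · simpa [hj] using hL2 j
    · intro j k hjk z
      by_cases hj : j = i
      · subst hj
        simp only [Function.update_self, Function.update_of_ne hjk.symm, List.mem_cons]
        rintro (rfl | h)
        · exact hvL k
        · exact hL3 j k hjk z h
      · by_cases hk : k = i
        · subst hk
          simp only [Function.update_self, Function.update_of_ne hj, List.mem_cons, not_or]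
          intro h
          exact ⟨fun h' => hvL j (h' ▸ h), hL3 j k hjk z h⟩
        · simpa [hj, hk] using hL3 j k hjk z
    · intro z
      by_cases hzv : z = v
      · subst hzv
        exact ⟨fun _ => ⟨i, by simp⟩, fun _ => hv.1⟩
      · have := hL4 z
        rw [Finset.mem_erase] at this
        rw [← and_iff_right (a := z ≠ v) (b := z ∈ F) hzv, this]
        apply exists_congr
        intro j
        by_cases hj : j = i
        · subst hj; simp [hzv]
        · simp [hj]

/-! ### Cut sets and components -/

/-- The interval of `v` is crossed by one of the cuts in `X`. -/
def HitBy (l r : V → ℝ) (X : Finset ℝ) (v : V) : Prop := ∃ x ∈ X, l v ≤ x ∧ x < r v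

/-- The cuts of `X` to the left of `v`; for `v` not crossed by `X` this identifies the gap between
cuts that contains `v`. -/
noncomputable def region (l : V → ℝ) (X : Finset ℝ) (v : V) : Finset ℝ := X.filter (· < l v)

theorem region_eq_of_adj {l r : V → ℝ} {X : Finset ℝ} {v z : V} (hv : ¬ HitBy l r X v)
    (hz : ¬ HitBy l r X z) (h1 : l v ≤ r z) (h2 : l z ≤ r v) : region l X v = region l X z := by
  ext x
  simp only [region, Finset.mem_filter, and_congr_right_iff]
  intro hx
  constructor
  · intro h
    by_contra hcon
    exact hz ⟨x, hx, not_lt.1 hcon, by linarith⟩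
  · intro h
    by_contra hcon
    exact hv ⟨x, hx, not_lt.1 hcon, by linarith⟩

theorem region_eq_of_reachable {G : SimpleGraph V} {l r : V → ℝ}
    (hadj : ∀ x y, G.Adj x y → l x ≤ r y ∧ l y ≤ r x) {X : Finset ℝ} {S : Finset V}
    (hS : ∀ v, v ∉ S → ¬ HitBy l r X v) {v z : ((↑S : Set V)ᶜ : Set V)}
    (h : (G.induce ((↑S : Set V)ᶜ)).Reachable v z) : region l X v.1 = region l X z.1 := by
  obtain ⟨q⟩ := h
  induction q with
  | nil => rfl
  | @cons v y z hvy _ ih =>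
    rw [← ih]
    have h := hadj _ _ (show G.Adj v.1 y.1 from hvy)
    exact region_eq_of_adj (hS _ v.2) (hS _ y.2) h.1 h.2

theorem card_le_numCompDel [Fintype V] {G : SimpleGraph V} {l r : V → ℝ}
    (hadj : ∀ x y, G.Adj x y → l x ≤ r y ∧ l y ≤ r x) {X : Finset ℝ} {S : Finset V}
    (hS : ∀ v, v ∉ S → ¬ HitBy l r X v) (I : Finset V) (hI : ∀ v ∈ I, v ∉ S)
    (hinj : Set.InjOn (region l X) I) : I.card ≤ numCompDel G S := by
  have hf : Function.Injective (fun v : I =>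
      (G.induce ((↑S : Set V)ᶜ)).connectedComponentMk ⟨v.1, by simpa using hI v.1 v.2⟩) := by
    intro v z h
    have := region_eq_of_reachable hadj hS (SimpleGraph.ConnectedComponent.exact h)
    exact Subtype.ext (hinj v.2 z.2 this)
  have := Nat.card_le_card_of_injective _ hf
  simpa [numCompDel] using this

/-- From a chain of cuts of total weight `k`: the set `X` of cuts, the set `S` of free intervals they
cross, and a set `I` with one interval from each nonempty gap to the right of `x`, including `w`. -/
theorem exists_cuts [DecidableEq V] {l r : V → ℝ} {b : ℝ} {w : V} (hlr : ∀ v, l v ≤ r v)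
    (hwl : l w = b)
    {F : Finset V} {x : ℝ} {k : ℤ} (h : CutChain l r b F x k) :
    ∃ (X : Finset ℝ) (S I : Finset V), x ∈ X ∧ (∀ y ∈ X, x ≤ y ∧ y < b) ∧
      (∀ v ∈ F, HitBy l r X v → v ∈ S) ∧ S ⊆ F ∧ (∀ v ∈ S, HitBy l r X v) ∧ w ∈ I ∧
      (∀ v ∈ I, x < l v ∧ ¬ HitBy l r X v) ∧ Set.InjOn (region l X) I ∧
      (S.card : ℤ) + 1 ≤ hitCount l r F x + k + I.card := by
  induction h with
  | @single x hx =>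
    refine ⟨{x}, F.filter (fun v => l v ≤ x ∧ x < r v), {w}, by simp, by simpa using hx, ?_,
      Finset.filter_subset _ _, ?_, by simp, ?_, by simp, by simp [hitCount]⟩
    · intro v hv h
      simpa [HitBy, hv] using h
    · intro v hv
      simpa [HitBy] using (Finset.mem_filter.1 hv).2
    · simp [HitBy, hwl, hx]
  | @cons x y k hx hxy hk ih =>
    obtain ⟨X, S, I, hyX, hX, hS, hSF, hSh, hwI, hI, hinj, hcard⟩ := ih
    have hU := hitCount_add_new l r F x y
    set N := F.filter (fun v => l v ≤ x ∧ x < r v) with hN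
    -- The cut at `x` adds to `S` only intervals that miss the cut at `y`.
    have hc : (S ∪ N).card + hitCount l r F y ≤
        S.card + (F.filter fun v =>
          (l v ≤ x ∧ x < r v) ∨ (x < l v ∧ l v ≤ y ∧ y < r v)).card := by
      have h1 : F.filter (fun v => l v ≤ y ∧ y < r v) ⊆ S ∩ F.filter (fun v =>
          (l v ≤ x ∧ x < r v) ∨ (x < l v ∧ l v ≤ y ∧ y < r v)) := by
        intro v hv
        simp only [Finset.mem_filter, Finset.mem_inter] at hv ⊢
        refine ⟨hS v hv.1 ⟨y, hyX, hv.2⟩, hv.1, ?_⟩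
        rcases le_or_gt (l v) x with h | h
        · exact Or.inl ⟨h, hxy.trans hv.2.2⟩
        · exact Or.inr ⟨h, hv.2⟩
      have h2 : S ∪ N ⊆ S ∪ F.filter (fun v =>
          (l v ≤ x ∧ x < r v) ∨ (x < l v ∧ l v ≤ y ∧ y < r v)) := by
        apply Finset.union_subset_union_right
        intro v hv
        simp only [hN, Finset.mem_filter] at hv ⊢
        exact ⟨hv.1, Or.inl hv.2⟩
      have h3 := Finset.card_le_card h1
      have h4 := Finset.card_le_card h2
      have h5 := Finset.card_union_add_card_inter S (F.filter (fun v =>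
          (l v ≤ x ∧ x < r v) ∨ (x < l v ∧ l v ≤ y ∧ y < r v)))
      unfold hitCount
      omega
    have hreg : ∀ v, x < l v → region l (insert x X) v = insert x (region l X v) := by
      intro v hv
      simp [region, Finset.filter_insert, hv]
    have hxX : x ∉ X := fun h => by linarith [(hX x h).1]
    have hnot : ∀ v, x < l v → ¬ HitBy l r X v → ¬ HitBy l r (insert x X) v := by
      rintro v hv hh ⟨z, hz, h1, h2⟩
      rcases Finset.mem_insert.1 hz with rfl | hz
      · linarith
      · exact hh ⟨z, hz, h1, h2⟩
    have hI' : ∀ v ∈ I, x < l v ∧ ¬ HitBy l r (insert x X) v := fun v hv =>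
      ⟨hxy.trans (hI v hv).1, hnot v (hxy.trans (hI v hv).1) (hI v hv).2⟩
    have hinj' : Set.InjOn (region l (insert x X)) I := by
      intro v hv z hz h
      rw [hreg v (hI' v hv).1, hreg z (hI' z hz).1] at h
      apply hinj hv hz
      have h1 : ∀ v, x ∉ region l X v := fun v h => hxX (Finset.mem_filter.1 h).1
      rw [← Finset.erase_insert (h1 v), h, Finset.erase_insert (h1 z)]
    have hxX' : ∀ z ∈ insert x X, x ≤ z ∧ z < b := by
      intro z hz
      rcases Finset.mem_insert.1 hz with rfl | hz
      · exact ⟨le_rfl, hx⟩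
      · exact ⟨hxy.le.trans (hX z hz).1, (hX z hz).2⟩
    have hS' : ∀ v ∈ F, HitBy l r (insert x X) v → v ∈ S ∪ N := by
      rintro v hv ⟨z, hz, h⟩
      rcases Finset.mem_insert.1 hz with rfl | hz
      · exact Finset.mem_union_right _ (Finset.mem_filter.2 ⟨hv, h⟩)
      · exact Finset.mem_union_left _ (hS v hv ⟨z, hz, h⟩)
    have hSF' : S ∪ N ⊆ F := Finset.union_subset hSF (Finset.filter_subset _ _)
    have hSh' : ∀ v ∈ S ∪ N, HitBy l r (insert x X) v := by
      intro v hv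
      rcases Finset.mem_union.1 hv with hv | hv
      · obtain ⟨z, hz, h⟩ := hSh v hv
        exact ⟨z, Finset.mem_insert_of_mem hz, h⟩
      · exact ⟨x, Finset.mem_insert_self _ _, (Finset.mem_filter.1 hv).2⟩
    by_cases hex : ∃ v ∈ F, x < l v ∧ r v ≤ y
    · obtain ⟨v, hvF, hv1, hv2⟩ := hex
      have hvlr := hlr v
      have hvI : v ∉ I := fun h => by linarith [(hI v h).1]
      refine ⟨insert x X, S ∪ N, insert v I, Finset.mem_insert_self _ _, hxX', hS', hSF', hSh',
        Finset.mem_insert_of_mem hwI, ?_, ?_, ?_⟩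
      · intro z hz
        rcases Finset.mem_insert.1 hz with rfl | hz
        · refine ⟨hv1, hnot z hv1 ?_⟩
          rintro ⟨c, hc, h1, h2⟩
          linarith [(hX c hc).1]
        · exact hI' z hz
      · rw [Finset.coe_insert, Set.injOn_insert (by simpa using hvI)]
        refine ⟨hinj', ?_⟩
        rintro ⟨z, hz, h⟩
        have h1 : y ∈ region l (insert x X) z :=
          Finset.mem_filter.2 ⟨Finset.mem_insert_of_mem hyX, (hI z hz).1⟩
        rw [h] at h1
        linarith [(Finset.mem_filter.1 h1).2]
      · rw [Finset.card_insert_of_notMem hvI]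
        unfold cutWeight
        rw [if_pos ⟨v, hvF, hv1, hv2⟩]
        push_cast
        omega
    · refine ⟨insert x X, S ∪ N, I, Finset.mem_insert_self _ _, hxX', hS', hSF', hSh',
        hwI, hI', hinj', ?_⟩
      unfold cutWeight
      rw [if_neg hex]
      omega

/-- The scattering number condition gives the invariant at the start, where all path ends are `u`:
the intervals crossed by a chain of cuts form a separator whose components include those of `u`,
`w` and one for each nonempty gap. -/
theorem cutCond_of_scatAtMost [Fintype V] [DecidableEq V] {G : SimpleGraph V} {l r : V → ℝ}
    (hlr : ∀ v, l v ≤ r v) (hadj : ∀ x y, G.Adj x y → l x ≤ r y ∧ l y ≤ r x) {u w : V} {a b : ℝ}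
    (hul : l u = a) (hur : r u = a) (hwl : l w = b) (ha : ∀ v, a ≤ l v)
    {p : ℕ} (hp : 1 ≤ p) (hscat : ScatAtMost G (2 - (p : ℤ))) :
    CutCond l r b (fun _ : Fin p => u) ((Finset.univ.erase u).erase w) := by
  set F := (Finset.univ.erase u).erase w with hF
  have hmain : ∀ x k, a ≤ x → CutChain l r b F x k → (p : ℤ) ≤ hitCount l r F x + k := by
    intro x k hax hk
    obtain ⟨X, S, I, hxX, hX, hS, hSF, hSh, hwI, hI, hinj, hcard⟩ := exists_cuts hlr hwl hk
    have hu : ¬ HitBy l r X u := by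
      rintro ⟨z, hz, h1, h2⟩
      linarith [(hX z hz).1]
    have hS' : ∀ v, v ∉ S → ¬ HitBy l r X v := by
      intro v hv hh
      by_cases hvu : v = u
      · subst hvu; exact hu hh
      by_cases hvw : v = w
      · subst hvw; exact (hI _ hwI).2 hh
      exact hv (hS v (by simp [hF, hvu, hvw]) hh)
    have huI : u ∉ I := fun h => by linarith [(hI u h).1]
    have h1 := card_le_numCompDel hadj hS' (insert u I)
      (by
        intro v hv hvS
        rcases Finset.mem_insert.1 hv with rfl | hv
        · exact hu (hSh _ hvS)
        · exact (hI v hv).2 (hSh v hvS))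
      (by
        rw [Finset.coe_insert, Set.injOn_insert (by simpa using huI)]
        refine ⟨hinj, ?_⟩
        rintro ⟨z, hz, h⟩
        have h1 : x ∈ region l X z := Finset.mem_filter.2 ⟨hxX, (hI z hz).1⟩
        rw [h] at h1
        linarith [(Finset.mem_filter.1 h1).2])
    rw [Finset.card_insert_of_notMem huI] at h1
    have h2 : 1 ≤ I.card := Finset.card_pos.2 ⟨w, hwI⟩
    have h3 := hscat S (by omega)
    omega
  intro x k hk
  induction hk with
  | @single x hx =>
    rcases le_or_gt a x with h | h
    · have := hmain x 0 h (.single hx)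
      omega
    · rw [tipCount_eq (by intro; linarith)]
      omega
  | @cons x y k hx hxy hk ih =>
    rcases le_or_gt a x with h | h
    · have := hmain x _ h (.cons hx hxy hk)
      omega
    rw [tipCount_eq (by intro; linarith)]
    rcases le_or_gt a y with hy | hy
    -- All `p` ends cross `x`, and `hmain` at `y` gives `p ≥ 1` more; one of these pays for a possible
    -- interval between `x` and `y`.
    · have h1 := hmain y k hy hk
      have h2 : hitCount l r F y ≤ (F.filter fun v => x < l v ∧ l v ≤ y ∧ y < r v).card := by
        apply Finset.card_le_card
        intro v hv
        simp only [Finset.mem_filter] at hv ⊢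
        exact ⟨hv.1, h.trans_le (ha v), hv.2⟩
      unfold cutWeight
      split_ifs <;> omega
    · have h1 : hitCount l r F y = 0 := by
        unfold hitCount
        rw [Finset.card_eq_zero, Finset.filter_eq_empty_iff]
        intro v _ hv
        linarith [ha v, hv.1]
      rw [tipCount_eq (by intro; linarith)] at ih
      unfold cutWeight
      rw [if_neg]
      · omega
      · rintro ⟨v, _, _, h2⟩
        linarith [ha v, hlr v]

theorem stave_of_scatAtMost [Fintype V] [DecidableEq V] {G : SimpleGraph V} {l r : V → ℝ}
    (hlr : ∀ v, l v ≤ r v)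
    (hadj : ∀ x y, x ≠ y → (G.Adj x y ↔ l x ≤ r y ∧ l y ≤ r x)) {u w : V} (huw : u ≠ w) {a b : ℝ}
    (hul : l u = a) (hur : r u = a) (hwl : l w = b) (hwr : r w = b)
    (ha : ∀ v, a ≤ l v) (hb : ∀ v, r v ≤ b)
    {p : ℕ} (hp : 1 ≤ p) (hscat : ScatAtMost G (2 - (p : ℤ))) : HasSpanningStave G u w p := by
  have hC := cutCond_of_scatAtMost hlr (fun x y h => (hadj x y h.ne).1 h) hul hur hwl ha hp hscat
  obtain ⟨L, hL1, hL2, hL3, hL4⟩ := exists_lists hp G l r b (a - 1) w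
    (fun x y h h1 h2 => (hadj x y h).2 ⟨h1, h2⟩) hwl hwr _ (fun _ : Fin p => u)
    ((Finset.univ.erase u).erase w) rfl hC
    (fun z _ => ⟨by linarith [ha z], hlr z, hb z⟩) (Finset.notMem_erase _ _)
    (fun _ => ⟨by simp, huw, by linarith [hb u]⟩)
    (fun _ z _ => by linarith [ha z, hlr z])
  have hP : ∀ i, ∃ q : G.Walk u w, q.support = u :: (L i ++ [w]) := by
    intro i
    refine ⟨(SimpleGraph.Walk.ofSupport _ (List.cons_ne_nil _ _) (hL1 i)).copy
      (by simp) (by simp), ?_⟩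
    exact (SimpleGraph.Walk.support_copy _ _ _).trans (SimpleGraph.Walk.support_ofSupport _ _)
  choose P hP using hP
  have hmem : ∀ i z, z ∈ L i → z ≠ u ∧ z ≠ w := by
    intro i z hz
    have := (hL4 z).2 ⟨i, hz⟩
    simp only [Finset.mem_erase, Finset.mem_univ, and_true] at this
    exact this.symm
  refine ⟨P, ?_, ?_, ?_⟩
  · intro i
    rw [SimpleGraph.Walk.isPath_def, hP, List.nodup_cons, List.nodup_append]
    refine ⟨?_, hL2 i, by simp, ?_⟩
    · intro h
      rcases List.mem_append.1 h with h | h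
      · exact (hmem i u h).1 rfl
      · exact huw (by simpa using h)
    · intro z hz y hy
      rw [List.mem_singleton.1 hy]
      exact (hmem i z hz).2
  · intro i j hij v hvi hvj
    rw [hP] at hvi hvj
    simp only [List.mem_cons, List.mem_append, List.not_mem_nil, or_false] at hvi hvj
    have := hL3 i j hij v
    tauto
  · intro v
    simp only [hP, List.mem_cons, List.mem_append, List.not_mem_nil, or_false]
    by_cases hvu : v = u
    · exact ⟨⟨0, hp⟩, Or.inl hvu⟩
    by_cases hvw : v = w
    · exact ⟨⟨0, hp⟩, Or.inr (Or.inr hvw)⟩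
    obtain ⟨i, hi⟩ := (hL4 v).1 (by simp [hvu, hvw])
    exact ⟨i, Or.inr (Or.inl hi)⟩

/-! ### From staves to the scattering number -/

/-- In a list whose consecutive unhit entries have the same colour, the number of colours of unhit
entries exceeds the number of hit entries by at most one, and not at all if the first is hit. -/
theorem card_colours_le {C : Type*} [DecidableEq C] (hit : V → Prop) [DecidablePred hit]
    (φ : V → C) : ∀ L : List V, L.IsChain (fun x y => ¬ hit x → ¬ hit y → φ x = φ y) →
      ((L.filter fun x => ¬ hit x).map φ).toFinset.card ≤ (L.filter fun x => hit x).length + 1 ∧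
      ∀ x M, L = x :: M → hit x →
        ((L.filter fun x => ¬ hit x).map φ).toFinset.card ≤ (L.filter fun x => hit x).length := by
  intro L
  induction L with
  | nil => simp
  | cons x M ih =>
    intro hch
    obtain ⟨ih1, ih2⟩ := ih hch.tail
    by_cases hx : hit x
    · simp only [hx, List.filter_cons]
      simp
      simp at ih1
      omega
    · refine ⟨?_, ?_⟩
      swap
      · rintro y M' h hy
        simp only [List.cons.injEq] at h
        exact absurd (h.1 ▸ hy) hx
      cases M with
      | nil => simp [hx]
      | cons y M =>
        by_cases hy : hit y
        · have := ih2 y M rfl hy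
          rw [List.filter_cons_of_pos (a := x) (by simpa using hx),
            List.filter_cons_of_neg (a := x) (by simpa using hx),
            List.map_cons, List.toFinset_cons]
          exact (Finset.card_insert_le _ _).trans (by omega)
        · rw [List.filter_cons_of_pos (a := x) (by simpa using hx),
            List.filter_cons_of_neg (a := x) (by simpa using hx),
            List.map_cons, List.toFinset_cons, Finset.insert_eq_of_mem]
          · exact ih1
          · rw [hch.rel hx hy]
            simp only [List.mem_toFinset]
            apply List.mem_map_of_mem
            simp [hy]

/-- If `X` consists of all right endpoints below `b` that cross no vertex outside `S`, then distinct
components of `G - S` lie in distinct regions of `X`. -/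
theorem numCompDel_le_card_region [Fintype V] {G : SimpleGraph V} {l r : V → ℝ}
    (hlr : ∀ v, l v ≤ r v)
    (hadj : ∀ x y, x ≠ y → (G.Adj x y ↔ l x ≤ r y ∧ l y ≤ r x)) {b : ℝ}
    (hb : ∀ v, r v ≤ b) {S : Finset V} {X : Finset ℝ}
    (hX : ∀ x, x ∈ X ↔ (∃ v, r v = x) ∧ x < b ∧ ∀ v, v ∉ S → ¬ (l v ≤ x ∧ x < r v))
    (D : Finset (Finset ℝ)) (hD : ∀ v, v ∉ S → region l X v ∈ D) :
    numCompDel G S ≤ D.card := by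
  set H := G.induce ((↑S : Set V)ᶜ) with hH
  have hS : ∀ v, v ∉ S → ¬ HitBy l r X v := by
    rintro v hv ⟨x, hx, h⟩
    exact ((hX x).1 hx).2.2 v hv h
  have hreach : ∀ v z : ((↑S : Set V)ᶜ : Set V), l v.1 ≤ r z.1 → l z.1 ≤ r v.1 →
      H.Reachable v z := by
    intro v z h1 h2
    by_cases hvz : v = z
    · rw [hvz]
    · apply SimpleGraph.Adj.reachable
      exact (hadj v.1 z.1 (fun h => hvz (Subtype.ext h))).2 ⟨h1, h2⟩
  have hmax : ∀ v : ((↑S : Set V)ᶜ : Set V), ∃ m, H.Reachable v m ∧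
      ∀ z, H.Reachable v z → r z.1 ≤ r m.1 := by
    intro v
    obtain ⟨m, hm, h⟩ := Set.exists_max_image {z | H.Reachable v z} (fun z => r z.1)
      (Set.toFinite _) ⟨v, SimpleGraph.Reachable.refl v⟩
    exact ⟨m, hm, h⟩
  -- Two vertices with the same region lie in the same component of `G - S`: otherwise the
  -- right end of the component that ends first is a cut separating them.
  have key : ∀ v v' m m' : ((↑S : Set V)ᶜ : Set V), H.Reachable v m → H.Reachable v' m' →
      (∀ z, H.Reachable v z → r z.1 ≤ r m.1) → r m.1 ≤ r m'.1 →
      region l X v.1 = region l X v'.1 → H.Reachable v v' := by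
    intro v v' m m' hm hm' hmax hle heq
    by_contra hcon
    have hlm : r m.1 < l m'.1 := by
      by_contra h
      exact hcon ((hm.trans (hreach m m' ((hlr _).trans hle) (not_lt.1 h))).trans hm'.symm)
    have hmX : r m.1 ∈ X := by
      rw [hX]
      refine ⟨⟨_, rfl⟩, by linarith [hlr m'.1, hb m'.1], ?_⟩
      rintro z hz ⟨h1, h2⟩
      have := hmax ⟨z, hz⟩ (hm.trans (hreach m ⟨z, hz⟩ ((hlr _).trans h2.le) h1))
      exact absurd h2 (not_lt.2 this)
    have hadj' : ∀ x y, G.Adj x y → l x ≤ r y ∧ l y ≤ r x := fun x y h => (hadj x y h.ne).1 h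
    have e1 := region_eq_of_reachable hadj' hS hm
    have e2 := region_eq_of_reachable hadj' hS hm'
    have h1 : r m.1 ∈ region l X m'.1 := Finset.mem_filter.2 ⟨hmX, hlm⟩
    rw [← e2, ← heq, e1] at h1
    linarith [(Finset.mem_filter.1 h1).2, hlr m.1]
  have hf : Function.Injective (fun c : H.ConnectedComponent =>
      (⟨region l X c.out.1, hD _ c.out.2⟩ : D)) := by
    intro c d h
    have h' : region l X c.out.1 = region l X d.out.1 := congrArg Subtype.val h
    obtain ⟨m, hm1, hm2⟩ := hmax c.out
    obtain ⟨m', hm1', hm2'⟩ := hmax d.out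
    have hr : H.Reachable c.out d.out := by
      rcases le_total (r m.1) (r m'.1) with hle | hle
      · exact key _ _ m m' hm1 hm1' hm2 hle h'
      · exact (key _ _ m' m hm1' hm1 hm2' hle h'.symm).symm
    rw [← Quot.out_eq c, ← Quot.out_eq d]
    exact SimpleGraph.ConnectedComponent.sound hr
  have := Nat.card_le_card_of_injective _ hf
  simpa [numCompDel] using this

theorem scatAtMost_of_stave [Fintype V] [DecidableEq V] {G : SimpleGraph V} {l r : V → ℝ}
    (hlr : ∀ v, l v ≤ r v)
    (hadj : ∀ x y, x ≠ y → (G.Adj x y ↔ l x ≤ r y ∧ l y ≤ r x)) {u w : V} {a b : ℝ}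
    (hul : l u = a) (hur : r u = a) (hwl : l w = b)
    (ha : ∀ v, a ≤ l v) (hb : ∀ v, r v ≤ b)
    {p : ℕ} (hst : HasSpanningStave G u w p) : ScatAtMost G (2 - (p : ℤ)) := by
  classical
  obtain ⟨P, hpath, hdisj, hcov⟩ := hst
  intro S hS2
  set X : Finset ℝ := (Finset.univ.image r).filter
    (fun x => x < b ∧ ∀ v, v ∉ S → ¬ (l v ≤ x ∧ x < r v)) with hXdef
  have hX : ∀ x, x ∈ X ↔ (∃ v, r v = x) ∧ x < b ∧ ∀ v, v ∉ S → ¬ (l v ≤ x ∧ x < r v) := by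
    intro x
    simp [hXdef]
  have hXa : ∀ x ∈ X, a ≤ x ∧ x < b := by
    intro x hx
    obtain ⟨⟨v, rfl⟩, h, _⟩ := (hX x).1 hx
    exact ⟨(ha v).trans (hlr v), h⟩
  have hu : ¬ HitBy l r X u := by
    rintro ⟨x, hx, _, h⟩
    linarith [(hXa x hx).1]
  have hw : ¬ HitBy l r X w := by
    rintro ⟨x, hx, h, _⟩
    linarith [(hXa x hx).2]
  have hφu : region l X u = ∅ := by
    rw [region, Finset.filter_eq_empty_iff]
    intro x hx
    rw [hul]
    exact not_lt.2 (hXa x hx).1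
  have hφw : region l X w = X := by
    rw [region, Finset.filter_eq_self]
    intro x hx
    rw [hwl]
    exact (hXa x hx).2
  have hhit : ∀ v, HitBy l r X v → v ∈ S := by
    rintro v ⟨x, hx, h⟩
    by_contra hv
    exact ((hX x).1 hx).2.2 v hv h
  -- The colours (regions) met by the `i`-th path, and the hit vertices on it.
  set D : Fin p → Finset (Finset ℝ) := fun i =>
    (((P i).support.filter fun x => ¬ HitBy l r X x).map (region l X)).toFinset with hD
  set T : Fin p → Finset V := fun i => ((P i).support.filter fun x => HitBy l r X x).toFinset with hT
  have hmemD : ∀ i v, v ∈ (P i).support → ¬ HitBy l r X v → region l X v ∈ D i := by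
    intro i v hv hh
    simp only [hD, List.mem_toFinset]
    apply List.mem_map_of_mem
    simp [hv, hh]
  have hcardT : ∀ i, (D i).card ≤ (T i).card + 1 := by
    intro i
    rw [hT, List.toFinset_card_of_nodup (((hpath i).support_nodup).filter _)]
    refine (card_colours_le (HitBy l r X) (region l X) (P i).support ?_).1
    refine (P i).isChain_adj_support.imp ?_
    intro x y hxy hx hy
    have := (hadj x y hxy.ne).1 hxy
    exact region_eq_of_adj hx hy this.1 this.2
  have hcomp : numCompDel G S ≤ (Finset.univ.biUnion D).card := by
    apply numCompDel_le_card_region hlr hadj hb hX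
    intro v hv
    obtain ⟨i, hi⟩ := hcov v
    exact Finset.mem_biUnion.2 ⟨i, Finset.mem_univ _, hmemD i v hi fun h => hv (hhit v h)⟩
  have hne : region l X u ≠ region l X w := by
    rw [hφu, hφw]
    intro h
    have : numCompDel G S ≤ ({∅} : Finset (Finset ℝ)).card := by
      apply numCompDel_le_card_region hlr hadj hb hX
      intro v _
      simp [region, ← h]
    simp at this
    omega
  set E : Finset (Finset ℝ) := {region l X u, region l X w} with hE
  have hEcard : E.card = 2 := Finset.card_pair hne
  have hDE : ∀ i, (D i \ E).card + 1 ≤ (T i).card := by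
    intro i
    have hsub : E ⊆ D i := by
      intro c hc
      rcases Finset.mem_insert.1 hc with rfl | hc
      · exact hmemD i u (P i).start_mem_support hu
      · rw [Finset.mem_singleton.1 hc]
        exact hmemD i w (P i).end_mem_support hw
    have h1 := Finset.card_sdiff_add_card_eq_card hsub
    have h2 := hcardT i
    omega
  have hsum : ∑ i, (T i).card ≤ S.card := by
    rw [← Finset.card_biUnion]
    · apply Finset.card_le_card
      intro v hv
      obtain ⟨i, _, hv⟩ := Finset.mem_biUnion.1 hv
      exact hhit v (by simpa using (List.mem_filter.1 (List.mem_toFinset.1 hv)).2)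
    · intro i _ j _ hij
      refine Finset.disjoint_left.2 fun v hi hj => ?_
      have hi' := List.mem_filter.1 (List.mem_toFinset.1 hi)
      have hj' := List.mem_filter.1 (List.mem_toFinset.1 hj)
      have hv : HitBy l r X v := by simpa using hi'.2
      rcases hdisj i j hij v hi'.1 hj'.1 with rfl | rfl
      · exact hu hv
      · exact hw hv
  have h1 : (Finset.univ.biUnion D).card ≤ 2 + ∑ i, (D i \ E).card := by
    calc (Finset.univ.biUnion D).card ≤ (E ∪ Finset.univ.biUnion fun i => D i \ E).card := by
          apply Finset.card_le_card
          intro c hc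
          obtain ⟨i, hi, hc⟩ := Finset.mem_biUnion.1 hc
          by_cases hcE : c ∈ E
          · exact Finset.mem_union_left _ hcE
          · exact Finset.mem_union_right _
              (Finset.mem_biUnion.2 ⟨i, hi, Finset.mem_sdiff.2 ⟨hc, hcE⟩⟩)
      _ ≤ E.card + (Finset.univ.biUnion fun i => D i \ E).card := Finset.card_union_le _ _
      _ ≤ 2 + ∑ i, (D i \ E).card := by
          rw [hEcard]
          exact Nat.add_le_add_left Finset.card_biUnion_le _
  have h2 : ∑ i, (D i \ E).card + p ≤ ∑ i, (T i).card := by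
    calc ∑ i, (D i \ E).card + p = ∑ i, ((D i \ E).card + 1) := by
          simp [Finset.sum_add_distrib]
      _ ≤ _ := Finset.sum_le_sum fun i _ => hDE i
  omega

end StaveProof

/-- Let `G` be a finite interval graph with an interval representation in which `u` and `w`
are distinct vertices whose intervals are the single points `a` and `b`, with `a` the
leftmost point and `b` the rightmost point of the representation. Then for every `p ≥ 1`,
`G` has a spanning `p`-stave between `u` and `w` iff the scattering number of `G` is at
most `2 - p`. -/
theorem hasSpanningStave_iff_scatAtMost {V : Type} [Fintype V] [DecidableEq V]
    (G : SimpleGraph V)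
    (l r : V → ℝ) (hlr : ∀ v, l v ≤ r v)
    (hadj : ∀ v₁ v₂ : V, v₁ ≠ v₂ →
      (G.Adj v₁ v₂ ↔ (Set.Icc (l v₁) (r v₁) ∩ Set.Icc (l v₂) (r v₂)).Nonempty))
    (u w : V) (huw : u ≠ w) (a b : ℝ)
    (hul : l u = a) (hur : r u = a) (hwl : l w = b) (hwr : r w = b)
    (ha : ∀ v, a ≤ l v) (hb : ∀ v, r v ≤ b) :
    ∀ p : ℕ, 1 ≤ p → (HasSpanningStave G u w p ↔ ScatAtMost G (2 - (p : ℤ))) := by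
  intro p hp
  have hadj' : ∀ x y, x ≠ y → (G.Adj x y ↔ l x ≤ r y ∧ l y ≤ r x) := by
    intro x y hxy
    rw [hadj x y hxy]
    constructor
    · rintro ⟨z, h1, h2⟩
      exact ⟨h1.1.trans h2.2, h2.1.trans h1.2⟩
    · rintro ⟨h1, h2⟩
      exact ⟨max (l x) (l y), ⟨le_max_left _ _, max_le (hlr x) h2⟩,
        ⟨le_max_right _ _, max_le h1 (hlr y)⟩⟩
  exact ⟨scatAtMost_of_stave hlr hadj' hul hur hwl ha hb,
    stave_of_scatAtMost hlr hadj' huw hul hur hwl hwr ha hb hp⟩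
end

section
/- Let G be a finite interval graph with interval representation (I_v), and let u, w be distinct vertices with I_u = [a,a] and I_w = [b,b], where a ≤ ℓ(v) for every vertex v and b ≥ r(v) for every vertex v. If G contains a Hamilton path, then G contains a Hamilton path with end-vertices u and w. -/
/-!
Paths are represented as lists of vertices, and the proof rearranges these lists.

*Exchange step* (`exists_exchange`).  Let `q, A, x, B` be a path with `ℓ(q), ℓ(x) ≤ c` and
`r(x) ≤ r(q)`.  Let `C` be the longest initial part of `B` whose intervals lie strictly to the left
of that of `q`, and let `D` be the rest of `B`.  Then reversing the segment from `q` to the end of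
`C` again yields a path: the first interval of `D` has right end at least `ℓ(q)`, and its left end is at most
`r(q)` because it meets the last interval of `x, C`, which does not extend beyond `r(q)`.  The new first vertex is `x`, or lies strictly to the left of
`q`.

Consequently (`exists_min_head`) any path whose first interval starts at or before `c` can be
rearranged so that its first vertex has the least right end among all vertices `x` with
`ℓ(x) ≤ c`.  Doing this with `c = b` moves a vertex with interval `[a, a]` to the front, and one
more exchange step makes this vertex `u`.

Repeating the rearrangement on the remaining vertices with `c` the right end of the vertex just
placed (`exists_path_to_last`) is the greedy construction taking the smallest right end first.  It places `w`
before other vertices only when all remaining intervals contain `b`, and then `w` can be moved to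
the end.
-/

open SimpleGraph

section IntervalPaths

variable {V : Type}

/-- The intervals of `y` and `z` meet.  This is reflexive, so it agrees with adjacency in the
interval graph only for distinct vertices. -/
def Meets (l r : V → ℝ) (y z : V) : Prop := l y ≤ r z ∧ l z ≤ r y

theorem isChain_meets_reverse {l r : V → ℝ} {L : List V} (h : L.IsChain (Meets l r)) :
    L.reverse.IsChain (Meets l r) := by
  rw [List.isChain_reverse]
  exact h.imp fun _ _ h => ⟨h.2, h.1⟩

/-- The exchange step.  Splitting `B = C ++ D`, where `C` is the longest prefix of intervals strictly
to the left of `q`, the new path is `(q :: A ++ x :: C).reverse ++ D`; its first vertex is `x` if `C`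
is empty and otherwise the last vertex of `C`. -/
theorem exists_exchange {l r : V → ℝ} (hlr : ∀ v, l v ≤ r v) {c : ℝ} {q x : V} {A B : List V}
    (hch : (q :: (A ++ x :: B)).IsChain (Meets l r)) (hq : l q ≤ c) (hx : l x ≤ c)
    (hxq : r x ≤ r q) :
    ∃ y M, (y :: M).Perm (q :: (A ++ x :: B)) ∧ (y :: M).IsChain (Meets l r) ∧ l y ≤ c ∧
      (y = x ∨ r y < r q) := by
  obtain ⟨C, D, rfl, hC, hD⟩ : ∃ C D, B = C ++ D ∧ (∀ z ∈ C, r z < l q) ∧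
      ∀ d ∈ D.head?, l q ≤ r d := by
    refine ⟨B.takeWhile (fun z => decide (r z < l q)), B.dropWhile (fun z => decide (r z < l q)),
      List.takeWhile_append_dropWhile.symm, ?_, ?_⟩
    · intro z hz
      simpa using List.mem_takeWhile_imp hz
    · intro d hd
      have := List.head?_dropWhile_not (fun z => decide (r z < l q)) B
      rw [hd] at this
      simpa using this
  have hsplit : q :: (A ++ x :: (C ++ D)) = (q :: (A ++ x :: C)) ++ D := by simp
  rw [hsplit, List.isChain_append] at hch
  obtain ⟨h1, h2, h3⟩ := hch
  have hlast : ∀ z ∈ (q :: (A ++ x :: C)).getLast?, z = x ∨ z ∈ C := by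
    intro z hz
    have : (q :: (A ++ x :: C)).getLast? = (x :: C).getLast? := by
      rw [← List.cons_append, List.getLast?_append_of_ne_nil _ (by simp)]
    rw [this] at hz
    simpa using List.mem_of_getLast? hz
  have hrev : ((q :: (A ++ x :: C)).reverse ++ D).IsChain (Meets l r) := by
    rw [List.isChain_append]
    refine ⟨isChain_meets_reverse h1, h2, ?_⟩
    intro z hz d hd
    obtain rfl : q = z := by rw [List.getLast?_reverse] at hz; simpa using hz
    refine ⟨hD d hd, ?_⟩
    -- `d` meets the last vertex of `x :: C`, whose right end is at most `r q`
    obtain ⟨e, he⟩ : ∃ e, e ∈ (q :: (A ++ x :: C)).getLast? :=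
      ⟨_, List.getLast?_eq_getLast_of_ne_nil (by simp)⟩
    have hm := (h3 e he d hd).2
    rcases hlast e he with rfl | h
    · exact hm.trans hxq
    · exact hm.trans ((hC e h).le.trans (hlr q))
  obtain ⟨y, N, hy⟩ : ∃ y N, (q :: (A ++ x :: C)).reverse = y :: N :=
    List.exists_cons_of_ne_nil (by simp)
  have hyl : y ∈ (q :: (A ++ x :: C)).getLast? := by
    rw [← List.head?_reverse, hy]; simp
  refine ⟨y, N ++ D, ?_, ?_, ?_⟩
  · rw [← List.cons_append, ← hy, hsplit]
    exact (List.reverse_perm _).append_right D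
  · rw [← List.cons_append, ← hy]
    exact hrev
  · rcases hlast y hyl with rfl | h
    · exact ⟨hx, Or.inl rfl⟩
    · have := hC y h
      exact ⟨by linarith [hlr y], Or.inr (by linarith [hlr q])⟩

theorem exists_min_head [Finite V] {l r : V → ℝ} (hlr : ∀ v, l v ≤ r v) {c : ℝ} {q : V}
    {L : List V} (hch : (q :: L).IsChain (Meets l r)) (hq : l q ≤ c) :
    ∃ y M, (y :: M).Perm (q :: L) ∧ (y :: M).IsChain (Meets l r) ∧ l y ≤ c ∧
      ∀ x ∈ M, l x ≤ c → r y ≤ r x := by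
  obtain ⟨y, ⟨M, hp, hc, hy⟩, hmin⟩ := Set.exists_min_image
    {y | ∃ M, (y :: M).Perm (q :: L) ∧ (y :: M).IsChain (Meets l r) ∧ l y ≤ c} r
    (Set.toFinite _) ⟨q, L, List.Perm.refl _, hch, hq⟩
  refine ⟨y, M, hp, hc, hy, fun x hxM hx => ?_⟩
  by_contra! hlt
  obtain ⟨A, B, rfl⟩ := List.append_of_mem hxM
  obtain ⟨z, N, hzp, hzc, hz, h⟩ := exists_exchange hlr hc hy hx hlt.le
  have := hmin z ⟨N, hzp.trans hp, hzc, hz⟩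
  rcases h with rfl | h <;> linarith

/-- The greedy construction: a path whose first interval starts at or before `c` can be rearranged
to end at `w`, keeping the bound on the first interval. -/
theorem exists_path_to_last [Finite V] {l r : V → ℝ} (hlr : ∀ v, l v ≤ r v) {b : ℝ} {w : V}
    (hwl : l w = b) (hwr : r w = b) (hb : ∀ v, r v ≤ b) :
    ∀ (n : ℕ) (L : List V) (c : ℝ), L.length = n → L.IsChain (Meets l r) →
      (∀ q ∈ L.head?, l q ≤ c) → w ∈ L →
      ∃ M : List V, M.Perm L ∧ M.IsChain (Meets l r) ∧ (∀ q ∈ M.head?, l q ≤ c) ∧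
        M.getLast? = some w := by
  intro n
  induction n with
  | zero =>
    intro L c hL _ _ hw
    simp [List.length_eq_zero_iff.1 hL] at hw
  | succ n ih =>
    intro L c hL hch hhead hw
    obtain ⟨q, L, rfl⟩ := List.exists_cons_of_length_eq_add_one hL
    obtain ⟨y, M, hp, hc, hy, hmin⟩ := exists_min_head hlr hch (hhead q (by simp))
    have hlen : M.length = n := by simpa [hL] using hp.length_eq
    have hcM : M.IsChain (Meets l r) := hc.tail
    have hwM : w ∈ y :: M := hp.mem_iff.2 hw
    by_cases hyw : y = w
    · subst hyw
      -- `y` is the required last vertex; every remaining interval has right end `b`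
      have hall : ∀ x, l x ≤ c := fun x => by linarith [hlr x, hb x]
      refine ⟨M ++ [y], (List.perm_append_singleton y M).trans hp, ?_, fun q _ => hall q,
        by simp⟩
      rw [List.isChain_append]
      refine ⟨hcM, by simp, ?_⟩
      intro x hx z hz
      obtain rfl : y = z := by simpa using hz
      have := hmin x (List.mem_of_getLast? hx) (hall x)
      exact ⟨by linarith [hlr x, hb x], by linarith⟩
    · have hwM' : w ∈ M := by
        rcases List.mem_cons.1 hwM with h | h
        · exact absurd h.symm hyw
        · exact h
      rw [List.isChain_cons] at hc
      obtain ⟨N, hNp, hNc, hNh, hNl⟩ :=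
        ih M (r y) hlen hcM (fun z hz => (hc.1 z hz).2) hwM'
      refine ⟨y :: N, (hNp.cons y).trans hp, ?_, by simpa using hy, ?_⟩
      · rw [List.isChain_cons]
        refine ⟨fun z hz => ⟨?_, hNh z hz⟩, hNc⟩
        have hzM : z ∈ M := hNp.mem_iff.1 (List.mem_of_head? hz)
        by_cases hzc : l z ≤ c
        · exact (hlr y).trans (hmin z hzM hzc)
        · linarith [hlr z]
      · rw [List.getLast?_cons, hNl]; rfl

theorem exists_walk_of_isChain {G : SimpleGraph V} (w : V) :
    ∀ (L : List V) (u : V), (u :: L).IsChain G.Adj → (u :: L).getLast? = some w →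
      ∃ q : G.Walk u w, q.support = u :: L := by
  intro L
  induction L with
  | nil =>
    intro u _ h
    obtain rfl : u = w := by simpa using h
    exact ⟨SimpleGraph.Walk.nil, rfl⟩
  | cons v L ih =>
    intro u hc h
    rw [List.isChain_cons_cons] at hc
    obtain ⟨q, hq⟩ := ih v hc.2 (by simpa [List.getLast?_cons] using h)
    exact ⟨SimpleGraph.Walk.cons hc.1 q, by simp [hq]⟩

end IntervalPaths

/-- Let `G` be a finite interval graph with an interval representation in which `u` and `w`
are distinct vertices whose intervals are the single points `a` and `b`, with `a` the
leftmost point and `b` the rightmost point of the representation. If `G` has a Hamilton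
path, then `G` has a Hamilton path with end-vertices `u` and `w`. -/
theorem hamiltonianPath_of_hamiltonianPath_leftRight {V : Type} [Fintype V] [DecidableEq V]
    (G : SimpleGraph V)
    (l r : V → ℝ) (hlr : ∀ v, l v ≤ r v)
    (hadj : ∀ v₁ v₂ : V, v₁ ≠ v₂ →
      (G.Adj v₁ v₂ ↔ (Set.Icc (l v₁) (r v₁) ∩ Set.Icc (l v₂) (r v₂)).Nonempty))
    (u w : V) (huw : u ≠ w) (a b : ℝ)
    (hul : l u = a) (hur : r u = a) (hwl : l w = b) (hwr : r w = b)
    (ha : ∀ v, a ≤ l v) (hb : ∀ v, r v ≤ b)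
    (hham : ∃ (s t : V) (q : G.Walk s t), q.IsHamiltonian) :
    ∃ q : G.Walk u w, q.IsHamiltonian := by
  have hmeets : ∀ x y, x ≠ y → (G.Adj x y ↔ Meets l r x y) := by
    intro x y hxy
    rw [hadj x y hxy, Set.Icc_inter_Icc, Set.nonempty_Icc]
    have := hlr x
    have := hlr y
    simp only [Meets, sup_le_iff, le_inf_iff]
    tauto
  obtain ⟨s, t, p, hp⟩ := hham
  have hpc : p.support.IsChain (Meets l r) :=
    p.isChain_adj_support.imp fun x y h => (hmeets x y h.ne).1 h
  have hlb : ∀ v, l v ≤ b := fun v => (hlr v).trans (hb v)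
  -- every left end is at most `b`, so the new first vertex has least right end of all: it is `[a, a]`
  rw [← p.cons_tail_support] at hpc
  obtain ⟨y, M, hyp, hyc, -, hmin⟩ := exists_min_head hlr hpc (hlb s)
  rw [p.cons_tail_support] at hyp
  have hmem : ∀ v, v ∈ y :: M := fun v => hyp.mem_iff.2 (hp.mem_support v)
  -- if another vertex with interval `[a, a]` comes first, one exchange puts `u` there, since no
  -- right end is below `a`
  obtain ⟨N, hNp, hNc⟩ : ∃ N, (u :: N).Perm p.support ∧ (u :: N).IsChain (Meets l r) := by
    rcases List.mem_cons.1 (hmem u) with rfl | huM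
    · exact ⟨M, hyp, hyc⟩
    · have hya := hmin u huM (hlb u)
      obtain ⟨A, B, rfl⟩ := List.append_of_mem huM
      obtain ⟨z, N, hzp, hzc, -, h⟩ := exists_exchange hlr hyc (hlb y) (hlb u)
        (by linarith [ha y, hlr y])
      rcases h with rfl | h
      · exact ⟨N, hzp.trans hyp, hzc⟩
      · linarith [ha z, hlr z]
  have hwN : w ∈ N := by
    rcases List.mem_cons.1 (hNp.mem_iff.2 (hp.mem_support w)) with h | h
    · exact absurd h.symm huw
    · exact h
  rw [List.isChain_cons] at hNc
  obtain ⟨K, hKp, hKc, hKh, hKl⟩ := exists_path_to_last hlr hwl hwr hb _ N (r u) rfl hNc.2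
    (fun z hz => (hNc.1 z hz).2) hwN
  have hperm : (u :: K).Perm p.support := (hKp.cons u).trans hNp
  have hnodup : (u :: K).Nodup := hperm.nodup_iff.2 hp.isPath.support_nodup
  have hchain : (u :: K).IsChain (Meets l r) := by
    rw [List.isChain_cons]
    exact ⟨fun z hz => ⟨by linarith [ha z, hlr z], hKh z hz⟩, hKc⟩
  have hG : (u :: K).IsChain G.Adj := by
    rw [List.isChain_iff_getElem] at hchain ⊢
    intro i hi
    refine (hmeets _ _ fun h => ?_).2 (hchain i hi)
    have := (hnodup.getElem_inj_iff).1 h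
    omega
  obtain ⟨q, hq⟩ := exists_walk_of_isChain w K u hG (by rw [List.getLast?_cons, hKl]; rfl)
  refine ⟨q, fun v => ?_⟩
  rw [hq, hperm.count_eq]
  exact hp v
end

section
/- Let G be a finite simple graph that is not complete, and let S be a scattering set of G, i.e., c(G−S) ≥ 2 and c(G−S) − |S| = scat(G). Then S contains no simplicial vertex of G; in particular, if v is a vertex whose neighborhood induces a clique in G, then v ∉ S. -/
/-!
Suppose a simplicial vertex `v` lay in `S`, and put `T = S \ {v}`. Any path of `G - T` between
vertices of `G - S` can avoid `v`: the vertices before and after `v` are both neighbours of `v`,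
hence equal or adjacent (`reachable_of_reachable_erase`). So distinct components of `G - S` stay
distinct in `G - T`, and `c(G - T) ≥ c(G - S) ≥ 2` (`numCompDel_le_erase`). As `|T| = |S| - 1`,
this contradicts the maximality of `c(G - S) - |S|`.
-/

open SimpleGraph

/-- Putting a simplicial vertex `v` back into `G - S` connects no vertices of `G - S` that were
not already connected. -/
theorem reachable_of_reachable_erase {V : Type} [DecidableEq V] (G : SimpleGraph V) (S : Finset V)
    (v : V) (hsimp : ∀ x y : V, G.Adj v x → G.Adj v y → x ≠ y → G.Adj x y) (hv : v ∈ S)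
    (a b : ((↑S : Set V)ᶜ : Set V)) (a' b' : ((↑(S.erase v) : Set V)ᶜ : Set V))
    (ha : (a' : V) = a) (hb : (b' : V) = b)
    (h : (G.induce ((↑(S.erase v) : Set V)ᶜ)).Reachable a' b') :
    (G.induce ((↑S : Set V)ᶜ)).Reachable a b := by
  rw [reachable_iff_reflTransGen] at h
  -- Invariant along a path from `a`: a vertex outside `S` is reachable from `a` in `G - S`, and if
  -- the vertex is `v`, then some neighbour of `v` is.
  have key : ∀ w : ((↑(S.erase v) : Set V)ᶜ : Set V),
      Relation.ReflTransGen (G.induce ((↑(S.erase v) : Set V)ᶜ)).Adj a' w →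
      (∀ hw : (w : V) ∈ ((↑S : Set V)ᶜ : Set V),
        (G.induce ((↑S : Set V)ᶜ)).Reachable a ⟨w, hw⟩) ∧
      ((w : V) = v → ∃ x : ((↑S : Set V)ᶜ : Set V), G.Adj v x ∧
        (G.induce ((↑S : Set V)ᶜ)).Reachable a x) := by
    intro w hw
    induction hw with
    | refl =>
      refine ⟨fun hw => ?_, fun h => ?_⟩
      · have : (⟨a', hw⟩ : ((↑S : Set V)ᶜ : Set V)) = a := Subtype.ext ha
        rw [this]
      · exact absurd (by rw [← ha, h]; exact hv) a.2
    | @tail y z _ hyz ih =>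
      have hadj : G.Adj (y : V) (z : V) := hyz
      have hyS : (y : V) ≠ v → (y : V) ∈ ((↑S : Set V)ᶜ : Set V) := by
        intro hne hmem
        exact y.2 (Finset.mem_coe.2 (Finset.mem_erase.2 ⟨hne, hmem⟩))
      refine ⟨fun hz => ?_, fun hzv => ?_⟩
      · by_cases hy : (y : V) = v
        · obtain ⟨x, hvx, hx⟩ := ih.2 hy
          by_cases hxz : (x : V) = z
          · have : (⟨z, hz⟩ : ((↑S : Set V)ᶜ : Set V)) = x := Subtype.ext hxz.symm
            rwa [this]
          · have hvz : G.Adj v z := by simpa only [hy] using hadj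
            have : (G.induce ((↑S : Set V)ᶜ)).Adj x ⟨z, hz⟩ := hsimp x z hvx hvz hxz
            exact hx.trans this.reachable
        · have : (G.induce ((↑S : Set V)ᶜ)).Adj ⟨y, hyS hy⟩ ⟨z, hz⟩ := hadj
          exact (ih.1 (hyS hy)).trans this.reachable
      · have hy : (y : V) ≠ v := fun hy => hadj.ne (hy.trans hzv.symm)
        have hyv : G.Adj (y : V) v := by simpa only [hzv] using hadj
        exact ⟨⟨y, hyS hy⟩, hyv.symm, ih.1 (hyS hy)⟩
  have hbS : (b' : V) ∈ ((↑S : Set V)ᶜ : Set V) := hb ▸ b.2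
  have hbb : (⟨b', hbS⟩ : ((↑S : Set V)ᶜ : Set V)) = b := Subtype.ext hb
  exact hbb ▸ (key b' h).1 hbS

theorem numCompDel_le_erase {V : Type} [Fintype V] [DecidableEq V] (G : SimpleGraph V)
    (S : Finset V) (v : V)
    (hsimp : ∀ x y : V, G.Adj v x → G.Adj v y → x ≠ y → G.Adj x y) (hv : v ∈ S) :
    numCompDel G S ≤ numCompDel G (S.erase v) := by
  have hsub : ((↑S : Set V)ᶜ : Set V) ⊆ ((↑(S.erase v) : Set V)ᶜ : Set V) :=
    Set.compl_subset_compl.2 (Finset.coe_subset.2 (Finset.erase_subset v S))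
  refine Nat.card_le_card_of_injective
    (ConnectedComponent.map (G.induceHomOfLE hsub).toHom) ?_
  intro c d
  refine ConnectedComponent.ind₂ (fun a b hab => ?_) c d
  rw [ConnectedComponent.map_mk, ConnectedComponent.map_mk, ConnectedComponent.eq] at hab
  exact ConnectedComponent.eq.2
    (reachable_of_reachable_erase G S v hsimp hv a b _ _ rfl rfl hab)

/-- A scattering set of a non-complete finite graph contains no simplicial vertex. -/
theorem scatteringSet_no_simplicial {V : Type} [Fintype V] [DecidableEq V]
    (G : SimpleGraph V) (hG : G ≠ ⊤) (S : Finset V)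
    (hcut : 2 ≤ numCompDel G S)
    (hmax : ∀ T : Finset V, 2 ≤ numCompDel G T →
      (numCompDel G T : ℤ) - (T.card : ℤ) ≤ (numCompDel G S : ℤ) - (S.card : ℤ)) :
    ∀ v : V, (∀ x y : V, G.Adj v x → G.Adj v y → x ≠ y → G.Adj x y) → v ∉ S := by
  intro v hsimp hv
  have hle := numCompDel_le_erase G S v hsimp hv
  have hT := hmax (S.erase v) (hcut.trans hle)
  have hcard := Finset.card_erase_add_one hv
  omega
end

section
/- Let G be a finite simple graph and let S be a set of vertices of G such that G − S is not complete. Then scat(G−S) ≤ scat(G) + |S|, where scat(G) is interpreted as −∞ only if G is complete (note G cannot be complete here since G − S is not complete). -/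
/-!
For `T` disjoint from `S`, the graphs `(G - S) - T` and `G - (S ∪ T)` coincide, so every cut `T`
of `G - S` yields the cut `S ∪ T` of `G` with the same number `c` of components. Hence
`c - |T| = (c - |S ∪ T|) + |S| ≤ scat G + |S|`, and the maximum over `T` gives the claim.
-/

open SimpleGraph

/-- The scattering number of a finite graph, with value `⊥` (`-∞`) for complete graphs. -/
noncomputable def scat {V : Type} [Fintype V] [DecidableEq V] (G : SimpleGraph V) :
    WithBot ℤ :=
  haveI : DecidablePred fun S : Finset V => 2 ≤ numCompDel G S := Classical.decPred _
  (Finset.univ.filter fun S : Finset V => 2 ≤ numCompDel G S).sup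
    fun S => (((numCompDel G S : ℤ) - (S.card : ℤ) : ℤ) : WithBot ℤ)

/-- Deleting `T` from `G - S` leaves the same graph as deleting `S ∪ T` from `G`. -/
def induceInduceComplIso {V : Type} [DecidableEq V] (G : SimpleGraph V) (S : Finset V)
    (T : Finset ((↑S : Set V)ᶜ : Set V)) :
    (G.induce ((↑S : Set V)ᶜ)).induce ((↑T : Set ((↑S : Set V)ᶜ : Set V))ᶜ) ≃g
      G.induce ((↑(S ∪ T.map (Function.Embedding.subtype _)) : Set V)ᶜ) where
  toFun x := ⟨x.1.1, by
    have h1 := x.1.2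
    have h2 := x.2
    simp only [Set.mem_compl_iff, Finset.mem_coe] at h1 h2
    simp only [Set.mem_compl_iff, Finset.mem_coe, Finset.mem_union, Finset.mem_map,
      Function.Embedding.subtype_apply, not_or, not_exists, not_and]
    refine ⟨h1, fun y hy hyx => h2 ?_⟩
    rwa [← Subtype.ext hyx]⟩
  invFun x := ⟨⟨x.1, fun h => x.2 (Finset.mem_coe.2 (Finset.mem_union_left _ h))⟩,
    fun h => x.2 (Finset.mem_coe.2 (Finset.mem_union_right _
      (Finset.mem_map.2 ⟨_, h, rfl⟩)))⟩
  left_inv _ := rfl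
  right_inv _ := rfl
  map_rel_iff' := Iff.rfl

theorem numCompDel_induce_compl {V : Type} [DecidableEq V] (G : SimpleGraph V) (S : Finset V)
    (T : Finset ((↑S : Set V)ᶜ : Set V)) :
    numCompDel (G.induce ((↑S : Set V)ᶜ)) T =
      numCompDel G (S ∪ T.map (Function.Embedding.subtype _)) :=
  Nat.card_congr (induceInduceComplIso G S T).connectedComponentEquiv

theorem card_union_map_subtype {V : Type} [DecidableEq V] (S : Finset V)
    (T : Finset ((↑S : Set V)ᶜ : Set V)) :
    (S ∪ T.map (Function.Embedding.subtype _)).card = S.card + T.card := by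
  rw [Finset.card_union_of_disjoint, Finset.card_map]
  rw [Finset.disjoint_left]
  intro a ha h
  obtain ⟨y, -, rfl⟩ := Finset.mem_map.1 h
  exact y.2 ha

theorem le_scat {V : Type} [Fintype V] [DecidableEq V] (G : SimpleGraph V) (S : Finset V)
    (h : 2 ≤ numCompDel G S) :
    (((numCompDel G S : ℤ) - (S.card : ℤ) : ℤ) : WithBot ℤ) ≤ scat G := by
  classical
  unfold scat
  exact Finset.le_sup (f := fun S : Finset V =>
    (((numCompDel G S : ℤ) - (S.card : ℤ) : ℤ) : WithBot ℤ)) (by simpa using h)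

/-- For a finite graph `G` and a vertex set `S` such that `G - S` is not complete,
`scat(G - S) ≤ scat(G) + |S|`. -/
theorem scat_deleteVerts_le {V : Type} [Fintype V] [DecidableEq V]
    (G : SimpleGraph V) (S : Finset V)
    (hnc : G.induce ((↑S : Set V)ᶜ) ≠ ⊤) :
    scat (G.induce ((↑S : Set V)ᶜ)) ≤ scat G + ((S.card : ℤ) : WithBot ℤ) := by
  conv_lhs => unfold scat
  refine Finset.sup_le fun T hT => ?_
  have hT2 : 2 ≤ numCompDel (G.induce ((↑S : Set V)ᶜ)) T := by
    simpa using hT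
  rw [numCompDel_induce_compl] at hT2 ⊢
  refine le_trans (le_of_eq ?_) (add_le_add_left (le_scat G _ hT2) _)
  rw [card_union_map_subtype, ← WithBot.coe_add]
  congr 1
  push_cast
  ring
end
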